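/- arXiv:1608.06730 — 2 statements merged into one kernel-verified Lean document; each statement's English description precedes it below -/
import Mathlib

section
/- Let 2 ≤ q < ∞ and p satisfy 1/p + 1/q = 1/2. There exists a constant C > 0 such that for every Schwartz function u₀ on ℝ³ the free KP-II evolution u(t) = S(t)u₀ satisfies ‖u‖_{L^p_t L^q_{x,y}(ℝ×ℝ³)} ≤ C ‖ |D_x|^{2/p} u₀ ‖_{L²(ℝ³)}, where |D_x|^s denotes the Fourier multiplier with symbol |ξ|^s and the mixed norm is ‖u‖_{L^p_t L^q_{x,y}} = ( ∫_ℝ ‖u(t,·)‖_{L^q(ℝ³)}^p dt )^{1/p} (with the usual modification for p = ∞). -/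
/-!
STATEMENT 1: Strichartz estimate for the free 3D KP-II evolution,
2 ≤ q < ∞, 1/p + 1/q = 1/2:
‖S(t)u₀‖_{L^p_t L^q_{x,y}} ≤ C ‖|D_x|^{2/p} u₀‖_{L²}.
The norm ‖|D_x|^s u₀‖_{L²} is expressed (via Plancherel) as the L² norm of
|ξ|^s û₀ on the Fourier side.
-/

noncomputable section

open MeasureTheory Filter
open scoped ENNReal

abbrev E2 := EuclideanSpace ℝ (Fin 2)

/-- (Nonunitary) Fourier transform on ℝ × ℝ². -/
def ft (f : ℝ × E2 → ℂ) (ζ : ℝ × E2) : ℂ :=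
  ∫ z : ℝ × E2, Complex.exp (-Complex.I * ((z.1 * ζ.1 + inner ℝ z.2 ζ.2 : ℝ) : ℂ)) * f z

/-- KP-II dispersion relation ω(ξ,η) = ξ³ − |η|²/ξ. -/
def omega (ζ : ℝ × E2) : ℝ := ζ.1 ^ 3 - ‖ζ.2‖ ^ 2 / ζ.1

/-- Free KP-II evolution u(t) = S(t)u₀ of Schwartz data, as inverse Fourier
integral of e^{itω(ξ,η)} û₀(ξ,η). -/
def kpEvol (u₀ : SchwartzMap (ℝ × E2) ℂ) (t : ℝ) (z : ℝ × E2) : ℂ :=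
  ∫ ζ : ℝ × E2,
    Complex.exp (Complex.I * ((t * omega ζ + z.1 * ζ.1 + inner ℝ z.2 ζ.2 : ℝ) : ℂ)) * ft (fun w => u₀ w) ζ

/-- `L^p` norm (in `ℝ≥0∞`) of an `ℝ≥0∞`-valued function, with the usual
modification for `p = ∞`. -/
def lpENN {ι : Type*} [MeasurableSpace ι] (μ : Measure ι) (p : ℝ≥0∞) (f : ι → ℝ≥0∞) : ℝ≥0∞ :=
  if p = ∞ then essSup f μ else (∫⁻ t, f t ^ p.toReal ∂μ) ^ (1 / p.toReal)

/-- Mixed norm ‖u‖_{L^p_t L^q_{x,y}}. -/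
def mixedNorm (p q : ℝ≥0∞) (u : ℝ → ℝ × E2 → ℂ) : ℝ≥0∞ :=
  lpENN volume p fun t => eLpNorm (u t) q volume

/-!
For each frequency `ξ` of `x`, the transverse variables evolve by the free Schrödinger flow on `ℝ²`
run at time `t / ξ`. When `p < ∞`, Sobolev embedding in `x`, written on the Fourier side, costs
`|ξ| ^ (1 / 2 - 1 / q)`, and Minkowski's inequality (`p, q ≥ 2`) moves the `L²_ξ` norm outside the
`L^p_t L^q_y` norm. For fixed `ξ` the substitution `t = ξ s` costs `|ξ| ^ (1 / p)`, and what remains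
is the two-dimensional Schrödinger Strichartz estimate for the same pair `(p, q)`, whose scaling
condition is `2 / p + 2 / q = 1`. The exponents of `|ξ|` add up to `2 / p`. The endpoint
`(p, q) = (∞, 2)` is Plancherel's theorem.

The Schrödinger estimate is proved by duality and `TT*`: Gaussian kernels give the dispersive bound,
which is interpolated with the `L²` bound by splitting at level sets, and the resulting time kernel
`|t - s| ^ (-2 / p)` is controlled by the Hardy-Littlewood-Sobolev inequality.
-/

open scoped NNReal FourierTransform Real Pointwise

section Cutoff

variable {α : Type*}

/-- The truncation of `f` at height `n`, supported on the `n`-th set of an exhaustion `S`. It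
makes integrals finite before a self-referential estimate is divided out. -/
def cutoff (S : ℕ → Set α) (f : α → ℝ≥0∞) (n : ℕ) : α → ℝ≥0∞ :=
  (S n).indicator fun x => min (f x) n

theorem cutoff_le (S : ℕ → Set α) (f : α → ℝ≥0∞) (n : ℕ) : cutoff S f n ≤ f :=
  Set.indicator_le' (fun _ _ => min_le_left _ _) fun _ _ => zero_le

theorem cutoff_le_indicator (S : ℕ → Set α) (f : α → ℝ≥0∞) (n : ℕ) :
    cutoff S f n ≤ (S n).indicator fun _ => (n : ℝ≥0∞) :=
  fun _ => Set.indicator_le_indicator (min_le_right _ _)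

theorem monotone_cutoff {S : ℕ → Set α} (hS : Monotone S) (f : α → ℝ≥0∞) :
    Monotone (cutoff S f) := fun m n hmn x => by
  refine (Set.indicator_le_indicator_of_subset (hS hmn) (fun _ => zero_le) x).trans
    (Set.indicator_le_indicator ?_)
  gcongr

theorem iSup_cutoff {S : ℕ → Set α} (hS : Monotone S) (hcover : ⋃ n, S n = Set.univ)
    (f : α → ℝ≥0∞) (x : α) : ⨆ n, cutoff S f n x = f x := by
  obtain ⟨m, hm⟩ := Set.mem_iUnion.mp (hcover ▸ Set.mem_univ x)
  refine le_antisymm (iSup_le fun n => cutoff_le S f n x) (le_of_forall_lt fun a ha => ?_)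
  obtain ⟨n, hn⟩ := ENNReal.exists_nat_gt ha.ne_top
  have hlt : a < cutoff S f (max m n) x := by
    rw [cutoff, Set.indicator_of_mem (hS (le_max_left m n) hm), lt_min_iff]
    exact ⟨ha, hn.trans_le (by exact_mod_cast le_max_right m n)⟩
  exact hlt.trans_le (le_iSup (fun n => cutoff S f n x) _)

theorem measurable_cutoff [MeasurableSpace α] {S : ℕ → Set α} (hS : ∀ n, MeasurableSet (S n))
    {f : α → ℝ≥0∞} (hf : Measurable f) (n : ℕ) : Measurable (cutoff S f n) :=
  (hf.min measurable_const).indicator (hS n)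

end Cutoff

section MeasureTools

variable {α : Type*} [MeasurableSpace α]

theorem lintegral_comp_smul_addHaar {E : Type*} [NormedAddCommGroup E] [NormedSpace ℝ E]
    [FiniteDimensional ℝ E] [MeasurableSpace E] [BorelSpace E] (μ : Measure E)
    [μ.IsAddHaarMeasure] (f : E → ℝ≥0∞) {r : ℝ} (hr : r ≠ 0) :
    ∫⁻ x, f (r • x) ∂μ = ‖r‖ₑ ^ (-(Module.finrank ℝ E : ℝ)) * ∫⁻ x, f x ∂μ := by
  have hemb : MeasurableEmbedding (r • · : E → E) :=
    (Homeomorph.smulOfNeZero r hr).measurableEmbedding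
  have hfactor : ENNReal.ofReal |(r ^ Module.finrank ℝ E)⁻¹|
      = ‖r‖ₑ ^ (-(Module.finrank ℝ E : ℝ)) := by
    rw [← Real.enorm_eq_ofReal_abs, enorm_inv (pow_ne_zero _ hr), enorm_pow, ENNReal.rpow_neg,
      ENNReal.rpow_natCast]
  rw [← hemb.lintegral_map, Measure.map_addHaar_smul μ hr, lintegral_smul_measure, hfactor,
    smul_eq_mul]

theorem eLpNorm'_comp_smul_addHaar {E ε : Type*} [ENorm ε] [NormedAddCommGroup E]
    [NormedSpace ℝ E] [FiniteDimensional ℝ E] [MeasurableSpace E] [BorelSpace E] (μ : Measure E)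
    [μ.IsAddHaarMeasure] (f : E → ε) {q r : ℝ} (hq : 0 < q) (hr : r ≠ 0) :
    eLpNorm' (fun x => f (r • x)) q μ
      = ‖r‖ₑ ^ (-(Module.finrank ℝ E : ℝ) / q) * eLpNorm' f q μ := by
  rw [eLpNorm', lintegral_comp_smul_addHaar μ (fun x => ‖f x‖ₑ ^ q) hr,
    ENNReal.mul_rpow_of_nonneg _ _ (by positivity), ← ENNReal.rpow_mul, mul_one_div, eLpNorm']

theorem eLpNorm'_mono_of_le (μ : Measure α) {f g : α → ℝ≥0∞} (h : f ≤ g) {q : ℝ} (hq : 0 ≤ q) :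
    eLpNorm' f q μ ≤ eLpNorm' g q μ :=
  eLpNorm'_mono_enorm_ae hq (ae_of_all _ h)

theorem lintegral_rpow_eq_eLpNorm'_rpow (μ : Measure α) (f : α → ℝ≥0∞) {q : ℝ} (hq : 0 < q) :
    ∫⁻ x, f x ^ q ∂μ = eLpNorm' f q μ ^ q :=
  lintegral_rpow_enorm_eq_rpow_eLpNorm' (f := f) hq

theorem eLpNorm'_const_mul_of_measurable (μ : Measure α) (c : ℝ≥0∞) {f : α → ℝ≥0∞}
    (hf : Measurable f) {q : ℝ} (hq : 0 < q) :
    eLpNorm' (fun x => c * f x) q μ = c * eLpNorm' f q μ := by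
  simp only [eLpNorm', enorm_eq_self, ENNReal.mul_rpow_of_nonneg _ _ hq.le]
  rw [lintegral_const_mul _ (hf.pow_const q), ENNReal.mul_rpow_of_nonneg _ _ (by positivity),
    one_div, ENNReal.rpow_rpow_inv hq.ne']

theorem eLpNorm'_rpow (μ : Measure α) (f : α → ℝ≥0∞) {q s : ℝ} (hs : s ≠ 0) :
    eLpNorm' (fun x => f x ^ s) q μ = eLpNorm' f (s * q) μ ^ s := by
  simp only [eLpNorm', enorm_eq_self, ← ENNReal.rpow_mul]
  congr 1
  field_simp

theorem eLpNorm'_iSup (μ : Measure α) {f : ℕ → α → ℝ≥0∞} (hf : ∀ n, Measurable (f n))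
    (hmono : Monotone f) {q : ℝ} (hq : 0 < q) :
    eLpNorm' (fun x => ⨆ n, f n x) q μ = ⨆ n, eLpNorm' (f n) q μ := by
  have iSup_rpow {r : ℝ} (hr : 0 < r) (a : ℕ → ℝ≥0∞) : (⨆ n, a n) ^ r = ⨆ n, a n ^ r :=
    (ENNReal.orderIsoRpow r hr).map_iSup a
  simp only [eLpNorm', enorm_eq_self, iSup_rpow hq]
  rw [lintegral_iSup (fun n => (hf n).pow_const q)
    fun m n hmn x => ENNReal.rpow_le_rpow (hmono hmn x) hq.le, iSup_rpow (by positivity)]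

theorem le_of_rpow_le_rpow_sub_one_mul {x y : ℝ≥0∞} {r : ℝ} (hx : x ≠ ∞)
    (h : x ^ r ≤ x ^ (r - 1) * y) : x ≤ y := by
  rcases eq_or_ne x 0 with rfl | hx0
  · exact zero_le
  have hpos : x ^ (r - 1) ≠ 0 := (ENNReal.rpow_pos (pos_iff_ne_zero.mpr hx0) hx).ne'
  refine (ENNReal.mul_le_mul_iff_right hpos (ENNReal.rpow_ne_top_of_ne_zero hx0 hx)).mp ?_
  have hsplit : x ^ r = x ^ (r - 1) * x := by
    conv_lhs => rw [← sub_add_cancel r 1, ENNReal.rpow_add _ _ hx0 hx, ENNReal.rpow_one]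
  rwa [← hsplit]

theorem mul_rpow_sub_one (x : ℝ≥0∞) {q : ℝ} (hq : 1 ≤ q) : x * x ^ (q - 1) = x ^ q := by
  conv_lhs => rw [← ENNReal.rpow_one x, ← ENNReal.rpow_mul, one_mul,
    ← ENNReal.rpow_add_of_nonneg _ _ zero_le_one (sub_nonneg.mpr hq), add_sub_cancel]

theorem rpow_mul_rpow_of_ne_top {x : ℝ≥0∞} (hx : x ≠ ∞) {a b : ℝ} (hb : 0 < b)
    (hab : 0 < a + b) : x ^ a * x ^ b = x ^ (a + b) := by
  rcases eq_or_ne x 0 with rfl | hx0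
  · simp [ENNReal.zero_rpow_of_pos hb, ENNReal.zero_rpow_of_pos hab]
  · rw [ENNReal.rpow_add _ _ hx0 hx]

theorem lintegral_mul_le_eLpNorm'_mul_eLpNorm' {ε ε' : Type*} [TopologicalSpace ε]
    [ContinuousENorm ε] [TopologicalSpace ε'] [ContinuousENorm ε'] {μ : Measure α}
    {f : α → ε} {g : α → ε'} (hf : AEStronglyMeasurable f μ) (hg : AEStronglyMeasurable g μ)
    {q q' : ℝ} (hq : q.HolderConjugate q') :
    ∫⁻ x, ‖f x‖ₑ * ‖g x‖ₑ ∂μ ≤ eLpNorm' f q μ * eLpNorm' g q' μ :=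
  ENNReal.lintegral_mul_le_Lp_mul_Lq μ hq hf.enorm hg.enorm

end MeasureTools

section MixedNorm

variable {α β : Type*} [MeasurableSpace α] [MeasurableSpace β] {μ : Measure α} {ν : Measure β}

theorem eLpNorm'_indicator_fun_const {A : Set α} (hA : MeasurableSet A) (c : ℝ≥0∞) {q : ℝ}
    (hq : 0 < q) : eLpNorm' (A.indicator fun _ => c) q μ = c * μ A ^ (1 / q) := by
  have hpow (x : α) : ‖A.indicator (fun _ => c) x‖ₑ ^ q = A.indicator (fun _ => c ^ q) x := by
    by_cases hx : x ∈ A <;> simp [hx, hq]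
  simp only [eLpNorm', hpow]
  rw [lintegral_indicator_const hA, ENNReal.mul_rpow_of_nonneg _ _ (by positivity), one_div,
    ENNReal.rpow_rpow_inv hq.ne']

theorem eLpNorm'_cutoff_ne_top {S : ℕ → Set α} (hS : ∀ n, MeasurableSet (S n))
    (hμS : ∀ n, μ (S n) ≠ ∞) (f : α → ℝ≥0∞) {r : ℝ} (hr : 0 < r) (n : ℕ) :
    eLpNorm' (cutoff S f n) r μ ≠ ∞ := by
  refine ne_top_of_le_ne_top ?_ (eLpNorm'_mono_of_le μ (cutoff_le_indicator S f n) hr.le)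
  rw [eLpNorm'_indicator_fun_const (hS n) _ hr]
  exact ENNReal.mul_ne_top (by finiteness)
    (ENNReal.rpow_ne_top_of_nonneg (by positivity) (hμS n))

theorem measurable_eLpNorm'_prodMk [SFinite ν] {f : α × β → ℝ≥0∞} (hf : Measurable f) (q : ℝ) :
    Measurable fun x => eLpNorm' (fun y => f (x, y)) q ν :=
  ((hf.pow_const q).lintegral_prod_right').pow_const _

theorem eLpNorm'_prod {ε : Type*} [ENorm ε] [SFinite ν] {f : α × β → ε}
    (hf : Measurable fun z => ‖f z‖ₑ) {q : ℝ} (hq : 0 < q) :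
    eLpNorm' f q (μ.prod ν) = eLpNorm' (fun x => eLpNorm' (fun y => f (x, y)) q ν) q μ := by
  simp only [eLpNorm', enorm_eq_self, one_div, ENNReal.rpow_inv_rpow hq.ne']
  rw [lintegral_prod _ (hf.pow_const q).aemeasurable]

theorem eLpNorm'_prod_symm {ε : Type*} [ENorm ε] [SFinite μ] [SFinite ν] {f : α × β → ε}
    (hf : Measurable fun z => ‖f z‖ₑ) {q : ℝ} (hq : 0 < q) :
    eLpNorm' f q (μ.prod ν) = eLpNorm' (fun y => eLpNorm' (fun x => f (x, y)) q μ) q ν := by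
  simp only [eLpNorm', enorm_eq_self, one_div, ENNReal.rpow_inv_rpow hq.ne']
  rw [lintegral_prod_symm _ (hf.pow_const q).aemeasurable]

theorem eLpNorm'_rpow_le_mul_of_le_lintegral [SFinite μ] [SFinite ν] {f : α → β → ℝ≥0∞}
    (hf : Measurable (Function.uncurry f)) {c : α → ℝ≥0∞} (hc : Measurable c)
    (hcf : ∀ x, c x ≤ ∫⁻ y, f x y ∂ν) {r : ℝ} (hr : 1 < r) :
    eLpNorm' c r μ ^ r ≤ eLpNorm' c r μ ^ (r - 1) * ∫⁻ y, eLpNorm' (fun x => f x y) r μ ∂ν := by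
  have hconj : r.HolderConjugate r.conjExponent := .conjExponent hr
  have hfx (x : α) : Measurable (f x) := hf.comp measurable_prodMk_left
  have hfy (y : β) : Measurable fun x => f x y := hf.comp measurable_prodMk_right
  calc eLpNorm' c r μ ^ r
      = ∫⁻ x, c x ^ r ∂μ := (lintegral_rpow_eq_eLpNorm'_rpow μ c hconj.pos).symm
    _ ≤ ∫⁻ x, ∫⁻ y, c x ^ (r - 1) * f x y ∂ν ∂μ := lintegral_mono fun x => by
        rw [lintegral_const_mul _ (hfx x), ← mul_rpow_sub_one (c x) hr.le, mul_comm]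
        gcongr
        exact hcf x
    _ = ∫⁻ y, ∫⁻ x, c x ^ (r - 1) * f x y ∂μ ∂ν :=
        lintegral_lintegral_swap (((hc.comp measurable_fst).pow_const _).mul hf).aemeasurable
    _ ≤ ∫⁻ y, eLpNorm' c r μ ^ (r - 1) * eLpNorm' (fun x => f x y) r μ ∂ν := by
        refine lintegral_mono fun y => ?_
        refine (lintegral_mul_le_eLpNorm'_mul_eLpNorm' (hc.pow_const _).aestronglyMeasurable
          (hfy y).aestronglyMeasurable hconj.symm).trans_eq ?_
        rw [eLpNorm'_rpow μ c hconj.sub_one_pos.ne', hconj.sub_one_mul_conj]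
    _ = _ := lintegral_const_mul _ (measurable_eLpNorm'_prodMk (hf.comp measurable_swap) r)

theorem eLpNorm'_lintegral_le [SigmaFinite μ] [SFinite ν] {f : α → β → ℝ≥0∞}
    (hf : Measurable (Function.uncurry f)) {r : ℝ} (hr : 1 ≤ r) :
    eLpNorm' (fun x => ∫⁻ y, f x y ∂ν) r μ ≤ ∫⁻ y, eLpNorm' (fun x => f x y) r μ ∂ν := by
  rcases hr.eq_or_lt with rfl | hr
  · simpa [eLpNorm'] using (lintegral_lintegral_swap hf.aemeasurable).le
  have hr0 : 0 < r := one_pos.trans hr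
  set S : α → ℝ≥0∞ := fun x => ∫⁻ y, f x y ∂ν
  set c := cutoff (spanningSets μ) S
  have hc (n : ℕ) : Measurable (c n) :=
    measurable_cutoff (measurableSet_spanningSets μ) hf.lintegral_prod_right n
  have hfin (n : ℕ) : eLpNorm' (c n) r μ ≠ ∞ := eLpNorm'_cutoff_ne_top
    (measurableSet_spanningSets μ) (fun n => (measure_spanningSets_lt_top μ n).ne) S hr0 n
  have hsup : S = fun x => ⨆ n, c n x :=
    funext fun x => (iSup_cutoff (monotone_spanningSets μ) (iUnion_spanningSets μ) S x).symm
  rw [hsup, eLpNorm'_iSup μ hc (monotone_cutoff (monotone_spanningSets μ) S) hr0]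
  exact iSup_le fun n => le_of_rpow_le_rpow_sub_one_mul (hfin n)
    (eLpNorm'_rpow_le_mul_of_le_lintegral hf (hc n) (cutoff_le _ S n) hr)

theorem eLpNorm'_eLpNorm'_swap_le [SigmaFinite μ] [SFinite ν] {f : α → β → ℝ≥0∞}
    (hf : Measurable (Function.uncurry f)) {r q : ℝ} (hr : 0 < r) (hrq : r ≤ q) :
    eLpNorm' (fun x => eLpNorm' (f x) r ν) q μ
      ≤ eLpNorm' (fun y => eLpNorm' (fun x => f x y) q μ) r ν := by
  have hq : 0 < q := hr.trans_le hrq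
  have hmink := eLpNorm'_lintegral_le (μ := μ) (ν := ν) (f := fun x y => f x y ^ r)
    (hf.pow_const r) ((one_le_div hr).mpr hrq)
  have hpow := ENNReal.rpow_le_rpow hmink (one_div_nonneg.mpr hr.le)
  have hinner : r * (q / r) = q := by field_simp
  have hroot : 1 / (q / r) * (1 / r) = 1 / q := by field_simp
  have hpow_inv : 1 / r * q = q / r := by field_simp
  have houter : 1 / q * r = 1 / (q / r) := by field_simp
  simpa only [eLpNorm', enorm_eq_self, ← ENNReal.rpow_mul, hinner, hroot, hpow_inv, houter]
    using hpow

theorem lintegral_prod_mul_le_eLpNorm'_eLpNorm' [SFinite ν] {f g : α × β → ℝ≥0∞}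
    (hf : Measurable f) (hg : Measurable g) {p p' q q' : ℝ} (hp : p.HolderConjugate p')
    (hq : q.HolderConjugate q') :
    ∫⁻ z, f z * g z ∂(μ.prod ν)
      ≤ eLpNorm' (fun x => eLpNorm' (fun y => f (x, y)) q ν) p μ
        * eLpNorm' (fun x => eLpNorm' (fun y => g (x, y)) q' ν) p' μ := by
  refine (lintegral_prod _ (hf.mul hg).aemeasurable).trans_le ?_
  refine (lintegral_mono fun x => lintegral_mul_le_eLpNorm'_mul_eLpNorm'
    (hf.comp measurable_prodMk_left).aestronglyMeasurable
    (hg.comp measurable_prodMk_left).aestronglyMeasurable hq).trans ?_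
  exact lintegral_mul_le_eLpNorm'_mul_eLpNorm'
    (measurable_eLpNorm'_prodMk hf q).aestronglyMeasurable
    (measurable_eLpNorm'_prodMk hg q').aestronglyMeasurable hp

/-- The function that extremizes the duality between the mixed norms `L^p_x L^q_y` and
`L^{p'}_x L^{q'}_y` at `w`. -/
def mixedDual (ν : Measure β) (p q : ℝ) (w : α × β → ℝ≥0∞) (z : α × β) : ℝ≥0∞ :=
  eLpNorm' (fun y => w (z.1, y)) q ν ^ (p - q) * w z ^ (q - 1)

section MixedDual

variable {w : α × β → ℝ≥0∞} {p p' q q' : ℝ}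

theorem measurable_mixedDual [SFinite ν] (hw : Measurable w) (p q : ℝ) :
    Measurable (mixedDual ν p q w) :=
  (((measurable_eLpNorm'_prodMk hw q).comp measurable_fst).pow_const _).mul (hw.pow_const _)

theorem lintegral_mul_mixedDual [SFinite ν] (hw : Measurable w) (hp : 0 < p) (hq : 1 < q)
    (hfin : ∀ x, eLpNorm' (fun y => w (x, y)) q ν ≠ ∞) :
    ∫⁻ z, w z * mixedDual ν p q w z ∂(μ.prod ν)
      = eLpNorm' (fun x => eLpNorm' (fun y => w (x, y)) q ν) p μ ^ p := by
  have hq0 : 0 < q := one_pos.trans hq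
  rw [← lintegral_rpow_eq_eLpNorm'_rpow μ _ hp]
  refine (lintegral_prod _ (hw.mul (measurable_mixedDual hw p q)).aemeasurable).trans
    (lintegral_congr fun x => ?_)
  have hwx : Measurable fun y => w (x, y) := hw.comp measurable_prodMk_left
  have hmul (y : β) : (w * mixedDual ν p q w) (x, y)
      = eLpNorm' (fun y => w (x, y)) q ν ^ (p - q) * w (x, y) ^ q := by
    rw [Pi.mul_apply, mixedDual, mul_left_comm, mul_rpow_sub_one _ hq.le]
  rw [lintegral_congr hmul, lintegral_const_mul _ (hwx.pow_const q),
    lintegral_rpow_eq_eLpNorm'_rpow ν _ hq0, rpow_mul_rpow_of_ne_top (hfin x) hq0 (by simpa),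
    sub_add_cancel]

theorem eLpNorm'_mixedDual (hw : Measurable w) (hp : p.HolderConjugate p')
    (hq : q.HolderConjugate q') (hfin : ∀ x, eLpNorm' (fun y => w (x, y)) q ν ≠ ∞) :
    eLpNorm' (fun x => eLpNorm' (fun y => mixedDual ν p q w (x, y)) q' ν) p' μ
      = eLpNorm' (fun x => eLpNorm' (fun y => w (x, y)) q ν) p μ ^ (p - 1) := by
  have hinner (x : α) : eLpNorm' (fun y => mixedDual ν p q w (x, y)) q' ν
      = eLpNorm' (fun y => w (x, y)) q ν ^ (p - 1) := by
    have hwx : Measurable fun y => w (x, y) := hw.comp measurable_prodMk_left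
    simp only [mixedDual]
    rw [eLpNorm'_const_mul_of_measurable ν _ (hwx.pow_const _) hq.symm.pos,
      eLpNorm'_rpow ν _ hq.sub_one_pos.ne', hq.sub_one_mul_conj,
      rpow_mul_rpow_of_ne_top (hfin x) hq.sub_one_pos (by linarith [hp.lt]), sub_add_sub_cancel]
  simp only [hinner]
  rw [eLpNorm'_rpow μ _ hp.sub_one_pos.ne', hp.sub_one_mul_conj]

end MixedDual

theorem eLpNorm'_prodMk_le_indicator {ι : Type*} {A : Set ι} {B : Set β} (hB : MeasurableSet B)
    {w : ι × β → ℝ≥0∞} {c : ℝ≥0∞} (hw : w ≤ (A ×ˢ B).indicator fun _ => c) {q : ℝ} (hq : 0 < q)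
    (x : ι) :
    eLpNorm' (fun y => w (x, y)) q ν ≤ A.indicator (fun _ => c * ν B ^ (1 / q)) x := by
  have hwx (y : β) : w (x, y) ≤ B.indicator (fun _ => A.indicator (fun _ => c) x) y := by
    refine (hw (x, y)).trans_eq ?_
    by_cases hx : x ∈ A <;> by_cases hy : y ∈ B <;> simp [hx, hy]
  refine (eLpNorm'_mono_of_le ν hwx hq.le).trans_eq ?_
  rw [eLpNorm'_indicator_fun_const hB _ hq]
  by_cases hx : x ∈ A <;> simp [hx]

theorem eLpNorm'_prodMk_ne_top {ι : Type*} {A : Set ι} {B : Set β} (hB : MeasurableSet B)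
    (hνB : ν B ≠ ∞) {w : ι × β → ℝ≥0∞} {c : ℝ≥0∞} (hc : c ≠ ∞)
    (hw : w ≤ (A ×ˢ B).indicator fun _ => c) {q : ℝ} (hq : 0 < q) (x : ι) :
    eLpNorm' (fun y => w (x, y)) q ν ≠ ∞ :=
  ne_top_of_le_ne_top (by finiteness : c * ν B ^ (1 / q) ≠ ∞)
    ((eLpNorm'_prodMk_le_indicator hB hw hq x).trans (Set.indicator_le_self _ _ x))

section Rectangle

variable {A : Set α} {B : Set β} {w : α × β → ℝ≥0∞} {c : ℝ≥0∞} {p q : ℝ}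

theorem eLpNorm'_eLpNorm'_ne_top (hA : MeasurableSet A) (hB : MeasurableSet B)
    (hμA : μ A ≠ ∞) (hνB : ν B ≠ ∞) (hc : c ≠ ∞) (hp : 0 < p) (hq : 0 < q)
    (hw : w ≤ (A ×ˢ B).indicator fun _ => c) :
    eLpNorm' (fun x => eLpNorm' (fun y => w (x, y)) q ν) p μ ≠ ∞ := by
  refine ne_top_of_le_ne_top ?_
    (eLpNorm'_mono_of_le μ (eLpNorm'_prodMk_le_indicator hB hw hq) hp.le)
  rw [eLpNorm'_indicator_fun_const hA _ hp]
  finiteness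

theorem lintegral_mixedDual_ne_top [SFinite ν] (hA : MeasurableSet A) (hB : MeasurableSet B)
    (hμA : μ A ≠ ∞) (hνB : ν B ≠ ∞) (hc : c ≠ ∞) (hp : 1 < p) (hq : 1 < q)
    (hwm : Measurable w) (hw : w ≤ (A ×ˢ B).indicator fun _ => c) :
    ∫⁻ z, mixedDual ν p q w z ∂(μ.prod ν) ≠ ∞ := by
  have hp' : p.HolderConjugate p.conjExponent := .conjExponent hp
  have hq' : q.HolderConjugate q.conjExponent := .conjExponent hq
  have hsupp (z : α × β) : mixedDual ν p q w z
      = mixedDual ν p q w z * (A ×ˢ B).indicator (fun _ => 1) z := by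
    by_cases hz : z ∈ A ×ˢ B
    · rw [Set.indicator_of_mem hz, mul_one]
    · have hwz : w z = 0 := le_zero_iff.mp ((hw z).trans_eq (Set.indicator_of_notMem hz _))
      rw [mixedDual, hwz, ENNReal.zero_rpow_of_pos hq'.sub_one_pos, mul_zero, zero_mul]
  rw [lintegral_congr hsupp]
  refine ne_top_of_le_ne_top (ENNReal.mul_ne_top ?_ ?_) (lintegral_prod_mul_le_eLpNorm'_eLpNorm'
    (measurable_mixedDual hwm p q) (measurable_const.indicator (hA.prod hB)) hp'.symm hq'.symm)
  · rw [eLpNorm'_mixedDual hwm hp' hq' (eLpNorm'_prodMk_ne_top hB hνB hc hw hq'.pos)]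
    exact ENNReal.rpow_ne_top_of_nonneg hp'.sub_one_pos.le
      (eLpNorm'_eLpNorm'_ne_top hA hB hμA hνB hc hp'.pos hq'.pos hw)
  · exact eLpNorm'_eLpNorm'_ne_top hA hB hμA hνB ENNReal.one_ne_top hp'.pos hq'.pos le_rfl

end Rectangle

theorem eLpNorm'_eLpNorm'_iSup [SFinite ν] {f : ℕ → α × β → ℝ≥0∞} (hf : ∀ n, Measurable (f n))
    (hmono : Monotone f) {p q : ℝ} (hp : 0 < p) (hq : 0 < q) :
    eLpNorm' (fun x => eLpNorm' (fun y => ⨆ n, f n (x, y)) q ν) p μ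
      = ⨆ n, eLpNorm' (fun x => eLpNorm' (fun y => f n (x, y)) q ν) p μ := by
  have hinner (x : α) : eLpNorm' (fun y => ⨆ n, f n (x, y)) q ν
      = ⨆ n, eLpNorm' (fun y => f n (x, y)) q ν :=
    eLpNorm'_iSup ν (fun n => (hf n).comp measurable_prodMk_left)
      (fun m n hmn y => hmono hmn (x, y)) hq
  simp only [hinner]
  exact eLpNorm'_iSup μ (fun n => measurable_eLpNorm'_prodMk (hf n) q)
    (fun m n hmn x => eLpNorm'_mono_of_le ν (fun y => hmono hmn (x, y)) hq.le) hp

theorem eLpNorm'_eLpNorm'_le_of_lintegral_mul_le [SigmaFinite μ] [SigmaFinite ν]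
    {w : α × β → ℝ≥0∞} (hw : Measurable w) {p p' q q' : ℝ} (hp : p.HolderConjugate p')
    (hq : q.HolderConjugate q') {K : ℝ≥0∞}
    (h : ∀ f : α × β → ℝ≥0∞, Measurable f → ∫⁻ z, f z ∂(μ.prod ν) ≠ ∞ →
      ∫⁻ z, w z * f z ∂(μ.prod ν)
        ≤ K * eLpNorm' (fun x => eLpNorm' (fun y => f (x, y)) q' ν) p' μ) :
    eLpNorm' (fun x => eLpNorm' (fun y => w (x, y)) q ν) p μ ≤ K := by
  set S : ℕ → Set (α × β) := fun n => spanningSets μ n ×ˢ spanningSets ν n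
  have hmono : Monotone S := fun m n hmn =>
    Set.prod_mono (monotone_spanningSets μ hmn) (monotone_spanningSets ν hmn)
  have hcover : ⋃ n, S n = Set.univ := by
    rw [Set.iUnion_prod_of_monotone (monotone_spanningSets μ) (monotone_spanningSets ν),
      iUnion_spanningSets, iUnion_spanningSets, Set.univ_prod_univ]
  have hm (n : ℕ) : Measurable (cutoff S w n) := measurable_cutoff
    (fun n => (measurableSet_spanningSets μ n).prod (measurableSet_spanningSets ν n)) hw n
  simp only [← iSup_cutoff hmono hcover w]
  rw [eLpNorm'_eLpNorm'_iSup hm (monotone_cutoff hmono w) hp.pos hq.pos]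
  refine iSup_le fun n => ?_
  have hA := measurableSet_spanningSets μ n
  have hB := measurableSet_spanningSets ν n
  have hμA := (measure_spanningSets_lt_top μ n).ne
  have hνB := (measure_spanningSets_lt_top ν n).ne
  have hle := cutoff_le_indicator S w n
  have hfin := eLpNorm'_prodMk_ne_top hB hνB (ENNReal.natCast_ne_top n) hle hq.pos
  refine le_of_rpow_le_rpow_sub_one_mul (r := p)
    (eLpNorm'_eLpNorm'_ne_top hA hB hμA hνB (ENNReal.natCast_ne_top n) hp.pos hq.pos hle) ?_
  rw [← lintegral_mul_mixedDual (hm n) hp.pos hq.lt hfin, ← eLpNorm'_mixedDual (hm n) hp hq hfin,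
    mul_comm _ K]
  refine le_trans (lintegral_mono fun z => ?_) (h _ (measurable_mixedDual (hm n) p q)
    (lintegral_mixedDual_ne_top hA hB hμA hνB (ENNReal.natCast_ne_top n) hp.lt hq.lt (hm n) hle))
  gcongr
  exact cutoff_le S w n z

theorem enorm_integral_ofReal {f : α → ℝ} (hf : Integrable f μ) (hf0 : ∀ x, 0 ≤ f x) :
    ‖∫ x, (f x : ℂ) ∂μ‖ₑ = ∫⁻ x, ENNReal.ofReal (f x) ∂μ := by
  rw [integral_complex_ofReal, ← ofReal_norm, Complex.norm_real,
    Real.norm_of_nonneg (integral_nonneg hf0),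
    ofReal_integral_eq_lintegral_ofReal hf (ae_of_all _ hf0)]

theorem eLpNorm'_eLpNorm'_le_of_enorm_integral_mul_le [SigmaFinite μ] [SigmaFinite ν]
    {w : α × β → ℂ} (hw : StronglyMeasurable w) {M : ℝ} (hM : ∀ z, ‖w z‖ ≤ M) {p p' q q' : ℝ}
    (hp : p.HolderConjugate p') (hq : q.HolderConjugate q') {K : ℝ≥0∞}
    (h : ∀ F : α × β → ℂ, StronglyMeasurable F → Integrable F (μ.prod ν) →
      ‖∫ z, w z * F z ∂(μ.prod ν)‖ₑ
        ≤ K * eLpNorm' (fun x => eLpNorm' (fun y => F (x, y)) q' ν) p' μ) :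
    eLpNorm' (fun x => eLpNorm' (fun y => w (x, y)) q ν) p μ ≤ K := by
  refine eLpNorm'_eLpNorm'_le_of_lintegral_mul_le hw.enorm hp hq fun f hf hfin => ?_
  set F : α × β → ℂ := fun z => (f z).toReal * (starRingEnd ℂ (w z) / ‖w z‖)
  have hFm : StronglyMeasurable F :=
    ((Complex.measurable_ofReal.comp hf.ennreal_toReal).mul
      ((Complex.continuous_conj.measurable.comp hw.measurable).div
        (Complex.measurable_ofReal.comp hw.norm.measurable))).stronglyMeasurable
  have hFnorm (z : α × β) : ‖F z‖ ≤ (f z).toReal := by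
    rw [norm_mul, norm_div, RCLike.norm_conj, Complex.norm_real, Complex.norm_real, norm_norm,
      Real.norm_of_nonneg ENNReal.toReal_nonneg]
    exact mul_le_of_le_one_right ENNReal.toReal_nonneg (div_self_le_one _)
  have hFi : Integrable F (μ.prod ν) :=
    (integrable_toReal_of_lintegral_ne_top hf.aemeasurable hfin).mono'
      hFm.aestronglyMeasurable (ae_of_all _ hFnorm)
  have hwF (z : α × β) : w z * F z = ((‖w z‖ * (f z).toReal : ℝ) : ℂ) := by
    rw [mul_left_comm, ← mul_div_assoc, Complex.mul_conj, Complex.normSq_eq_norm_sq]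
    push_cast
    rw [pow_two, mul_self_div_self, mul_comm]
  have hpair : ∫⁻ z, ‖w z‖ₑ * f z ∂(μ.prod ν) = ‖∫ z, w z * F z ∂(μ.prod ν)‖ₑ := by
    have hint : Integrable (fun z => ‖w z‖ * (f z).toReal) (μ.prod ν) :=
      (integrable_toReal_of_lintegral_ne_top hf.aemeasurable hfin).bdd_mul
        hw.norm.aestronglyMeasurable (ae_of_all _ fun z => (norm_norm (w z)).trans_le (hM z))
    rw [integral_congr_ae (ae_of_all _ hwF), enorm_integral_ofReal hint fun z => by positivity]
    refine lintegral_congr_ae ((ae_lt_top hf hfin).mono fun z hz => ?_)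
    simp only [ENNReal.ofReal_mul (norm_nonneg _), ofReal_norm, ENNReal.ofReal_toReal hz.ne]
  rw [hpair]
  refine (h F hFm hFi).trans ?_
  gcongr
  refine eLpNorm'_mono_of_le μ (fun x => eLpNorm'_mono_enorm_ae hq.symm.nonneg
    (ae_of_all _ fun y => ?_)) hp.symm.nonneg
  exact (ofReal_norm (F (x, y))).symm.trans_le
    ((ENNReal.ofReal_le_ofReal (hFnorm (x, y))).trans ENNReal.ofReal_toReal_le)

end MixedNorm

section Interpolation

variable {α β : Type*} [MeasurableSpace α] [MeasurableSpace β] {μ : Measure α} {ν : Measure β}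

theorem lintegral_rpow_le_of_meas_le {f : β → ℝ} {φ : α → ℝ} (hf : Measurable f)
    (hf0 : ∀ y, 0 ≤ f y) (hφ : Measurable φ) (hφ0 : ∀ x, 0 ≤ φ x) {s q : ℝ} (hq : 0 < q)
    (hsq : s < q) {D : ℝ≥0}
    (h : ∀ t : ℝ, 0 < t → ENNReal.ofReal (t ^ s) * ν {y | t ≤ f y} ≤ D * μ {x | t ≤ φ x}) :
    ∫⁻ y, ENNReal.ofReal (f y ^ q) ∂ν ≤
      ENNReal.ofReal (q / (q - s)) * D * ∫⁻ x, ENNReal.ofReal (φ x ^ (q - s)) ∂μ := by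
  have hqs : 0 < q - s := sub_pos.2 hsq
  rw [lintegral_rpow_eq_lintegral_meas_le_mul ν (Eventually.of_forall hf0) hf.aemeasurable hq,
    lintegral_rpow_eq_lintegral_meas_le_mul μ (Eventually.of_forall hφ0) hφ.aemeasurable hqs]
  have hlevel : ∀ t ∈ Set.Ioi (0 : ℝ), ν {y | t ≤ f y} * ENNReal.ofReal (t ^ (q - 1)) ≤
      D * (μ {x | t ≤ φ x} * ENNReal.ofReal (t ^ (q - s - 1))) := by
    intro t (ht : 0 < t)
    have hpow : t ^ (q - 1) = t ^ s * t ^ (q - s - 1) := by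
      rw [← Real.rpow_add ht]; congr 1; ring
    rw [hpow, ENNReal.ofReal_mul (by positivity), ← mul_assoc, ← mul_assoc,
      mul_comm (ν {y | t ≤ f y})]
    exact mul_le_mul_left (h t ht) _
  have hconst : ENNReal.ofReal q = ENNReal.ofReal (q / (q - s)) * ENNReal.ofReal (q - s) := by
    rw [← ENNReal.ofReal_mul (by positivity), div_mul_cancel₀ _ hqs.ne']
  refine (mul_le_mul_right (setLIntegral_mono' measurableSet_Ioi hlevel) _).trans_eq ?_
  rw [lintegral_const_mul' _ _ ENNReal.coe_ne_top, hconst]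
  ring

theorem lintegral_enorm_rpow_le_of_meas_le {f : β → ℂ} {φ : α → ℝ} (hf : Measurable f)
    (hφ : Measurable φ) (hφ0 : ∀ x, 0 ≤ φ x) {s q : ℝ} (hq : 0 < q) (hsq : s < q) {D : ℝ≥0}
    (h : ∀ t : ℝ, 0 < t → ENNReal.ofReal (t ^ s) * ν {y | t ≤ ‖f y‖} ≤ D * μ {x | t ≤ φ x}) :
    ∫⁻ y, ‖f y‖ₑ ^ q ∂ν ≤
      ENNReal.ofReal (q / (q - s)) * D * ∫⁻ x, ENNReal.ofReal (φ x ^ (q - s)) ∂μ := by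
  simpa only [← ENNReal.ofReal_rpow_of_nonneg (norm_nonneg (f _)) hq.le, ofReal_norm] using
    lintegral_rpow_le_of_meas_le hf.norm (fun y => norm_nonneg (f y)) hφ hφ0 hq hsq h

theorem ofReal_rpow_mul_meas_le_norm_add {u v : β → ℂ} {t : ℝ} (ht : 0 < t)
    (hu : ∀ y, ‖u y‖ₑ ≤ ENNReal.ofReal (t / 2)) (hv : Measurable v) :
    ENNReal.ofReal (t ^ (2 : ℝ)) * ν {y | t ≤ ‖u y + v y‖} ≤
      (4 : ℝ≥0) * ∫⁻ y, ‖v y‖ₑ ^ 2 ∂ν := by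
  have hsub : {y | t ≤ ‖u y + v y‖} ⊆ {y | ENNReal.ofReal ((t / 2) ^ 2) ≤ ‖v y‖ₑ ^ 2} := by
    intro y (hy : t ≤ ‖u y + v y‖)
    have huy : ‖u y‖ ≤ t / 2 := by
      simpa [← ofReal_norm, ENNReal.ofReal_le_ofReal_iff (show 0 ≤ t / 2 by positivity)]
        using hu y
    have hvy : t / 2 ≤ ‖v y‖ := by linarith [norm_add_le (u y) (v y)]
    rw [Set.mem_ofPred_eq, ← ofReal_norm, ← ENNReal.ofReal_pow (norm_nonneg _)]
    gcongr
  have hsplit : ENNReal.ofReal (t ^ (2 : ℝ)) = (4 : ℝ≥0) * ENNReal.ofReal ((t / 2) ^ 2) := by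
    rw [← ENNReal.ofReal_coe_nnreal, ← ENNReal.ofReal_mul (by positivity), Real.rpow_two]
    congr 1; push_cast; ring
  rw [hsplit, mul_assoc]
  gcongr
  exact (mul_le_mul_right (measure_mono hsub) _).trans
    (mul_meas_ge_le_lintegral₀ (by fun_prop) _)

theorem setLIntegral_enorm_le_of_mul_rpow_lt {g : α → ℂ}
    (hgm : Measurable g) {r c t : ℝ} (hc : 0 < c) :
    ∫⁻ x in {x | c * ‖g x‖ ^ (1 - r) < t}, ‖g x‖ₑ ∂μ ≤
      ENNReal.ofReal (t / c) * ∫⁻ x, ‖g x‖ₑ ^ r ∂μ := by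
  have hpt : ∀ x ∈ {x | c * ‖g x‖ ^ (1 - r) < t}, ‖g x‖ₑ ≤
      ENNReal.ofReal (t / c) * ‖g x‖ₑ ^ r := by
    intro x (hx : c * ‖g x‖ ^ (1 - r) < t)
    obtain hx0 | hx0 := (norm_nonneg (g x)).eq_or_lt
    · rw [← ofReal_norm, ← hx0]; simp
    rw [← ofReal_norm, ENNReal.ofReal_rpow_of_pos hx0,
      ← ENNReal.ofReal_mul' (by positivity)]
    refine ENNReal.ofReal_le_ofReal ?_
    have hnorm : ‖g x‖ ^ (1 - r) * ‖g x‖ ^ r = ‖g x‖ := by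
      rw [← Real.rpow_add hx0, sub_add_cancel, Real.rpow_one]
    calc ‖g x‖ = ‖g x‖ ^ (1 - r) * ‖g x‖ ^ r := hnorm.symm
      _ ≤ t / c * ‖g x‖ ^ r := by
        gcongr
        exact (le_div_iff₀' hc).2 hx.le
  calc ∫⁻ x in {x | c * ‖g x‖ ^ (1 - r) < t}, ‖g x‖ₑ ∂μ
      ≤ ∫⁻ x in {x | c * ‖g x‖ ^ (1 - r) < t}, ENNReal.ofReal (t / c) * ‖g x‖ₑ ^ r ∂μ :=
        setLIntegral_mono (by fun_prop) hpt
    _ ≤ ∫⁻ x, ENNReal.ofReal (t / c) * ‖g x‖ₑ ^ r ∂μ := setLIntegral_le_lintegral _ _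
    _ = _ := lintegral_const_mul _ (by fun_prop)

theorem lintegral_sq_mul_rpow_le {g : α → ℂ} (hgm : Measurable g) {q q' c : ℝ}
    (hqq' : q.HolderConjugate q') (hc : 0 ≤ c) :
    ∫⁻ x, ‖g x‖ₑ ^ 2 * ENNReal.ofReal ((c * ‖g x‖ ^ (1 - q')) ^ (q - 2)) ∂μ ≤
      ENNReal.ofReal (c ^ (q - 2)) * ∫⁻ x, ‖g x‖ₑ ^ q' ∂μ := by
  rw [← lintegral_const_mul _ (by fun_prop)]
  refine lintegral_mono fun x => ?_
  obtain hx0 | hx0 := (norm_nonneg (g x)).eq_or_lt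
  · rw [← ofReal_norm, ← hx0]; simp
  have hexp : 2 + (1 - q') * (q - 2) = q' := by
    linear_combination -hqq'.mul_eq_add
  rw [← ofReal_norm, ← ENNReal.ofReal_pow (norm_nonneg _), ENNReal.ofReal_rpow_of_pos hx0,
    ← ENNReal.ofReal_mul (by positivity), ← ENNReal.ofReal_mul (by positivity),
    Real.mul_rpow hc (by positivity), ← Real.rpow_mul hx0.le, mul_left_comm, ← Real.rpow_two,
    ← Real.rpow_add hx0, hexp]

/-- `T` is additive on integrable functions, maps `L¹` to `L^∞` with norm at most `A`, and is a
contraction for the `L²` norms. `T` acts on all functions, but nothing is required of it outside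
`L¹`. -/
structure IsL2ContractionOfL1Bound (T : (α → ℂ) → β → ℂ) (μ : Measure α) (ν : Measure β)
    (A : ℝ≥0) : Prop where
  measurable : ∀ g, Integrable g μ → Measurable (T g)
  map_add : ∀ g h, Integrable g μ → Integrable h μ → T (g + h) = T g + T h
  enorm_le : ∀ g, Integrable g μ → ∀ y, ‖T g y‖ₑ ≤ A * ∫⁻ x, ‖g x‖ₑ ∂μ
  lintegral_sq_le : ∀ g, Integrable g μ → ∫⁻ y, ‖T g y‖ₑ ^ 2 ∂ν ≤ ∫⁻ x, ‖g x‖ₑ ^ 2 ∂μ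

namespace IsL2ContractionOfL1Bound

variable {T : (α → ℂ) → β → ℂ} {A : ℝ≥0} {g : α → ℂ} {q : ℝ}

-- Marcinkiewicz-type splitting of `g` along the level sets of a weight `φ` that may depend on `g`.
theorem lintegral_rpow_le (hT : IsL2ContractionOfL1Bound T μ ν A) (hq : 2 < q)
    (hgm : Measurable g) (hg : Integrable g μ) {φ : α → ℝ} (hφ0 : ∀ x, 0 ≤ φ x)
    (hφ : Measurable φ)
    (hlow : ∀ t : ℝ, 0 < t → A * ∫⁻ x in {x | φ x < t}, ‖g x‖ₑ ∂μ ≤ ENNReal.ofReal (t / 2)) :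
    ∫⁻ y, ‖T g y‖ₑ ^ q ∂ν ≤ ENNReal.ofReal (q / (q - 2)) * (4 : ℝ≥0) *
      ∫⁻ x, ‖g x‖ₑ ^ 2 * ENNReal.ofReal (φ x ^ (q - 2)) ∂μ := by
  have hsq : Measurable fun x => ‖g x‖ₑ ^ 2 := hgm.enorm.pow_const 2
  have hdensity : ∫⁻ x, ‖g x‖ₑ ^ 2 * ENNReal.ofReal (φ x ^ (q - 2)) ∂μ =
      ∫⁻ x, ENNReal.ofReal (φ x ^ (q - 2)) ∂μ.withDensity fun x => ‖g x‖ₑ ^ 2 :=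
    (lintegral_withDensity_eq_lintegral_mul _ hsq (by fun_prop)).symm
  rw [hdensity]
  refine lintegral_enorm_rpow_le_of_meas_le (hT.measurable g hg) hφ hφ0 (by linarith) hq
    fun t ht => ?_
  have hlow_meas : MeasurableSet {x | φ x < t} := measurableSet_lt hφ measurable_const
  have hcompl : {x | t ≤ φ x} = {x | φ x < t}ᶜ := by ext; simp
  set S := {x | φ x < t}
  have hu : ∀ y, ‖T (S.indicator g) y‖ₑ ≤ ENNReal.ofReal (t / 2) := fun y => by
    refine (hT.enorm_le _ (hg.indicator hlow_meas) y).trans ?_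
    simpa only [enorm_indicator_eq_indicator_enorm, lintegral_indicator hlow_meas] using hlow t ht
  have hv : ∫⁻ y, ‖T (Sᶜ.indicator g) y‖ₑ ^ 2 ∂ν ≤ μ.withDensity (fun x => ‖g x‖ₑ ^ 2) Sᶜ := by
    refine (hT.lintegral_sq_le _ (hg.indicator hlow_meas.compl)).trans_eq ?_
    rw [withDensity_apply _ hlow_meas.compl, ← lintegral_indicator hlow_meas.compl]
    refine lintegral_congr fun x => ?_
    by_cases hx : x ∈ S <;> simp [hx]
  have hadd : T g = fun y => T (S.indicator g) y + T (Sᶜ.indicator g) y := by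
    rw [← Set.indicator_self_add_compl S g,
      hT.map_add _ _ (hg.indicator hlow_meas) (hg.indicator hlow_meas.compl),
      Set.indicator_self_add_compl]
    rfl
  rw [hcompl, hadd]
  exact (ofReal_rpow_mul_meas_le_norm_add ht hu
    (hT.measurable _ (hg.indicator hlow_meas.compl))).trans (mul_le_mul_right hv _)

theorem lintegral_rpow_le_lintegral_rpow_conj (hT : IsL2ContractionOfL1Bound T μ ν A) (hA : A ≠ 0)
    (hq : 2 < q) {q' : ℝ} (hqq' : q.HolderConjugate q') (hgm : Measurable g)
    (hg : Integrable g μ) :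
    ∫⁻ y, ‖T g y‖ₑ ^ q ∂ν ≤ ENNReal.ofReal (q / (q - 2)) * (4 : ℝ≥0) *
      (ENNReal.ofReal ((2 * A) ^ (q - 2)) * (∫⁻ x, ‖g x‖ₑ ^ q' ∂μ) ^ (q - 1)) := by
  have hA0 : 0 < (A : ℝ) := NNReal.coe_pos.2 (pos_iff_ne_zero.2 hA)
  have hq2 : 0 < q - 2 := sub_pos.2 hq
  set M := ∫⁻ x, ‖g x‖ₑ ^ q' ∂μ with hM
  obtain hM0 | hM0 := eq_or_ne M 0
  · have hg0 : ∫⁻ x, ‖g x‖ₑ ∂μ = 0 := by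
      rw [hM, lintegral_eq_zero_iff (by fun_prop)] at hM0
      rw [lintegral_eq_zero_iff (by fun_prop)]
      filter_upwards [hM0] with x hx
      simpa [hqq'.symm.pos, hqq'.symm.nonneg.not_gt] using hx
    have hTg : ∀ y, ‖T g y‖ₑ = 0 := fun y => by simpa [hg0] using hT.enorm_le g hg y
    simp [hTg, hqq'.pos]
  obtain hMtop | hMtop := eq_or_ne M ∞
  · rw [hMtop, ENNReal.top_rpow_of_pos hqq'.sub_one_pos, ENNReal.mul_top, ENNReal.mul_top]
    · exact le_top
    · have : 0 < q / (q - 2) := div_pos hqq'.pos hq2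
      simpa using this
    · have : 0 < (2 * (A : ℝ)) ^ (q - 2) := by positivity
      simpa using this
  have hm : 0 < M.toReal := ENNReal.toReal_pos hM0 hMtop
  have hMm : ENNReal.ofReal M.toReal = M := ENNReal.ofReal_toReal hMtop
  refine (hT.lintegral_rpow_le hq hgm hg (φ := fun x => 2 * A * M.toReal * ‖g x‖ ^ (1 - q'))
    (fun x => by positivity) (by fun_prop) fun t ht => ?_).trans ?_
  · grw [setLIntegral_enorm_le_of_mul_rpow_lt hgm (by positivity), ← hM]
    rw [← hMm, ENNReal.toReal_ofReal hm.le, ← ENNReal.ofReal_coe_nnreal,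
      ← ENNReal.ofReal_mul (by positivity), ← ENNReal.ofReal_mul (by positivity)]
    refine ENNReal.ofReal_le_ofReal (le_of_eq ?_)
    field_simp
  · grw [lintegral_sq_mul_rpow_le hgm hqq' (by positivity), ← hM]
    rw [Real.mul_rpow (by positivity) hm.le, ENNReal.ofReal_mul (by positivity), mul_assoc,
      ← ENNReal.ofReal_rpow_of_pos hm, hMm, show q - 1 = q - 2 + 1 by ring,
      ENNReal.rpow_add _ _ hM0 hMtop, ENNReal.rpow_one, mul_assoc, mul_assoc]

theorem eLpNorm'_le_mul_eLpNorm'_conj (hT : IsL2ContractionOfL1Bound T μ ν A) (hA : A ≠ 0)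
    (hq : 2 < q) {q' : ℝ} (hqq' : q.HolderConjugate q') (hgm : Measurable g)
    (hg : Integrable g μ) :
    eLpNorm' (T g) q ν ≤ ENNReal.ofReal (q / (q - 2) * 4 * 2 ^ (q - 2)) ^ (1 / q) *
      (A : ℝ≥0∞) ^ (1 - 2 / q) * eLpNorm' g q' μ := by
  have hq2 : 0 < q - 2 := sub_pos.2 hq
  have hq0 : 0 < q := hqq'.pos
  have hconj : (q - 1) * (1 / q) = 1 / q' := by
    rw [one_div q', ← hqq'.one_sub_inv]; field_simp
  have hexp : (q - 2) * (1 / q) = 1 - 2 / q := by field_simp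
  have hconst : ENNReal.ofReal (q / (q - 2)) * (4 : ℝ≥0) * ENNReal.ofReal ((2 * A) ^ (q - 2)) =
      ENNReal.ofReal (q / (q - 2) * 4 * 2 ^ (q - 2)) * (A : ℝ≥0∞) ^ (q - 2) := by
    rw [Real.mul_rpow zero_le_two A.coe_nonneg, ENNReal.ofReal_mul (by positivity),
      ENNReal.ofReal_mul (by positivity), ENNReal.ofReal_mul (by positivity),
      ← ENNReal.ofReal_rpow_of_nonneg A.coe_nonneg hq2.le, ENNReal.ofReal_coe_nnreal]
    simp [mul_assoc]
  calc eLpNorm' (T g) q ν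
      ≤ (ENNReal.ofReal (q / (q - 2)) * (4 : ℝ≥0) * (ENNReal.ofReal ((2 * A) ^ (q - 2)) *
          (∫⁻ x, ‖g x‖ₑ ^ q' ∂μ) ^ (q - 1))) ^ (1 / q) :=
        ENNReal.rpow_le_rpow (hT.lintegral_rpow_le_lintegral_rpow_conj hA hq hqq' hgm hg)
          (by positivity)
    _ = _ := by
        rw [← mul_assoc, hconst, ENNReal.mul_rpow_of_nonneg _ _ (by positivity),
          ENNReal.mul_rpow_of_nonneg _ _ (by positivity), ← ENNReal.rpow_mul, ← ENNReal.rpow_mul,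
          hexp, hconj]
        rfl

end IsL2ContractionOfL1Bound

end Interpolation

section HomogeneousKernel

-- Choosing `R ^ d = (n / α) ^ r` balances the near and far parts of a fractional integral.
theorem exists_mul_enorm_rpow_eq {n α : ℝ≥0∞} (hn0 : n ≠ 0) (hntop : n ≠ ∞) (hα0 : α ≠ 0)
    (hαtop : α ≠ ∞) {d r r' : ℝ} (hd : 0 < d) (hrr' : r.HolderConjugate r') :
    ∃ R : ℝ, 0 < R ∧ α * ‖R‖ₑ ^ (d * (1 - 2 / r')) = α ^ (r - 1) * n ^ (2 - r) ∧
      n * ‖R‖ₑ ^ (-(d / r')) = α ^ (r - 1) * n ^ (2 - r) := by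
  have hconj : r / r' = r - 1 := by
    rw [div_eq_mul_inv, ← hrr'.one_sub_inv, mul_sub, mul_inv_cancel₀ hrr'.ne_zero, mul_one]
  have hpow : ∀ b : ℝ, (n / α) ^ b = n ^ b * α ^ (-b) := fun b => by
    rw [div_eq_mul_inv, ENNReal.mul_rpow_of_ne_top hntop (ENNReal.inv_ne_top.2 hα0),
      ENNReal.inv_rpow, ENNReal.rpow_neg]
  have hbase0 : n / α ≠ 0 := ENNReal.div_ne_zero.2 ⟨hn0, hαtop⟩
  have hbasetop : n / α ≠ ∞ := ENNReal.div_ne_top hntop hα0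
  have htop := ENNReal.rpow_ne_top_of_ne_zero (y := r / d) hbase0 hbasetop
  refine ⟨((n / α) ^ (r / d)).toReal, ENNReal.toReal_pos
    (ENNReal.rpow_pos (pos_iff_ne_zero.2 hbase0) hbasetop).ne' htop, ?_, ?_⟩ <;>
    rw [Real.enorm_of_nonneg ENNReal.toReal_nonneg, ENNReal.ofReal_toReal htop, ← ENNReal.rpow_mul]
  · have hexp : r / d * (d * (1 - 2 / r')) = 2 - r := by
      rw [← mul_assoc, div_mul_cancel₀ _ hd.ne', mul_sub, mul_div_left_comm, hconj]; ring
    rw [hexp, hpow, mul_left_comm, mul_comm]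
    nth_rw 1 [← ENNReal.rpow_one α]
    rw [← ENNReal.rpow_add _ _ hα0 hαtop]
    congr 2; ring
  · have hexp : r / d * -(d / r') = -(r - 1) := by
      rw [← hconj]; field_simp
    rw [hexp, hpow, neg_neg, ← mul_assoc, mul_comm]
    nth_rw 1 [← ENNReal.rpow_one n]
    rw [← ENNReal.rpow_add _ _ hn0 hntop]
    congr 2; ring

variable {E : Type*} [NormedAddCommGroup E] [NormedSpace ℝ E] [FiniteDimensional ℝ E]
  [MeasurableSpace E] [BorelSpace E] (μ : Measure E) [μ.IsAddHaarMeasure]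

theorem setLIntegral_smul_set_enorm_rpow {S : Set E} (hS : MeasurableSet S) (b : ℝ) {R : ℝ}
    (hR : 0 < R) :
    ∫⁻ x in R • S, ‖x‖ₑ ^ b ∂μ =
      ‖R‖ₑ ^ (Module.finrank ℝ E + b) * ∫⁻ x in S, ‖x‖ₑ ^ b ∂μ := by
  have hR0 : ‖R‖ₑ ≠ 0 := enorm_ne_zero.2 hR.ne'
  have hscale := lintegral_comp_smul_addHaar μ ((R • S).indicator fun x => ‖x‖ₑ ^ b) hR.ne'
  have hpt : ∀ x, (R • S).indicator (fun x => ‖x‖ₑ ^ b) (R • x) =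
      ‖R‖ₑ ^ b * S.indicator (fun x => ‖x‖ₑ ^ b) x := fun x => by
    by_cases hx : x ∈ S
    · simp [Set.smul_mem_smul_set_iff₀ hR.ne', hx, enorm_smul,
        ENNReal.mul_rpow_of_ne_top enorm_ne_top enorm_ne_top]
    · simp [Set.smul_mem_smul_set_iff₀ hR.ne', hx]
  simp only [hpt] at hscale
  rw [lintegral_const_mul _ (by measurability), lintegral_indicator hS,
    lintegral_indicator (hS.const_smul₀ R)] at hscale
  rw [ENNReal.rpow_add _ _ hR0 enorm_ne_top, mul_assoc, hscale, ← mul_assoc,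
    ← ENNReal.rpow_add _ _ hR0 enorm_ne_top, add_neg_cancel, ENNReal.rpow_zero, one_mul]

theorem exists_setLIntegral_ball_enorm_rpow_le [Nontrivial E] {b : ℝ}
    (hb : -(Module.finrank ℝ E : ℝ) < b) :
    ∃ C : ℝ≥0, ∀ R : ℝ, 0 < R →
      ∫⁻ x in Metric.ball 0 R, ‖x‖ₑ ^ b ∂μ ≤ C * ‖R‖ₑ ^ (Module.finrank ℝ E + b) := by
  have hint : IntegrableOn (fun x : E => ‖x‖ ^ b) (Metric.ball 0 1) μ := by
    refine integrableOn_ball_of_norm_le_rpow (C := 1) Module.finrank_pos (neg_lt.1 hb)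
      (ae_of_all _ fun x => ?_) (measurable_norm.pow_const b).aestronglyMeasurable
    rw [neg_neg, one_mul, Real.norm_of_nonneg (by positivity)]
  have hfinite : ∫⁻ x in Metric.ball (0 : E) 1, ‖x‖ₑ ^ b ∂μ ≠ ∞ := by
    refine ne_top_of_le_ne_top hint.2.ne (lintegral_mono_ae (ae_restrict_of_ae ?_))
    filter_upwards [compl_mem_ae_iff.2 (measure_singleton (0 : E))] with x (hx : x ≠ 0)
    rw [Real.enorm_of_nonneg (by positivity), ← ofReal_norm,
      ENNReal.ofReal_rpow_of_pos (norm_pos_iff.2 hx)]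
  refine ⟨(∫⁻ x in Metric.ball (0 : E) 1, ‖x‖ₑ ^ b ∂μ).toNNReal, fun R hR => ?_⟩
  rw [← smul_unitBall_of_pos hR, setLIntegral_smul_set_enorm_rpow μ measurableSet_ball b hR,
    ENNReal.coe_toNNReal hfinite, mul_comm]

theorem exists_setLIntegral_compl_ball_enorm_rpow_le {b : ℝ}
    (hb : b < -(Module.finrank ℝ E : ℝ)) :
    ∃ C : ℝ≥0, ∀ R : ℝ, 0 < R →
      ∫⁻ x in (Metric.ball 0 R)ᶜ, ‖x‖ₑ ^ b ∂μ ≤ C * ‖R‖ₑ ^ (Module.finrank ℝ E + b) := by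
  have hb0 : b < 0 := hb.trans_le (neg_nonpos.2 (Nat.cast_nonneg _))
  have hpt : ∀ x ∈ (Metric.ball (0 : E) 1)ᶜ, ‖x‖ₑ ^ b ≤
      ENNReal.ofReal (2 ^ (-b)) * ENNReal.ofReal ((1 + ‖x‖) ^ b) := by
    intro x hx
    have hx1 : 1 ≤ ‖x‖ := by simpa using hx
    have hx0 : 0 < ‖x‖ := by linarith
    rw [← ofReal_norm, ENNReal.ofReal_rpow_of_pos hx0, ← ENNReal.ofReal_mul (by positivity)]
    refine ENNReal.ofReal_le_ofReal ?_
    calc ‖x‖ ^ b = 2 ^ (-b) * (2 * ‖x‖) ^ b := by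
          rw [Real.mul_rpow zero_le_two hx0.le, ← mul_assoc, ← Real.rpow_add zero_lt_two]; simp
      _ ≤ 2 ^ (-b) * (1 + ‖x‖) ^ b := by
          gcongr ?_ * ?_
          exact Real.rpow_le_rpow_of_nonpos (by positivity) (by linarith) hb0.le
  have hfinite : ∫⁻ x in (Metric.ball (0 : E) 1)ᶜ, ‖x‖ₑ ^ b ∂μ ≠ ∞ := by
    have hjapanese := finite_integral_one_add_norm (μ := μ) (E := E) (lt_neg.1 hb)
    rw [neg_neg] at hjapanese
    refine ne_top_of_le_ne_top ?_ ((setLIntegral_mono (by fun_prop) hpt).trans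
      (setLIntegral_le_lintegral _ _))
    rw [lintegral_const_mul _ (by fun_prop)]
    exact ENNReal.mul_ne_top ENNReal.ofReal_ne_top hjapanese.ne
  refine ⟨(∫⁻ x in (Metric.ball (0 : E) 1)ᶜ, ‖x‖ₑ ^ b ∂μ).toNNReal, fun R hR => ?_⟩
  have hcompl : (Metric.ball (0 : E) R)ᶜ = R • (Metric.ball (0 : E) 1)ᶜ := by
    rw [← smul_unitBall_of_pos hR]
    exact (Set.smul_set_compl (a := Units.mk0 R hR.ne')).symm
  rw [hcompl,
    setLIntegral_smul_set_enorm_rpow μ measurableSet_ball.compl b hR,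
    ENNReal.coe_toNNReal hfinite, mul_comm]

theorem exists_eLpNorm'_compl_ball_enorm_rpow_le {r' : ℝ} (hr' : 0 < r') [Nontrivial E] :
    ∃ C : ℝ≥0, ∀ R : ℝ, 0 < R →
      eLpNorm' ((Metric.ball 0 R)ᶜ.indicator fun x : E =>
        ‖x‖ₑ ^ (-(2 * Module.finrank ℝ E / r'))) r' μ ≤
      C * ‖R‖ₑ ^ (-(Module.finrank ℝ E / r')) := by
  have hd : 0 < (Module.finrank ℝ E : ℝ) := Nat.cast_pos.2 Module.finrank_pos
  obtain ⟨C, hC⟩ := exists_setLIntegral_compl_ball_enorm_rpow_le μ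
    (b := -(2 * Module.finrank ℝ E : ℝ)) (by linarith)
  refine ⟨C ^ (1 / r'), fun R hR => ?_⟩
  have hpow : ∀ x, ‖(Metric.ball 0 R)ᶜ.indicator (fun x : E =>
      ‖x‖ₑ ^ (-(2 * Module.finrank ℝ E / r'))) x‖ₑ ^ r' =
      (Metric.ball 0 R)ᶜ.indicator (fun x => ‖x‖ₑ ^ (-(2 * Module.finrank ℝ E : ℝ))) x := by
    intro x
    by_cases hx : x ∈ Metric.ball (0 : E) R
    · simp [hx, hr']
    · simp only [Set.indicator_of_mem (Set.mem_compl hx), enorm_eq_self, ← ENNReal.rpow_mul]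
      congr 1; field_simp
  calc _ ≤ (C * ‖R‖ₑ ^ (Module.finrank ℝ E + -(2 * Module.finrank ℝ E : ℝ))) ^ (1 / r') := by
        simp only [eLpNorm', hpow]
        rw [lintegral_indicator measurableSet_ball.compl]
        exact ENNReal.rpow_le_rpow (hC R hR) (by positivity)
    _ = _ := by
        rw [ENNReal.mul_rpow_of_nonneg _ _ (by positivity), ← ENNReal.rpow_mul,
          ENNReal.coe_rpow_of_nonneg _ (by positivity)]
        congr 2; ring

theorem exists_setLIntegral_mul_enorm_sub_rpow_le_add [Nontrivial E] {r r' : ℝ} (hr' : 2 < r')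
    (hrr' : r.HolderConjugate r') :
    ∃ C : ℝ≥0, ∀ a : E → ℝ≥0∞, Measurable a → ∀ (α : ℝ≥0∞) (t : E) (R : ℝ), 0 < R →
      ∫⁻ s in {s | a s ≤ α}, a s * ‖t - s‖ₑ ^ (-(2 * Module.finrank ℝ E / r')) ∂μ ≤
        C * (α * ‖R‖ₑ ^ (Module.finrank ℝ E * (1 - 2 / r')) +
          eLpNorm' a r μ * ‖R‖ₑ ^ (-(Module.finrank ℝ E / r'))) := by
  set d := (Module.finrank ℝ E : ℝ)
  have hd0 : 0 < d := Nat.cast_pos.2 Module.finrank_pos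
  obtain ⟨C₁, hnear⟩ := exists_setLIntegral_ball_enorm_rpow_le μ (E := E) (b := -(2 * d / r'))
    (by rw [neg_lt_neg_iff, div_lt_iff₀ (by linarith)]; nlinarith)
  obtain ⟨C₂, hfar⟩ := exists_eLpNorm'_compl_ball_enorm_rpow_le μ (E := E) hrr'.symm.pos
  refine ⟨max C₁ C₂, fun a ha α t R hR => ?_⟩
  set k : E → ℝ≥0∞ := fun x => ‖x‖ₑ ^ (-(2 * d / r'))
  have hk : Measurable k := measurable_enorm.pow_const _
  have hball : MeasurableSet (Metric.ball (0 : E) R) := measurableSet_ball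
  have hsplit : ∀ s ∈ {s | a s ≤ α}, a s * k (t - s) ≤
      α * (Metric.ball 0 R).indicator k (t - s) +
        a s * (Metric.ball 0 R)ᶜ.indicator k (t - s) := by
    intro s (hs : a s ≤ α)
    by_cases hx : t - s ∈ Metric.ball 0 R
    · simpa [hx] using mul_le_mul_left hs _
    · simp [hx]
  have hnear_le : ∫⁻ s, (Metric.ball 0 R).indicator k (t - s) ∂μ ≤
      C₁ * ‖R‖ₑ ^ (d * (1 - 2 / r')) := by
    rw [lintegral_sub_left_eq_self _ t, lintegral_indicator hball]
    exact (hnear R hR).trans_eq (by congr 2; ring)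
  have hfar_le : ∫⁻ s, a s * (Metric.ball 0 R)ᶜ.indicator k (t - s) ∂μ ≤
      eLpNorm' a r μ * (C₂ * ‖R‖ₑ ^ (-(d / r'))) := by
    refine (lintegral_mul_le_eLpNorm'_mul_eLpNorm' ha.aestronglyMeasurable
      ((hk.indicator hball.compl).comp (measurable_const_sub t)).aestronglyMeasurable
      hrr').trans (mul_le_mul_right ?_ _)
    refine (le_of_eq ?_).trans (hfar R hR)
    exact congrArg (· ^ (1 / r')) (lintegral_sub_left_eq_self (μ := μ)
      (fun x => ‖(Metric.ball 0 R)ᶜ.indicator k x‖ₑ ^ r') t)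
  calc _ ≤ ∫⁻ s, (α * (Metric.ball 0 R).indicator k (t - s) +
        a s * (Metric.ball 0 R)ᶜ.indicator k (t - s)) ∂μ :=
        (setLIntegral_mono' (measurableSet_le ha measurable_const) hsplit).trans
          (setLIntegral_le_lintegral _ _)
    _ ≤ α * (C₁ * ‖R‖ₑ ^ (d * (1 - 2 / r'))) + eLpNorm' a r μ * (C₂ * ‖R‖ₑ ^ (-(d / r'))) := by
        rw [lintegral_add_left (by measurability), lintegral_const_mul _ (by measurability)]
        gcongr
    _ ≤ _ := by
        rw [mul_add, mul_left_comm, mul_left_comm (eLpNorm' a r μ)]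
        gcongr
        · exact le_max_left _ _
        · exact le_max_right _ _

theorem exists_setLIntegral_mul_enorm_sub_rpow_le [Nontrivial E] {r r' : ℝ} (hr' : 2 < r')
    (hrr' : r.HolderConjugate r') :
    ∃ C : ℝ≥0, ∀ a : E → ℝ≥0∞, Measurable a → eLpNorm' a r μ ≠ 0 → eLpNorm' a r μ ≠ ∞ →
      ∀ (α : ℝ≥0∞) (t : E), α ≠ 0 → α ≠ ∞ →
      ∫⁻ s in {s | a s ≤ α}, a s * ‖t - s‖ₑ ^ (-(2 * Module.finrank ℝ E / r')) ∂μ ≤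
        C * (α ^ (r - 1) * eLpNorm' a r μ ^ (2 - r)) := by
  obtain ⟨C, hC⟩ := exists_setLIntegral_mul_enorm_sub_rpow_le_add μ (E := E) hr' hrr'
  refine ⟨C * 2, fun a ha hn0 hntop α t hα0 hαtop => ?_⟩
  obtain ⟨R, hR, hnear, hfar⟩ := exists_mul_enorm_rpow_eq hn0 hntop hα0 hαtop
    (Nat.cast_pos.2 (Module.finrank_pos (R := ℝ) (M := E))) hrr'
  refine (hC a ha α t R hR).trans_eq ?_
  rw [hnear, hfar, ENNReal.coe_mul, ENNReal.coe_ofNat]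
  ring

end HomogeneousKernel

section HardyLittlewoodSobolev

theorem lintegral_lintegral_le_two_mul_of_symm {X : Type*} [MeasurableSpace X] {μ : Measure X}
    [SFinite μ] {K : X → X → ℝ≥0∞} (hK : Measurable (Function.uncurry K))
    (hsymm : ∀ t s, K t s = K s t) {a : X → ℝ≥0∞} (ha : Measurable a) :
    ∫⁻ t, ∫⁻ s, K t s ∂μ ∂μ ≤ 2 * ∫⁻ t, ∫⁻ s in {s | a s ≤ a t}, K t s ∂μ ∂μ := by
  set L : X → X → ℝ≥0∞ := fun t => {s | a s ≤ a t}.indicator (K t)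
  have hL : Measurable (Function.uncurry L) :=
    hK.indicator (measurableSet_le (ha.comp measurable_snd) (ha.comp measurable_fst))
  have hle : ∀ t s, K t s ≤ L t s + L s t := fun t s => by
    obtain h | h := le_total (a s) (a t) <;> simp [L, h, hsymm s t]
  calc ∫⁻ t, ∫⁻ s, K t s ∂μ ∂μ ≤ ∫⁻ t, ∫⁻ s, (L t s + L s t) ∂μ ∂μ :=
        lintegral_mono fun t => lintegral_mono (hle t)
    _ = ∫⁻ t, ∫⁻ s, L t s ∂μ ∂μ + ∫⁻ t, ∫⁻ s, L s t ∂μ ∂μ := by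
        refine Eq.trans ?_ (lintegral_add_left hL.lintegral_prod_right' _)
        exact lintegral_congr fun t => lintegral_add_left (hL.comp measurable_prodMk_left) _
    _ = 2 * ∫⁻ t, ∫⁻ s, L t s ∂μ ∂μ := by
        rw [lintegral_lintegral_swap (f := fun t s => L s t)
          (hL.comp measurable_swap).aemeasurable, two_mul]
    _ = _ := by
        simp only [L, lintegral_indicator (measurableSet_le ha measurable_const)]

variable {E : Type*} [NormedAddCommGroup E] [NormedSpace ℝ E] [FiniteDimensional ℝ E]
  [MeasurableSpace E] [BorelSpace E] (μ : Measure E) [μ.IsAddHaarMeasure]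

theorem hardyLittlewoodSobolev [Nontrivial E] {r r' : ℝ} (hr' : 2 < r')
    (hrr' : r.HolderConjugate r') :
    ∃ C : ℝ≥0, ∀ a : E → ℝ≥0∞, Measurable a →
      ∫⁻ t, ∫⁻ s, a t * (a s * ‖t - s‖ₑ ^ (-(2 * Module.finrank ℝ E / r'))) ∂μ ∂μ ≤
        C * eLpNorm' a r μ ^ 2 := by
  obtain ⟨C, hC⟩ := exists_setLIntegral_mul_enorm_sub_rpow_le μ (E := E) hr' hrr'
  refine ⟨2 * C + 1, fun a ha => ?_⟩
  have hpotential := hC a ha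
  have hpow := lintegral_rpow_eq_eLpNorm'_rpow μ a hrr'.pos
  set n := eLpNorm' a r μ
  obtain hntop | hntop := eq_or_ne n ∞
  · simp [hntop]
  have ha_ae : ∀ᵐ t ∂μ, a t < ∞ := by
    have hfin : ∫⁻ t, a t ^ r ∂μ ≠ ∞ := hpow ▸ ENNReal.rpow_ne_top_of_nonneg hrr'.nonneg hntop
    filter_upwards [ae_lt_top (ha.pow_const r) hfin] with t ht
    exact (ENNReal.rpow_lt_top_iff_of_pos hrr'.pos).1 ht
  have ha_zero : ∀ᵐ t ∂μ, n = 0 → a t = 0 := eventually_imp_distrib_left.2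
    (eLpNorm'_eq_zero_iff hrr'.pos ha.aestronglyMeasurable).1
  have hslice : ∀ᵐ t ∂μ,
      ∫⁻ s in {s | a s ≤ a t}, a t * (a s * ‖t - s‖ₑ ^ (-(2 * Module.finrank ℝ E / r'))) ∂μ ≤
        C * n ^ (2 - r) * a t ^ r := by
    filter_upwards [ha_ae, ha_zero] with t ht hzero
    obtain ht0 | ht0 := eq_or_ne (a t) 0
    · simp [ht0]
    rw [lintegral_const_mul' _ _ ht.ne]
    grw [hpotential (mt hzero ht0) hntop (a t) t ht0 ht.ne, ← mul_rpow_sub_one (a t) hrr'.lt.le]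
    exact le_of_eq (by ring)
  have hk : Measurable fun z : E × E => ‖z.1 - z.2‖ₑ ^ (-(2 * Module.finrank ℝ E / r')) :=
    (measurable_fst.sub measurable_snd).enorm.pow_const _
  calc _ ≤ 2 * ∫⁻ t, ∫⁻ s in {s | a s ≤ a t},
        a t * (a s * ‖t - s‖ₑ ^ (-(2 * Module.finrank ℝ E / r'))) ∂μ ∂μ := by
        refine lintegral_lintegral_le_two_mul_of_symm
          ((ha.comp measurable_fst).mul ((ha.comp measurable_snd).mul hk)) (fun t s => ?_) ha
        rw [← enorm_neg, neg_sub, mul_left_comm]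
    _ ≤ 2 * ∫⁻ t, C * n ^ (2 - r) * a t ^ r ∂μ := mul_le_mul_right (lintegral_mono_ae hslice) _
    _ = 2 * C * (n ^ (2 - r) * n ^ r) := by
        rw [lintegral_const_mul _ (ha.pow_const r), hpow]; ring
    _ ≤ _ := by
        rw [rpow_mul_rpow_of_ne_top hntop hrr'.pos (by simp), sub_add_cancel, ENNReal.rpow_two]
        gcongr
        exact_mod_cast le_self_add

end HardyLittlewoodSobolev

section Fourier

variable {V F : Type*} [NormedAddCommGroup V] [InnerProductSpace ℝ V] [FiniteDimensional ℝ V]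
  [MeasurableSpace V] [BorelSpace V]

section Plancherel

variable [NormedAddCommGroup F] [InnerProductSpace ℂ F] [CompleteSpace F] {g : V → F}

theorem fourier_toLp_ae_eq (hg : Integrable g) (hg2 : MemLp g 2) :
    ⇑(𝓕 (hg2.toLp g) : Lp F 2) =ᵐ[volume] 𝓕 g := by
  refine ae_eq_of_integral_contDiff_smul_eq ((Lp.memLp _).locallyIntegrable one_le_two)
    (VectorFourier.fourierIntegral_continuous Real.continuous_fourierChar
      continuous_inner hg).locallyIntegrable fun φ hφ hφc => ?_
  have hψc : HasCompactSupport fun x => (φ x : ℂ) := hφc.comp_left Complex.ofReal_zero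
  set ψ : SchwartzMap V ℂ :=
    hψc.toSchwartzMap (Complex.ofRealCLM.contDiff.comp hφ)
  have hψ : ∀ x, ψ x = φ x := fun x => rfl
  calc ∫ x, φ x • (𝓕 (hg2.toLp g) : Lp F 2 volume) x
      = ∫ x, ψ x • (𝓕 (hg2.toLp g) : Lp F 2 volume) x := by simp only [hψ, Complex.coe_smul]
    _ = ∫ x, 𝓕 ψ x • hg2.toLp g x := by
        rw [← Lp.toTemperedDistribution_apply, ← Lp.fourier_toTemperedDistribution_eq,
          TemperedDistribution.fourier_apply, Lp.toTemperedDistribution_apply]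
    _ = ∫ x, 𝓕 ψ x • g x :=
        integral_congr_ae (hg2.coeFn_toLp.mono fun x hx => congrArg (𝓕 ψ x • ·) hx)
    _ = ∫ x, ψ x • 𝓕 g x := by
        simp only [SchwartzMap.fourier_coe]
        simpa only [flip_innerₗ] using!
          VectorFourier.integral_fourierIntegral_smul_eq_flip (L := innerₗ V)
            Real.continuous_fourierChar continuous_inner ψ.integrable hg
    _ = ∫ x, φ x • 𝓕 g x := by simp only [hψ, Complex.coe_smul]

theorem lintegral_enorm_fourier_sq_le (hg : Integrable g) :
    ∫⁻ ξ, ‖𝓕 g ξ‖ₑ ^ 2 ≤ ∫⁻ x, ‖g x‖ₑ ^ 2 := by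
  have hsq : ∀ f : V → F, eLpNorm f 2 volume ^ 2 = ∫⁻ x, ‖f x‖ₑ ^ 2 := fun f => by
    simpa using eLpNorm_nnreal_pow_eq_lintegral (f := f) (μ := volume) (p := 2) two_ne_zero
  rw [← hsq, ← hsq]
  rcases eq_or_ne (eLpNorm g 2 volume) ∞ with htop | htop
  · simp [htop]
  have hg2 : MemLp g 2 := ⟨hg.aestronglyMeasurable, htop.lt_top⟩
  rw [← eLpNorm_congr_ae (fourier_toLp_ae_eq hg hg2), ← eLpNorm_congr_ae hg2.coeFn_toLp,
    ← Lp.enorm_def, ← Lp.enorm_def, ← ofReal_norm, ← ofReal_norm, Lp.norm_fourier_eq]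

theorem lintegral_enorm_fourierInv_sq_le (hg : Integrable g) :
    ∫⁻ x, ‖𝓕⁻ g x‖ₑ ^ 2 ≤ ∫⁻ ξ, ‖g ξ‖ₑ ^ 2 := by
  simp only [Real.fourierInv_eq_fourier_neg]
  exact (lintegral_neg_eq_self fun ξ => ‖𝓕 g ξ‖ₑ ^ 2).trans_le
    (lintegral_enorm_fourier_sq_le hg)

end Plancherel

section Sobolev

theorem continuous_fourierInv {g : V → ℂ} (hg : Integrable g) : Continuous (𝓕⁻ g) :=
  VectorFourier.fourierIntegral_continuous Real.continuous_fourierChar continuous_inner.neg hg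

theorem enorm_fourierInv_le (g : V → ℂ) (x : V) : ‖𝓕⁻ g x‖ₑ ≤ ∫⁻ ξ, ‖g ξ‖ₑ := by
  rw [Real.fourierInv_eq]
  refine (enorm_integral_le_lintegral_enorm _).trans_eq ?_
  simp only [← ofReal_norm, Circle.norm_smul]

theorem isL2ContractionOfL1Bound_fourierInv :
    IsL2ContractionOfL1Bound (𝓕⁻ : (V → ℂ) → V → ℂ) volume volume 1 where
  measurable _ hg := (continuous_fourierInv hg).measurable
  map_add _ _ hg hh :=
    VectorFourier.fourierIntegral_add Real.continuous_fourierChar continuous_inner.neg hg hh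
  enorm_le g _ x := by simpa using enorm_fourierInv_le g x
  lintegral_sq_le _ hg := lintegral_enorm_fourierInv_sq_le hg

variable {g : V → ℂ} {q : ℝ}

theorem lintegral_enorm_fourierInv_rpow_le_of_setLIntegral_ball_le (hq : 2 < q)
    (hgm : Measurable g) (hg : Integrable g) {γ : ℝ} (hγ : 0 < γ) {M : ℝ≥0} (hM : M ≠ 0)
    (hball : ∀ R : ℝ, 0 < R → ∫⁻ ξ in Metric.ball 0 R, ‖g ξ‖ₑ ≤ M * ‖R‖ₑ ^ γ) :
    ∫⁻ x, ‖𝓕⁻ g x‖ₑ ^ q ≤ ENNReal.ofReal (q / (q - 2)) * (4 : ℝ≥0) *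
      (ENNReal.ofReal (2 ^ (q - 2)) * M ^ (q - 2) * ∫⁻ ξ, ‖g ξ‖ₑ ^ 2 * ‖ξ‖ₑ ^ (γ * (q - 2))) := by
  have hq2 : 0 < q - 2 := sub_pos.2 hq
  have hM0 : 0 < (M : ℝ) := NNReal.coe_pos.2 (pos_iff_ne_zero.2 hM)
  refine (isL2ContractionOfL1Bound_fourierInv.lintegral_rpow_le hq hgm hg
    (φ := fun ξ => 2 * M * ‖ξ‖ ^ γ) (fun ξ => by positivity) (by fun_prop) fun t ht => ?_).trans_eq
      ?_
  · set R := (t / (2 * M)) ^ γ⁻¹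
    have hR0 : 0 < R := by positivity
    have hRγ : R ^ γ = t / (2 * M) := Real.rpow_inv_rpow (by positivity) hγ.ne'
    have hset : {ξ : V | 2 * M * ‖ξ‖ ^ γ < t} = Metric.ball 0 R := by
      ext ξ
      rw [Set.mem_ofPred_eq, mem_ball_zero_iff, ← Real.rpow_lt_rpow_iff (norm_nonneg _) hR0.le hγ,
        hRγ, lt_div_iff₀' (by positivity)]
    rw [hset, ENNReal.coe_one, one_mul]
    refine (hball R hR0).trans_eq ?_
    rw [Real.enorm_of_nonneg hR0.le, ENNReal.ofReal_rpow_of_pos hR0, hRγ,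
      ← ENNReal.ofReal_coe_nnreal, ← ENNReal.ofReal_mul hM0.le]
    congr 1
    field_simp
  · refine congrArg _ ?_
    rw [← lintegral_const_mul _ (by fun_prop)]
    refine lintegral_congr fun ξ => ?_
    rw [Real.mul_rpow (by positivity) (by positivity), Real.mul_rpow zero_le_two hM0.le,
      ← Real.rpow_mul (norm_nonneg ξ), ENNReal.ofReal_mul (by positivity),
      ENNReal.ofReal_mul (by positivity), ← ENNReal.ofReal_rpow_of_pos hM0,
      ENNReal.ofReal_coe_nnreal, ← ENNReal.ofReal_rpow_of_nonneg (norm_nonneg ξ) (by positivity),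
      ofReal_norm]
    ring

theorem exists_setLIntegral_ball_enorm_le [Nontrivial V] {s : ℝ}
    (hs : 2 * s < Module.finrank ℝ V) :
    ∃ C : ℝ≥0, ∀ g : V → ℂ, Measurable g → ∀ R : ℝ, 0 < R →
      ∫⁻ ξ in Metric.ball 0 R, ‖g ξ‖ₑ ≤ C * eLpNorm' (fun ξ => ‖ξ‖ₑ ^ s * ‖g ξ‖ₑ) 2 volume *
        ‖R‖ₑ ^ (Module.finrank ℝ V / 2 - s) := by
  obtain ⟨C, hC⟩ := exists_setLIntegral_ball_enorm_rpow_le (volume : Measure V)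
    (b := -(2 * s)) (neg_lt_neg hs)
  refine ⟨C ^ (1 / 2 : ℝ), fun g hg R hR => ?_⟩
  have hweight : eLpNorm' (fun ξ : V => ‖ξ‖ₑ ^ (-s)) 2 (volume.restrict (Metric.ball 0 R)) ≤
      (C ^ (1 / 2 : ℝ) : ℝ≥0) * ‖R‖ₑ ^ (Module.finrank ℝ V / 2 - s) := by
    simp only [eLpNorm', enorm_eq_self, ← ENNReal.rpow_mul]
    rw [show -s * 2 = -(2 * s) by ring]
    grw [hC R hR]
    rw [ENNReal.mul_rpow_of_nonneg _ _ (by positivity), ← ENNReal.rpow_mul,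
      ENNReal.coe_rpow_of_nonneg _ (by positivity)]
    ring_nf
    rfl
  calc ∫⁻ ξ in Metric.ball 0 R, ‖g ξ‖ₑ
      = ∫⁻ ξ in Metric.ball 0 R, ‖ξ‖ₑ ^ (-s) * (‖ξ‖ₑ ^ s * ‖g ξ‖ₑ) := by
        refine lintegral_congr_ae (ae_restrict_of_ae ?_)
        filter_upwards [compl_mem_ae_iff.2 (measure_singleton (0 : V))] with ξ (hξ : ξ ≠ 0)
        rw [← mul_assoc, ← ENNReal.rpow_add _ _ (enorm_ne_zero.2 hξ) enorm_ne_top,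
          neg_add_cancel, ENNReal.rpow_zero, one_mul]
    _ ≤ eLpNorm' (fun ξ : V => ‖ξ‖ₑ ^ (-s)) 2 (volume.restrict (Metric.ball 0 R)) *
          eLpNorm' (fun ξ => ‖ξ‖ₑ ^ s * ‖g ξ‖ₑ) 2 (volume.restrict (Metric.ball 0 R)) :=
        lintegral_mul_le_eLpNorm'_mul_eLpNorm' (f := fun ξ : V => ‖ξ‖ₑ ^ (-s))
          (g := fun ξ => ‖ξ‖ₑ ^ s * ‖g ξ‖ₑ) (by fun_prop)
          (Measurable.aestronglyMeasurable (by fun_prop)) Real.HolderConjugate.two_two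
    _ ≤ _ := by
        grw [hweight, eLpNorm'_mono_measure _ Measure.restrict_le_self zero_le_two]
        exact le_of_eq (by ring)

theorem lintegral_enorm_sq_mul_enorm_rpow (g : V → ℂ) (s : ℝ) :
    ∫⁻ ξ, ‖g ξ‖ₑ ^ 2 * ‖ξ‖ₑ ^ (s * 2) =
      eLpNorm' (fun ξ => ‖ξ‖ₑ ^ s * ‖g ξ‖ₑ) 2 volume ^ 2 := by
  rw [← ENNReal.rpow_two, ← lintegral_rpow_eq_eLpNorm'_rpow _ _ zero_lt_two]
  refine lintegral_congr fun ξ => ?_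
  rw [ENNReal.mul_rpow_of_nonneg _ _ zero_le_two, ← ENNReal.rpow_mul, ENNReal.rpow_two, mul_comm]

theorem exists_lintegral_enorm_fourierInv_rpow_le [Nontrivial V] (hq : 2 < q) :
    ∃ C : ℝ≥0, ∀ g : V → ℂ, Measurable g → Integrable g → ∫⁻ x, ‖𝓕⁻ g x‖ₑ ^ q ≤
      C * eLpNorm' (fun ξ => ‖ξ‖ₑ ^ (Module.finrank ℝ V * (1 / 2 - 1 / q)) * ‖g ξ‖ₑ) 2
        volume ^ q := by
  have hq0 : 0 < q := by linarith
  have hq2 : 0 < q - 2 := sub_pos.2 hq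
  have hd0 : 0 < (Module.finrank ℝ V : ℝ) := Nat.cast_pos.2 Module.finrank_pos
  set d := (Module.finrank ℝ V : ℝ)
  set s := d * (1 / 2 - 1 / q) with hs
  have hds : d / 2 - s = d / q := by rw [hs]; ring
  have hdq : 0 < d / q := div_pos hd0 hq0
  obtain ⟨c, hc⟩ := exists_setLIntegral_ball_enorm_le (V := V) (s := s) (by linarith)
  set A : ℝ≥0 := Real.toNNReal (q / (q - 2)) * 4 * Real.toNNReal (2 ^ (q - 2)) with hA
  have hA0 : A ≠ 0 := by positivity
  refine ⟨A * (c + 1) ^ (q - 2), fun g hgm hg => ?_⟩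
  have hNsq := lintegral_enorm_sq_mul_enorm_rpow g s
  rw [show s * 2 = d / q * (q - 2) by rw [hs]; field_simp] at hNsq
  have hball := hc g hgm
  generalize eLpNorm' (fun ξ => ‖ξ‖ₑ ^ s * ‖g ξ‖ₑ) 2 volume = N at hNsq hball ⊢
  have hrefined : ∀ M : ℝ≥0, M ≠ 0 → c * N ≤ M →
      ∫⁻ x, ‖𝓕⁻ g x‖ₑ ^ q ≤ A * M ^ (q - 2) * N ^ 2 := fun M hM hNM => by
    refine (lintegral_enorm_fourierInv_rpow_le_of_setLIntegral_ball_le hq hgm hg hdq hM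
      fun R hR => ?_).trans_eq ?_
    · grw [hball R hR, hds, hNM]
    · rw [hNsq, hA]
      push_cast [ENNReal.ofReal]
      ring
  rcases eq_or_ne N 0 with rfl | hN0
  · simpa [hq0] using hrefined 1 one_ne_zero (by simp)
  induction N with
  | top => simp [ENNReal.top_rpow_of_pos hq0, hA0]
  | coe N =>
    have hN : N ≠ 0 := by simpa using hN0
    refine (hrefined ((c + 1) * N) (by positivity) (by norm_cast; gcongr; simp)).trans_eq ?_
    rw [← ENNReal.coe_rpow_of_nonneg _ hq2.le, ← ENNReal.coe_rpow_of_nonneg _ hq0.le]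
    norm_cast
    rw [NNReal.mul_rpow, NNReal.rpow_sub hN, NNReal.rpow_two]
    field_simp

theorem exists_eLpNorm'_fourierInv_le [Nontrivial V] (hq : 2 < q) :
    ∃ C : ℝ≥0, ∀ g : V → ℂ, Measurable g → Integrable g → eLpNorm' (𝓕⁻ g) q volume ≤
      C * eLpNorm' (fun ξ => ‖ξ‖ₑ ^ (Module.finrank ℝ V * (1 / 2 - 1 / q)) * ‖g ξ‖ₑ) 2 volume := by
  have hq0 : 0 < q := by linarith
  obtain ⟨C, hC⟩ := exists_lintegral_enorm_fourierInv_rpow_le (V := V) hq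
  refine ⟨C ^ (1 / q), fun g hgm hg => ?_⟩
  refine (ENNReal.rpow_le_rpow (hC g hgm hg) (by positivity)).trans_eq ?_
  rw [ENNReal.mul_rpow_of_nonneg _ _ (by positivity), one_div, ENNReal.rpow_rpow_inv hq0.ne',
    ENNReal.coe_rpow_of_nonneg _ (by positivity)]

end Sobolev

end Fourier

section TTStar

variable {S X : Type*} [MeasurableSpace S] [MeasurableSpace X]

theorem lintegral_enorm_sq_eq_enorm_integral_mul_conj {ν : Measure X} {f : X → ℂ}
    (hf : Integrable (fun x => ‖f x‖ ^ 2) ν) :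
    ∫⁻ x, ‖f x‖ₑ ^ 2 ∂ν = ‖∫ x, f x * (starRingEnd ℂ) (f x) ∂ν‖ₑ := by
  have hsq : ∀ x, f x * (starRingEnd ℂ) (f x) = ((‖f x‖ ^ 2 : ℝ) : ℂ) := fun x => by
    rw [Complex.mul_conj, Complex.normSq_eq_norm_sq]
  have h0 : ∀ x, 0 ≤ ‖f x‖ ^ 2 := fun x => by positivity
  simp only [hsq]
  rw [enorm_integral_ofReal hf h0]
  simp only [ENNReal.ofReal_pow (norm_nonneg _), ofReal_norm]

theorem lintegral_enorm_integral_sq_le {μ : Measure S} [SFinite μ] {ν : Measure X} [SFinite ν]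
    {A : S → X → ℂ} (hA : StronglyMeasurable (Function.uncurry A)) {b : S → ℝ} {G : X → ℝ}
    (hb : Integrable b μ) (hG : Integrable (fun x => G x ^ 2) ν)
    (hAb : ∀ s x, ‖A s x‖ ≤ b s * G x) :
    ∫⁻ x, ‖∫ s, A s x ∂μ‖ₑ ^ 2 ∂ν ≤
      ∫⁻ s, ∫⁻ s', ‖∫ x, A s x * (starRingEnd ℂ) (A s' x) ∂ν‖ₑ ∂μ ∂μ := by
  have hkernel : StronglyMeasurable fun z : X × S × S =>
      A z.2.1 z.1 * (starRingEnd ℂ) (A z.2.2 z.1) :=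
    (hA.comp_measurable (by fun_prop : Measurable fun z : X × S × S => (z.2.1, z.1))).mul
      (Complex.continuous_conj.comp_stronglyMeasurable
        (hA.comp_measurable (by fun_prop : Measurable fun z : X × S × S => (z.2.2, z.1))))
  have hmean : StronglyMeasurable fun x => ∫ s, A s x ∂μ := hA.integral_prod_left
  have hmean_sq : Integrable (fun x => ‖∫ s, A s x ∂μ‖ ^ 2) ν := by
    refine (hG.const_mul ((∫ s, b s ∂μ) ^ 2)).mono' (hmean.norm.pow 2).aestronglyMeasurable
      (ae_of_all _ fun x => ?_)
    rw [norm_pow, norm_norm, ← mul_pow, ← integral_mul_const]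
    gcongr
    exact norm_integral_le_of_norm_le (hb.mul_const _) (ae_of_all _ fun s => hAb s x)
  have hintegrable : Integrable (fun z : X × S × S =>
      A z.2.1 z.1 * (starRingEnd ℂ) (A z.2.2 z.1)) (ν.prod (μ.prod μ)) := by
    refine (hG.mul_prod (hb.mul_prod hb)).mono' hkernel.aestronglyMeasurable
      (ae_of_all _ fun z => ?_)
    calc ‖A z.2.1 z.1 * (starRingEnd ℂ) (A z.2.2 z.1)‖
        ≤ b z.2.1 * G z.1 * (b z.2.2 * G z.1) := by
          rw [norm_mul, RCLike.norm_conj]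
          exact mul_le_mul (hAb _ _) (hAb _ _) (norm_nonneg _) ((norm_nonneg _).trans (hAb _ _))
      _ = G z.1 ^ 2 * (b z.2.1 * b z.2.2) := by ring
  rw [lintegral_enorm_sq_eq_enorm_integral_mul_conj hmean_sq]
  simp only [← integral_conj, ← integral_prod_mul]
  rw [integral_integral_swap hintegrable]
  exact (enorm_integral_le_lintegral_enorm _).trans_eq
    (lintegral_prod _ hkernel.integral_prod_left.enorm.aemeasurable)

end TTStar

theorem norm_cexp_neg_mul_norm_sq {W : Type*} [NormedAddCommGroup W] (z : ℂ) (η : W) :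
    ‖Complex.exp (-z * ‖η‖ ^ 2)‖ = Real.exp (-z.re * ‖η‖ ^ 2) := by
  rw [Complex.norm_exp, ← Complex.ofReal_pow, Complex.re_mul_ofReal, Complex.neg_re]

theorem norm_cexp_neg_mul_norm_sq_le_one {W : Type*} [NormedAddCommGroup W] {z : ℂ}
    (hz : 0 ≤ z.re) (η : W) : ‖Complex.exp (-z * ‖η‖ ^ 2)‖ ≤ 1 := by
  rw [norm_cexp_neg_mul_norm_sq, Real.exp_le_one_iff]
  nlinarith [sq_nonneg ‖η‖]

theorem norm_cexp_neg_I_mul_mul_norm_sq {W : Type*} [NormedAddCommGroup W] (t : ℝ) (η : W) :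
    ‖Complex.exp (-(Complex.I * t) * ‖η‖ ^ 2)‖ = 1 := by
  rw [norm_cexp_neg_mul_norm_sq]
  simp

theorem enorm_pi_div_rpow_le {ε τ θ : ℝ} (hε : 0 < ε) (hθ : 0 < θ) :
    ‖(π / (ε + Complex.I * τ) : ℂ)‖ₑ ^ θ ≤ ‖π‖ₑ ^ θ * ‖τ‖ₑ ^ (-θ) := by
  have hz0 : (ε + Complex.I * τ : ℂ) ≠ 0 := fun h => hε.ne' (by simpa using congrArg Complex.re h)
  have hτ : ‖τ‖ₑ ≤ ‖(ε + Complex.I * τ : ℂ)‖ₑ :=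
    enorm_le_iff_norm_le.2 (by simpa using Complex.abs_im_le_norm (ε + Complex.I * τ))
  rw [div_eq_mul_inv, enorm_mul, enorm_inv hz0, ENNReal.rpow_neg, ← ENNReal.inv_rpow,
    ENNReal.mul_rpow_of_nonneg _ _ hθ.le]
  have hπ : ‖(π : ℂ)‖ₑ = ‖π‖ₑ := by simp [← ofReal_norm]
  rw [hπ]
  gcongr

section Schrodinger

variable {V : Type*} [NormedAddCommGroup V] [InnerProductSpace ℝ V] [FiniteDimensional ℝ V]
  [MeasurableSpace V] [BorelSpace V]

theorem lintegral_le_of_gaussian_mul_le {h : V → ℝ≥0∞} (hh : Measurable h) {M : ℝ≥0∞}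
    (hM : ∀ ε : ℝ, 0 < ε → ∫⁻ η, ENNReal.ofReal (Real.exp (-ε * ‖η‖ ^ 2)) * h η ≤ M) :
    ∫⁻ η, h η ≤ M := by
  set ε : ℕ → ℝ := fun n => 1 / (n + 1)
  have hlim : ∀ η, Tendsto (fun n => ENNReal.ofReal (Real.exp (-ε n * ‖η‖ ^ 2)) * h η) atTop
      (nhds (h η)) := fun η => by
    have hexp : Tendsto (fun n => Real.exp (-ε n * ‖η‖ ^ 2)) atTop (nhds 1) := by
      simpa [ε] using (tendsto_one_div_add_atTop_nhds_zero_nat.neg.mul_const (‖η‖ ^ 2)).rexp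
    simpa using ENNReal.Tendsto.mul_const (b := h η) (ENNReal.tendsto_ofReal hexp) (by simp)
  calc ∫⁻ η, h η
      = ∫⁻ η, liminf (fun n => ENNReal.ofReal (Real.exp (-ε n * ‖η‖ ^ 2)) * h η) atTop := by
        simp only [(hlim _).liminf_eq]
    _ ≤ liminf (fun n => ∫⁻ η, ENNReal.ofReal (Real.exp (-ε n * ‖η‖ ^ 2)) * h η) atTop :=
        lintegral_liminf_le fun n => by fun_prop
    _ ≤ M := liminf_le_of_le (by isBoundedDefault) fun c hc =>
        let ⟨n, hn⟩ := hc.exists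
        hn.trans (hM (ε n) Nat.one_div_pos_of_nat)

theorem integral_fourier_mul {f g : V → ℂ} (hf : Integrable f) (hg : Integrable g) :
    ∫ ξ, 𝓕 f ξ * g ξ = ∫ x, f x * 𝓕 g x := by
  simpa only [flip_innerₗ] using! VectorFourier.integral_fourierIntegral_smul_eq_flip
    (L := innerₗ V) Real.continuous_fourierChar continuous_inner hf hg

theorem integral_fourierInv_mul {f g : V → ℂ} (hf : Integrable f) (hg : Integrable g) :
    ∫ ξ, 𝓕⁻ f ξ * g ξ = ∫ x, f x * 𝓕⁻ g x := by
  have h := integral_fourier_mul hf hg.comp_neg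
  rw [← integral_neg_eq_self] at h
  simpa only [Real.fourierInv_eq_fourier_neg f, Real.fourierInv_eq_fourier_comp_neg g, neg_neg]
    using h

theorem conj_fourierInv (f : V → ℂ) (ξ : V) :
    (starRingEnd ℂ) (𝓕⁻ f ξ) = 𝓕 (fun x => (starRingEnd ℂ) (f x)) ξ := by
  rw [Real.fourierInv_eq, Real.fourier_eq, ← integral_conj]
  congr 1 with x
  simp [Circle.smul_def, ← Circle.coe_inv_eq_conj, AddChar.map_neg_eq_inv]

theorem integrable_cexp_neg_mul_norm_sq {z : ℂ} (hz : 0 < z.re) :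
    Integrable fun η : V => Complex.exp (-z * ‖η‖ ^ 2) := by
  simpa using GaussianFourier.integrable_cexp_neg_mul_sq_norm_add hz 0 (0 : V)

theorem integrable_cexp_neg_mul_norm_sq_mul {z : ℂ} (hz : 0 ≤ z.re) {g : V → ℂ}
    (hg : Integrable g) : Integrable fun η : V => Complex.exp (-z * ‖η‖ ^ 2) * g η :=
  hg.bdd_mul (c := 1) (Continuous.aestronglyMeasurable (by fun_prop))
    (ae_of_all _ (norm_cexp_neg_mul_norm_sq_le_one hz))

/-- The Fourier multiplier with symbol `exp (-z ‖η‖ ^ 2)`. For `z = ε + i t` it is the Schrödinger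
propagator at time `t` damped by the heat flow at time `ε`. -/
def gaussianMultiplier (z : ℂ) (f : V → ℂ) : V → ℂ :=
  𝓕⁻ fun η => Complex.exp (-z * ‖η‖ ^ 2) * 𝓕 f η

theorem integrable_gaussianMultiplier_symbol {z : ℂ} (hz : 0 < z.re) {f : V → ℂ}
    (hf : Integrable f) : Integrable fun η : V => Complex.exp (-z * ‖η‖ ^ 2) * 𝓕 f η :=
  (integrable_cexp_neg_mul_norm_sq hz).mul_bdd (c := ∫ x, ‖f x‖)
    (VectorFourier.fourierIntegral_continuous Real.continuous_fourierChar
      continuous_inner hf).aestronglyMeasurable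
    (ae_of_all _ (VectorFourier.norm_fourierIntegral_le_integral_norm 𝐞 volume (innerₗ V) f))

theorem gaussianMultiplier_eq_integral {z : ℂ} (hz : 0 < z.re) {f : V → ℂ} (hf : Integrable f)
    (y : V) : gaussianMultiplier z f y = ∫ x, f x *
      ((π / z) ^ (Module.finrank ℝ V / 2 : ℂ) * Complex.exp (-π ^ 2 * ‖y - x‖ ^ 2 / z)) := by
  have hmod : Integrable fun η : V =>
      Complex.exp (-z * ‖η‖ ^ 2 + 2 * π * Complex.I * inner ℝ y η) :=
    GaussianFourier.integrable_cexp_neg_mul_sq_norm_add hz _ y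
  calc gaussianMultiplier z f y
      = ∫ η, 𝓕 f η * Complex.exp (-z * ‖η‖ ^ 2 + 2 * π * Complex.I * inner ℝ y η) := by
        rw [gaussianMultiplier, Real.fourierInv_eq']
        congr 1 with η
        rw [real_inner_comm, Complex.exp_add]
        push_cast
        simp only [smul_eq_mul]
        ring_nf
    _ = _ := by
        rw [integral_fourier_mul hf hmod]
        simp only [fourier_gaussian_innerProductSpace' hz]

theorem enorm_gaussianMultiplier_le {z : ℂ} (hz : 0 < z.re) {f : V → ℂ} (hf : Integrable f)
    (y : V) : ‖gaussianMultiplier z f y‖ₑ ≤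
      ((‖(π / z : ℂ)‖₊ ^ (Module.finrank ℝ V / 2 : ℝ) : ℝ≥0) : ℝ≥0∞) * ∫⁻ x, ‖f x‖ₑ := by
  have hexp : ∀ x, ‖Complex.exp (-π ^ 2 * ‖y - x‖ ^ 2 / z)‖₊ ≤ 1 := fun x => by
    have hre : (0 : ℝ) ≤ (π ^ 2 / z : ℂ).re := by
      rw [← Complex.ofReal_pow, div_eq_mul_inv, Complex.re_ofReal_mul, Complex.inv_re]
      exact mul_nonneg (sq_nonneg _) (div_nonneg hz.le (Complex.normSq_nonneg z))
    have := norm_cexp_neg_mul_norm_sq_le_one hre (y - x)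
    rwa [neg_mul, div_mul_eq_mul_div, ← neg_div, ← neg_mul] at this
  rw [gaussianMultiplier_eq_integral hz hf, ← lintegral_const_mul' _ _ ENNReal.coe_ne_top]
  refine (enorm_integral_le_lintegral_enorm _).trans (lintegral_mono fun x => ?_)
  have hpow : ‖((π / z) ^ (Module.finrank ℝ V / 2 : ℂ) : ℂ)‖₊ =
      ‖(π / z : ℂ)‖₊ ^ (Module.finrank ℝ V / 2 : ℝ) := by
    ext
    push_cast
    rw [← Complex.norm_cpow_real]
    push_cast
    rfl
  rw [mul_comm, enorm_eq_nnnorm, enorm_eq_nnnorm, nnnorm_mul, nnnorm_mul, hpow,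
    ← ENNReal.coe_mul, ENNReal.coe_le_coe]
  gcongr
  exact mul_le_of_le_one_right' (hexp x)

theorem isL2ContractionOfL1Bound_gaussianMultiplier {z : ℂ} (hz : 0 < z.re) :
    IsL2ContractionOfL1Bound (gaussianMultiplier (V := V) z) volume volume
      (‖(π / z : ℂ)‖₊ ^ (Module.finrank ℝ V / 2 : ℝ)) where
  measurable _ hf :=
    (continuous_fourierInv (integrable_gaussianMultiplier_symbol hz hf)).measurable
  map_add f g hf hg := by
    have hadd : 𝓕 (f + g) = 𝓕 f + 𝓕 g :=
      VectorFourier.fourierIntegral_add Real.continuous_fourierChar continuous_inner hf hg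
    simp only [gaussianMultiplier, hadd, Pi.add_apply, mul_add]
    exact isL2ContractionOfL1Bound_fourierInv.map_add _ _
      (integrable_gaussianMultiplier_symbol hz hf) (integrable_gaussianMultiplier_symbol hz hg)
  enorm_le _ hf := enorm_gaussianMultiplier_le hz hf
  lintegral_sq_le f hf := by
    refine (lintegral_enorm_fourierInv_sq_le (integrable_gaussianMultiplier_symbol hz hf)).trans
      ((lintegral_mono fun η => ?_).trans (lintegral_enorm_fourier_sq_le hf))
    gcongr
    rw [enorm_mul]
    exact mul_le_of_le_one_left' (by
      simpa only [ofReal_norm] using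
        ENNReal.ofReal_le_one.2 (norm_cexp_neg_mul_norm_sq_le_one hz.le η))

theorem enorm_integral_cexp_mul_fourierInv_mul_conj_le {q q' : ℝ} (hq : 2 < q)
    (hqq' : q.HolderConjugate q') {z : ℂ} (hz : 0 < z.re) {f g : V → ℂ} (hf : Integrable f)
    (hgm : Measurable g) (hg : Integrable g) :
    ‖∫ η, Complex.exp (-z * ‖η‖ ^ 2) * (𝓕⁻ f η * (starRingEnd ℂ) (𝓕⁻ g η))‖ₑ ≤
      ENNReal.ofReal (q / (q - 2) * 4 * 2 ^ (q - 2)) ^ (1 / q) *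
        ‖(π / z : ℂ)‖ₑ ^ (Module.finrank ℝ V / 2 * (1 - 2 / q) : ℝ) *
        (eLpNorm' f q' volume * eLpNorm' g q' volume) := by
  have hz0 : z ≠ 0 := by rintro rfl; simp at hz
  have hA : ‖(π / z : ℂ)‖₊ ^ (Module.finrank ℝ V / 2 : ℝ) ≠ 0 := by simp [hz0]
  have hA_rpow : ((‖(π / z : ℂ)‖₊ ^ (Module.finrank ℝ V / 2 : ℝ) : ℝ≥0) : ℝ≥0∞) ^ (1 - 2 / q) =
      ‖(π / z : ℂ)‖ₑ ^ (Module.finrank ℝ V / 2 * (1 - 2 / q) : ℝ) := by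
    rw [ENNReal.coe_rpow_of_nonneg _ (by positivity), ← ENNReal.rpow_mul, enorm_eq_nnnorm]
  have hT := isL2ContractionOfL1Bound_gaussianMultiplier (V := V) hz
  set g' : V → ℂ := fun x => (starRingEnd ℂ) (g x)
  have hg'm : Measurable g' := Complex.continuous_conj.measurable.comp hgm
  have hg' : Integrable g' := hg.congr'_enorm hg'm.aestronglyMeasurable (by simp [g'])
  calc ‖∫ η, Complex.exp (-z * ‖η‖ ^ 2) * (𝓕⁻ f η * (starRingEnd ℂ) (𝓕⁻ g η))‖ₑ
      = ‖∫ x, f x * gaussianMultiplier z g' x‖ₑ := by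
        rw [gaussianMultiplier,
          ← integral_fourierInv_mul hf (integrable_gaussianMultiplier_symbol hz hg')]
        simp only [conj_fourierInv, g', mul_left_comm]
    _ ≤ ∫⁻ x, ‖f x‖ₑ * ‖gaussianMultiplier z g' x‖ₑ := by
        simpa only [enorm_mul] using enorm_integral_le_lintegral_enorm
          fun x => f x * gaussianMultiplier z g' x
    _ ≤ eLpNorm' f q' volume * eLpNorm' (gaussianMultiplier z g') q volume :=
        lintegral_mul_le_eLpNorm'_mul_eLpNorm' hf.aestronglyMeasurable
          (hT.measurable _ hg').aestronglyMeasurable hqq'.symm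
    _ ≤ _ := by
        grw [hT.eLpNorm'_le_mul_eLpNorm'_conj hA hq hqq' hg'm hg', hA_rpow]
        have hnorm : eLpNorm' g' q' volume = eLpNorm' g q' volume := by
          simp only [eLpNorm', g', RCLike.enorm_conj]
        rw [hnorm, mul_left_comm]

theorem stronglyMeasurable_fourierInv_prodMk {S : Type*} [MeasurableSpace S] {F : S × V → ℂ}
    (hF : StronglyMeasurable F) :
    StronglyMeasurable fun z : S × V => 𝓕⁻ (fun y => F (z.1, y)) z.2 := by
  have hkernel : Measurable fun w : (S × V) × V =>
      Complex.exp ((2 * π * inner ℝ w.2 w.1.2 : ℝ) * Complex.I) := by fun_prop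
  have hF' : StronglyMeasurable fun w : (S × V) × V => F (w.1.1, w.2) :=
    hF.comp_measurable (by fun_prop)
  simp only [Real.fourierInv_eq']
  exact (hkernel.stronglyMeasurable.smul hF').integral_prod_right'

theorem stronglyMeasurable_cexp_mul_fourierInv {F : ℝ × V → ℂ} (hF : StronglyMeasurable F) :
    StronglyMeasurable fun z : ℝ × V =>
      Complex.exp (-(Complex.I * z.1) * ‖z.2‖ ^ 2) * 𝓕⁻ (fun y => F (z.1, y)) z.2 :=
  (Measurable.stronglyMeasurable (by fun_prop)).mul (stronglyMeasurable_fourierInv_prodMk hF)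

theorem norm_fourierInv_le_integral_norm (f : V → ℂ) (η : V) : ‖𝓕⁻ f η‖ ≤ ∫ y, ‖f y‖ :=
  VectorFourier.norm_fourierIntegral_le_integral_norm 𝐞 volume (-innerₗ V) f η

theorem integrable_exp_neg_mul_norm_sq_sq {δ : ℝ} (hδ : 0 < δ) :
    Integrable fun η : V => Real.exp (-δ * ‖η‖ ^ 2) ^ 2 := by
  have h2δ : 0 < ((2 * δ : ℝ) : ℂ).re := by simpa using hδ
  refine (integrable_cexp_neg_mul_norm_sq h2δ).norm.congr (ae_of_all _ fun η => ?_)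
  simp only [norm_cexp_neg_mul_norm_sq, Complex.ofReal_re, ← Real.exp_nat_mul]
  push_cast
  ring_nf

variable {F : ℝ × V → ℂ} {p p' q q' : ℝ}

-- Weighting by a Gaussian makes the `TT*` kernel absolutely convergent; the weight is removed at
-- the end by letting its width tend to infinity.
theorem lintegral_gaussian_mul_enorm_integral_sq_le (hF : StronglyMeasurable F)
    (hFi : Integrable F) {ε : ℝ} (hε : 0 < ε) :
    ∫⁻ η, ENNReal.ofReal (Real.exp (-ε * ‖η‖ ^ 2)) *
        ‖∫ s : ℝ, Complex.exp (-(Complex.I * s) * ‖η‖ ^ 2) * 𝓕⁻ (fun y => F (s, y)) η‖ₑ ^ 2 ≤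
      ∫⁻ t : ℝ, ∫⁻ s : ℝ, ‖∫ η, Complex.exp (-(ε + Complex.I * (t - s : ℝ)) * ‖η‖ ^ 2) *
        (𝓕⁻ (fun y => F (t, y)) η * (starRingEnd ℂ) (𝓕⁻ (fun y => F (s, y)) η))‖ₑ := by
  set A : ℝ → V → ℂ := fun s η =>
    Complex.exp (-((ε / 2 : ℝ) + Complex.I * s) * ‖η‖ ^ 2) * 𝓕⁻ (fun y => F (s, y)) η with hA
  have hAm : StronglyMeasurable (Function.uncurry A) :=
    (Measurable.stronglyMeasurable (by fun_prop)).mul (stronglyMeasurable_fourierInv_prodMk hF)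
  have hA_le : ∀ s η, ‖A s η‖ ≤ (∫ y, ‖F (s, y)‖) * Real.exp (-(ε / 2) * ‖η‖ ^ 2) :=
    fun s η => by
      have hre : ((ε / 2 : ℝ) + Complex.I * s).re = ε / 2 := by simp
      rw [hA, norm_mul, norm_cexp_neg_mul_norm_sq, hre, mul_comm]
      gcongr
      exact norm_fourierInv_le_integral_norm _ η
  calc _ = ∫⁻ η, ‖∫ s, A s η‖ₑ ^ 2 := by
        refine lintegral_congr fun η => ?_
        have hsplit : ∀ s, A s η = Complex.exp (-((ε / 2 : ℝ) : ℂ) * ‖η‖ ^ 2) *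
            (Complex.exp (-(Complex.I * s) * ‖η‖ ^ 2) * 𝓕⁻ (fun y => F (s, y)) η) := fun s => by
          rw [hA, ← mul_assoc, ← Complex.exp_add]
          ring_nf
        simp only [hsplit]
        rw [integral_const_mul, enorm_mul, mul_pow, ← ofReal_norm (Complex.exp _),
          norm_cexp_neg_mul_norm_sq, ← ENNReal.ofReal_pow (by positivity), ← Real.exp_nat_mul,
          Complex.ofReal_re]
        congr 3
        push_cast
        ring
    _ ≤ ∫⁻ t, ∫⁻ s, ‖∫ η, A t η * (starRingEnd ℂ) (A s η)‖ₑ :=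
        lintegral_enorm_integral_sq_le hAm hFi.integral_norm_prod_left
          (integrable_exp_neg_mul_norm_sq_sq (half_pos hε)) hA_le
    _ = _ := by
        refine lintegral_congr fun t => lintegral_congr fun s => ?_
        congr 3 with η
        rw [hA, map_mul, ← Complex.exp_conj, mul_mul_mul_comm, ← Complex.exp_add]
        congr 2
        simp only [map_mul, map_neg, map_add, map_pow, Complex.conj_ofReal, Complex.conj_I]
        push_cast
        ring

theorem enorm_kernel_le (hp : 2 < p) (hq : 2 < q) (hqq' : q.HolderConjugate q')
    (hpq : 2 / p + Module.finrank ℝ V / q = Module.finrank ℝ V / 2) {ε τ : ℝ} (hε : 0 < ε)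
    {f g : V → ℂ} (hf : Integrable f) (hgm : Measurable g) (hg : Integrable g) :
    ‖∫ η, Complex.exp (-(ε + Complex.I * τ) * ‖η‖ ^ 2) *
        (𝓕⁻ f η * (starRingEnd ℂ) (𝓕⁻ g η))‖ₑ ≤
      ENNReal.ofReal (q / (q - 2) * 4 * 2 ^ (q - 2)) ^ (1 / q) * ‖π‖ₑ ^ (2 / p) *
        (eLpNorm' f q' volume * (eLpNorm' g q' volume * ‖τ‖ₑ ^ (-(2 / p)))) := by
  have hexp : (Module.finrank ℝ V / 2 * (1 - 2 / q) : ℝ) = 2 / p := by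
    linear_combination -hpq
  have hz : 0 < (ε + Complex.I * τ).re := by simpa using hε
  grw [enorm_integral_cexp_mul_fourierInv_mul_conj_le hq hqq' hz hf hgm hg, hexp,
    enorm_pi_div_rpow_le hε (by positivity)]
  exact le_of_eq (by ring)

theorem exists_lintegral_enorm_integral_cexp_mul_fourierInv_sq_le (hp : 2 < p)
    (hpp' : p.HolderConjugate p') (hq : 2 < q) (hqq' : q.HolderConjugate q')
    (hpq : 2 / p + Module.finrank ℝ V / q = Module.finrank ℝ V / 2) :
    ∃ C : ℝ≥0, ∀ F : ℝ × V → ℂ, StronglyMeasurable F → Integrable F (volume.prod volume) →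
      ∫⁻ η, ‖∫ s : ℝ, Complex.exp (-(Complex.I * s) * ‖η‖ ^ 2) * 𝓕⁻ (fun y => F (s, y)) η‖ₑ ^ 2 ≤
        C * eLpNorm' (fun s => eLpNorm' (fun y => F (s, y)) q' volume) p' volume ^ 2 := by
  obtain ⟨C, hC⟩ := hardyLittlewoodSobolev (volume : Measure ℝ) hp hpp'.symm
  set K : ℝ≥0∞ := ENNReal.ofReal (q / (q - 2) * 4 * 2 ^ (q - 2)) ^ (1 / q) * ‖π‖ₑ ^ (2 / p)
  have hK : K ≠ ∞ := by
    have := hqq'.pos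
    have : 0 < p := hpp'.pos
    finiteness
  refine ⟨K.toNNReal * C, fun F hF hFi => ?_⟩
  rw [ENNReal.coe_mul, ENNReal.coe_toNNReal hK]
  have hFs : ∀ᵐ s : ℝ, Integrable fun y => F (s, y) := hFi.prod_right_ae
  set a : ℝ → ℝ≥0∞ := fun s => eLpNorm' (fun y => F (s, y)) q' volume
  have ha : Measurable a := measurable_eLpNorm'_prodMk hF.enorm q'
  refine lintegral_le_of_gaussian_mul_le
    ((stronglyMeasurable_cexp_mul_fourierInv hF).integral_prod_left'.enorm.pow_const 2)
    fun ε hε => ?_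
  calc _ ≤ ∫⁻ t : ℝ, ∫⁻ s : ℝ, ‖∫ η, Complex.exp (-(ε + Complex.I * (t - s : ℝ)) * ‖η‖ ^ 2) *
        (𝓕⁻ (fun y => F (t, y)) η * (starRingEnd ℂ) (𝓕⁻ (fun y => F (s, y)) η))‖ₑ :=
        lintegral_gaussian_mul_enorm_integral_sq_le hF hFi hε
    _ ≤ ∫⁻ t : ℝ, ∫⁻ s : ℝ, K * (a t * (a s * ‖t - s‖ₑ ^ (-(2 / p)))) := by
        refine lintegral_mono_ae (hFs.mono fun t ht => lintegral_mono_ae (hFs.mono fun s hs => ?_))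
        exact enorm_kernel_le hp hq hqq' hpq hε ht (hF.measurable.comp measurable_prodMk_left) hs
    _ = K * ∫⁻ t : ℝ, ∫⁻ s : ℝ, a t * (a s * ‖t - s‖ₑ ^ (-(2 / p))) := by
        simp only [lintegral_const_mul' _ _ hK]
    _ ≤ K * (C * eLpNorm' a p' volume ^ 2) := by
        gcongr
        simpa using hC a ha
    _ = _ := (mul_assoc _ _ _).symm

/-- The solution at time `t` of the linear Schrödinger equation whose initial datum has Fourier
transform `g`, normalised so that the symbol of the propagator is `exp (-i t ‖η‖ ^ 2)`. -/
def schrodinger (t : ℝ) (g : V → ℂ) : V → ℂ :=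
  𝓕⁻ fun η => Complex.exp (-(Complex.I * t) * ‖η‖ ^ 2) * g η

variable {g : V → ℂ}

theorem stronglyMeasurable_schrodinger (hg : Measurable g) :
    StronglyMeasurable fun z : ℝ × V => schrodinger z.1 g z.2 :=
  stronglyMeasurable_fourierInv_prodMk
    (F := fun z : ℝ × V => Complex.exp (-(Complex.I * z.1) * ‖z.2‖ ^ 2) * g z.2)
    (Measurable.stronglyMeasurable (by fun_prop))

theorem norm_schrodinger_le (t : ℝ) (g : V → ℂ) (y : V) : ‖schrodinger t g y‖ ≤ ∫ η, ‖g η‖ := by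
  refine (norm_fourierInv_le_integral_norm _ y).trans_eq ?_
  simp only [norm_mul, norm_cexp_neg_I_mul_mul_norm_sq, one_mul]

theorem integral_schrodinger_mul (t : ℝ) {f : V → ℂ} (hg : Integrable g) (hf : Integrable f) :
    ∫ y, schrodinger t g y * f y =
      ∫ η, g η * (Complex.exp (-(Complex.I * t) * ‖η‖ ^ 2) * 𝓕⁻ f η) := by
  rw [schrodinger, integral_fourierInv_mul
    (integrable_cexp_neg_mul_norm_sq_mul (z := Complex.I * t) (by simp) hg) hf]
  congr 1 with η
  ring

theorem integral_prod_schrodinger_mul (hgm : Measurable g) (hg : Integrable g)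
    (hF : StronglyMeasurable F) (hFi : Integrable F) :
    ∫ z, schrodinger z.1 g z.2 * F z = ∫ η, g η *
      ∫ s : ℝ, Complex.exp (-(Complex.I * s) * ‖η‖ ^ 2) * 𝓕⁻ (fun y => F (s, y)) η := by
  have hint : Integrable fun z : ℝ × V => schrodinger z.1 g z.2 * F z :=
    hFi.bdd_mul (stronglyMeasurable_schrodinger hgm).aestronglyMeasurable
      (ae_of_all _ fun z => norm_schrodinger_le z.1 g z.2)
  have hFs : ∀ᵐ s : ℝ, Integrable fun y => F (s, y) := hFi.prod_right_ae
  have hint' : Integrable (fun z : ℝ × V => g z.2 *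
      (Complex.exp (-(Complex.I * z.1) * ‖z.2‖ ^ 2) * 𝓕⁻ (fun y => F (z.1, y)) z.2))
      (volume.prod volume) := by
    refine (hFi.integral_norm_prod_left.mul_prod hg.norm).mono'
      ((hgm.comp measurable_snd).stronglyMeasurable.mul
        (stronglyMeasurable_cexp_mul_fourierInv hF)).aestronglyMeasurable
      (ae_of_all _ fun z => ?_)
    rw [norm_mul, norm_mul, norm_cexp_neg_I_mul_mul_norm_sq, one_mul, mul_comm]
    gcongr
    exact norm_fourierInv_le_integral_norm _ _
  rw [Measure.volume_eq_prod, integral_prod _ hint]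
  simp only [← integral_const_mul]
  exact (integral_congr_ae (hFs.mono fun s hs => integral_schrodinger_mul s hg hs)).trans
    (integral_integral_swap hint')

theorem exists_eLpNorm'_schrodinger_le (hp : 2 < p) (hq : 2 < q)
    (hpq : 2 / p + Module.finrank ℝ V / q = Module.finrank ℝ V / 2) :
    ∃ C : ℝ≥0, ∀ g : V → ℂ, Measurable g → Integrable g →
      eLpNorm' (fun t => eLpNorm' (schrodinger t g) q volume) p volume ≤
        C * eLpNorm' g 2 volume := by
  have hpp' := Real.HolderConjugate.conjExponent (one_lt_two.trans hp)
  have hqq' := Real.HolderConjugate.conjExponent (one_lt_two.trans hq)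
  obtain ⟨C, hC⟩ := exists_lintegral_enorm_integral_cexp_mul_fourierInv_sq_le hp hpp' hq hqq' hpq
  refine ⟨NNReal.sqrt C, fun g hgm hg => ?_⟩
  refine eLpNorm'_eLpNorm'_le_of_enorm_integral_mul_le (stronglyMeasurable_schrodinger hgm)
    (fun z => norm_schrodinger_le z.1 g z.2) hpp' hqq' fun F hF hFi => ?_
  set N := eLpNorm' (fun s => eLpNorm' (fun y => F (s, y)) q.conjExponent volume)
    p.conjExponent volume
  set Φ : V → ℂ := fun η =>
    ∫ s : ℝ, Complex.exp (-(Complex.I * s) * ‖η‖ ^ 2) * 𝓕⁻ (fun y => F (s, y)) η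
  have hΦm : StronglyMeasurable Φ := (stronglyMeasurable_cexp_mul_fourierInv hF).integral_prod_left'
  have hΦ : eLpNorm' Φ 2 volume ≤ NNReal.sqrt C * N := by
    calc eLpNorm' Φ 2 volume ≤ (C * N ^ 2) ^ (1 / 2 : ℝ) :=
          ENNReal.rpow_le_rpow (by simpa only [ENNReal.rpow_two] using hC F hF hFi) (by positivity)
      _ = _ := by
          rw [ENNReal.mul_rpow_of_nonneg _ _ (by positivity), ← ENNReal.rpow_natCast_mul,
            NNReal.sqrt_eq_rpow, ENNReal.coe_rpow_of_nonneg _ (by positivity)]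
          norm_num
  calc ‖∫ z, schrodinger z.1 g z.2 * F z ∂(volume.prod volume)‖ₑ
      = ‖∫ η, g η * Φ η‖ₑ := congrArg _ (integral_prod_schrodinger_mul hgm hg hF hFi)
    _ ≤ ∫⁻ η, ‖g η‖ₑ * ‖Φ η‖ₑ := by
        simpa only [enorm_mul] using enorm_integral_le_lintegral_enorm fun η => g η * Φ η
    _ ≤ eLpNorm' g 2 volume * eLpNorm' Φ 2 volume :=
        lintegral_mul_le_eLpNorm'_mul_eLpNorm' hg.aestronglyMeasurable hΦm.aestronglyMeasurable
          Real.HolderConjugate.two_two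
    _ ≤ eLpNorm' g 2 volume * (NNReal.sqrt C * N) := by gcongr
    _ = _ := by ring

end Schrodinger

section KadomtsevPetviashvili

variable {V : Type*} [NormedAddCommGroup V] [InnerProductSpace ℝ V] [FiniteDimensional ℝ V]
  [MeasurableSpace V] [BorelSpace V]

/-- The linear flow with symbol `exp (i t (φ ξ - ‖η‖ ^ 2 / ξ))` applied to the datum on `ℝ × V` with
Fourier transform `U`, for Mathlib's normalisation `exp (2 π i ⟪·, ·⟫)` of the Fourier transform.
For each `ξ` the transverse variables evolve by the Schrödinger flow at time `t / ξ`.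
Kadomtsev-Petviashvili II is the case `φ ξ = ξ ^ 3`. -/
def kpWave (φ : ℝ → ℝ) (U : ℝ × V → ℂ) (t : ℝ) (z : ℝ × V) : ℂ :=
  𝓕⁻ (fun ξ : ℝ => Complex.exp ((t * φ ξ : ℝ) * Complex.I) *
    schrodinger (t / ξ) (fun η => U (ξ, η)) z.2) z.1

variable {φ : ℝ → ℝ} {U : ℝ × V → ℂ} {p q : ℝ}

theorem stronglyMeasurable_schrodinger_div (hU : Measurable U) {S : Type*} [MeasurableSpace S]
    {t ξ : S → ℝ} {y : S → V} (ht : Measurable t) (hξ : Measurable ξ) (hy : Measurable y) :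
    StronglyMeasurable fun w => schrodinger (t w / ξ w) (fun η => U (ξ w, η)) (y w) := by
  have hsymbol : Measurable fun w : S × V =>
      Complex.exp (-(Complex.I * (t w.1 / ξ w.1 : ℝ)) * ‖w.2‖ ^ 2) * U (ξ w.1, w.2) := by
    fun_prop
  have hwave := (stronglyMeasurable_fourierInv_prodMk hsymbol.stronglyMeasurable).comp_measurable
    (measurable_id.prodMk hy)
  exact hwave

theorem stronglyMeasurable_cexp_mul_schrodinger_div (hφ : Measurable φ) (hU : Measurable U)
    (t : ℝ) :
    StronglyMeasurable fun w : V × ℝ => Complex.exp ((t * φ w.2 : ℝ) * Complex.I) *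
      schrodinger (t / w.2) (fun η => U (w.2, η)) w.1 := by
  have hphase : Measurable fun w : V × ℝ => Complex.exp ((t * φ w.2 : ℝ) * Complex.I) := by
    fun_prop
  exact hphase.stronglyMeasurable.mul
    (stronglyMeasurable_schrodinger_div hU measurable_const measurable_snd measurable_fst)

theorem measurable_enorm_kpWave (hφ : Measurable φ) (hU : Measurable U) (t : ℝ) :
    Measurable fun z => ‖kpWave φ U t z‖ₑ :=
  ((stronglyMeasurable_fourierInv_prodMk
    (stronglyMeasurable_cexp_mul_schrodinger_div hφ hU t)).comp_measurable
      measurable_swap).enorm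

theorem integrable_cexp_mul_schrodinger_div (hφ : Measurable φ) (hUm : Measurable U)
    (hU : Integrable U) (t : ℝ) (y : V) :
    Integrable fun ξ : ℝ => Complex.exp ((t * φ ξ : ℝ) * Complex.I) *
      schrodinger (t / ξ) (fun η => U (ξ, η)) y := by
  refine hU.integral_norm_prod_left.mono'
    ((stronglyMeasurable_cexp_mul_schrodinger_div hφ hUm t).comp_measurable
      measurable_prodMk_left).aestronglyMeasurable (ae_of_all _ fun ξ => ?_)
  rw [norm_mul, Complex.norm_exp_ofReal_mul_I, one_mul]
  exact norm_schrodinger_le _ _ _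

theorem enorm_cexp_ofReal_mul_I_mul (r : ℝ) (w : ℂ) :
    ‖Complex.exp (r * Complex.I) * w‖ₑ = ‖w‖ₑ := by
  rw [enorm_mul, Complex.enorm_exp_ofReal_mul_I, one_mul]

theorem exists_eLpNorm'_kpWave_le (hφ : Measurable φ) (hq : 2 < q) :
    ∃ C : ℝ≥0, ∀ U : ℝ × V → ℂ, Measurable U → Integrable U → ∀ t,
      eLpNorm' (kpWave φ U t) q volume ≤ C * eLpNorm' (fun ξ : ℝ => ‖ξ‖ₑ ^ (1 / 2 - 1 / q) *
        eLpNorm' (schrodinger (t / ξ) fun η => U (ξ, η)) q volume) 2 volume := by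
  have hq0 : 0 < q := two_pos.trans hq
  obtain ⟨C, hC⟩ := exists_eLpNorm'_fourierInv_le (V := ℝ) hq
  refine ⟨C, fun U hUm hU t => ?_⟩
  set w : V → ℝ → ℝ≥0∞ := fun y ξ => ‖ξ‖ₑ ^ (1 / 2 - 1 / q) *
    ‖schrodinger (t / ξ) (fun η => U (ξ, η)) y‖ₑ
  have hw : Measurable (Function.uncurry w) :=
    (measurable_enorm.comp measurable_snd |>.pow_const _).mul
      (stronglyMeasurable_schrodinger_div hUm measurable_const measurable_snd measurable_fst).enorm
  calc eLpNorm' (kpWave φ U t) q volume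
      = eLpNorm' (fun y => eLpNorm' (fun x => kpWave φ U t (x, y)) q volume) q volume :=
        eLpNorm'_prod_symm (measurable_enorm_kpWave hφ hUm t) hq0
    _ ≤ eLpNorm' (fun y => C * eLpNorm' (w y) 2 volume) q volume := by
        refine eLpNorm'_mono_of_le _ (fun y => ?_) hq0.le
        have hmeas : Measurable fun ξ : ℝ => Complex.exp ((t * φ ξ : ℝ) * Complex.I) *
            schrodinger (t / ξ) (fun η => U (ξ, η)) y :=
          ((stronglyMeasurable_cexp_mul_schrodinger_div hφ hUm t).comp_measurable
            measurable_prodMk_left).measurable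
        have hsob := hC _ hmeas (integrable_cexp_mul_schrodinger_div hφ hUm hU t y)
        simpa only [enorm_cexp_ofReal_mul_I_mul, Module.finrank_self, Nat.cast_one, one_mul,
          kpWave, w] using hsob
    _ = C * eLpNorm' (fun y => eLpNorm' (w y) 2 volume) q volume :=
        eLpNorm'_const_mul_of_measurable _ _ (measurable_eLpNorm'_prodMk hw 2) hq0
    _ ≤ C * eLpNorm' (fun ξ => eLpNorm' (fun y => w y ξ) q volume) 2 volume := by
        grw [eLpNorm'_eLpNorm'_swap_le hw two_pos hq.le]
    _ = _ := by
        congr! 3 with ξ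
        exact eLpNorm'_const_mul_of_measurable _ _
          (stronglyMeasurable_schrodinger_div hUm measurable_const measurable_const
            measurable_id).enorm hq0

theorem eLpNorm'_schrodinger_div (g : V → ℂ) (hp : 0 < p) {ξ : ℝ} (hξ : ξ ≠ 0) :
    eLpNorm' (fun t => eLpNorm' (schrodinger (t / ξ) g) q volume) p volume =
      ‖ξ‖ₑ ^ (1 / p) * eLpNorm' (fun t => eLpNorm' (schrodinger t g) q volume) p volume := by
  have hscale := eLpNorm'_comp_smul_addHaar volume
    (fun t => eLpNorm' (schrodinger t g) q volume) hp (inv_ne_zero hξ)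
  simp only [smul_eq_mul, inv_mul_eq_div, Module.finrank_self, Nat.cast_one] at hscale
  rw [hscale, enorm_inv hξ, ENNReal.inv_rpow, ← ENNReal.rpow_neg, neg_div, neg_neg]

theorem exists_eLpNorm'_rpow_mul_schrodinger_div_le (hp : 2 < p) (hq : 2 < q)
    (hpq : 2 / p + Module.finrank ℝ V / q = Module.finrank ℝ V / 2) :
    ∃ C : ℝ≥0, ∀ g : V → ℂ, Measurable g → Integrable g → ∀ a ξ : ℝ, ξ ≠ 0 →
      eLpNorm' (fun t => ‖ξ‖ₑ ^ a * eLpNorm' (schrodinger (t / ξ) g) q volume) p volume ≤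
        C * eLpNorm' (fun η => ‖ξ‖ₑ ^ (a + 1 / p) * ‖g η‖ₑ) 2 volume := by
  have hp0 : 0 < p := two_pos.trans hp
  obtain ⟨C, hC⟩ := exists_eLpNorm'_schrodinger_le (V := V) hp hq hpq
  refine ⟨C, fun g hgm hg a ξ hξ => ?_⟩
  have hnorm : Measurable fun t : ℝ => eLpNorm' (schrodinger (t / ξ) g) q volume :=
    (measurable_eLpNorm'_prodMk (stronglyMeasurable_schrodinger hgm).enorm q).comp
      (measurable_id.div_const ξ)
  calc eLpNorm' (fun t => ‖ξ‖ₑ ^ a * eLpNorm' (schrodinger (t / ξ) g) q volume) p volume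
      = ‖ξ‖ₑ ^ a * (‖ξ‖ₑ ^ (1 / p) *
          eLpNorm' (fun t => eLpNorm' (schrodinger t g) q volume) p volume) := by
        rw [eLpNorm'_const_mul_of_measurable _ _ hnorm hp0, eLpNorm'_schrodinger_div g hp0 hξ]
    _ ≤ ‖ξ‖ₑ ^ a * (‖ξ‖ₑ ^ (1 / p) * (C * eLpNorm' (fun η => ‖g η‖ₑ) 2 volume)) := by
        grw [hC g hgm hg]
        rfl
    _ = C * (‖ξ‖ₑ ^ (a + 1 / p) * eLpNorm' (fun η => ‖g η‖ₑ) 2 volume) := by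
        rw [ENNReal.rpow_add _ _ (enorm_ne_zero.mpr hξ) enorm_ne_top]
        ring
    _ = _ := by rw [eLpNorm'_const_mul_of_measurable _ _ hgm.enorm two_pos]

theorem exists_eLpNorm'_eLpNorm'_kpWave_le (hφ : Measurable φ) (hp : 2 < p) (hq : 2 < q)
    (hpq : 2 / p + Module.finrank ℝ V / q = Module.finrank ℝ V / 2) :
    ∃ C : ℝ≥0, ∀ U : ℝ × V → ℂ, Measurable U → Integrable U →
      eLpNorm' (fun t => eLpNorm' (kpWave φ U t) q volume) p volume ≤
        C * eLpNorm' (fun ζ : ℝ × V => ‖ζ.1‖ₑ ^ (1 / 2 - 1 / q + 1 / p) * ‖U ζ‖ₑ) 2 volume := by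
  have hp0 : 0 < p := two_pos.trans hp
  obtain ⟨C₁, hC₁⟩ := exists_eLpNorm'_kpWave_le (V := V) hφ hq
  obtain ⟨C₂, hC₂⟩ := exists_eLpNorm'_rpow_mul_schrodinger_div_le (V := V) hp hq hpq
  refine ⟨C₁ * C₂, fun U hUm hU => ?_⟩
  set w : ℝ → ℝ → ℝ≥0∞ := fun t ξ => ‖ξ‖ₑ ^ (1 / 2 - 1 / q) *
    eLpNorm' (schrodinger (t / ξ) fun η => U (ξ, η)) q volume
  set v : ℝ × V → ℝ≥0∞ := fun ζ => ‖ζ.1‖ₑ ^ (1 / 2 - 1 / q + 1 / p) * ‖U ζ‖ₑ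
  have hw : Measurable (Function.uncurry w) :=
    (measurable_enorm.comp measurable_snd |>.pow_const _).mul
      (measurable_eLpNorm'_prodMk (stronglyMeasurable_schrodinger_div hUm
        (measurable_fst.comp measurable_fst) (measurable_snd.comp measurable_fst)
        measurable_snd).enorm q)
  have hv : Measurable v := (measurable_enorm.comp measurable_fst |>.pow_const _).mul hUm.enorm
  calc eLpNorm' (fun t => eLpNorm' (kpWave φ U t) q volume) p volume
      ≤ eLpNorm' (fun t => C₁ * eLpNorm' (w t) 2 volume) p volume :=
        eLpNorm'_mono_of_le _ (hC₁ U hUm hU) hp0.le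
    _ = C₁ * eLpNorm' (fun t => eLpNorm' (w t) 2 volume) p volume :=
        eLpNorm'_const_mul_of_measurable _ _ (measurable_eLpNorm'_prodMk hw 2) hp0
    _ ≤ C₁ * eLpNorm' (fun ξ => eLpNorm' (fun t => w t ξ) p volume) 2 volume := by
        grw [eLpNorm'_eLpNorm'_swap_le hw two_pos hp.le]
    _ ≤ C₁ * eLpNorm' (fun ξ => C₂ * eLpNorm' (fun η => v (ξ, η)) 2 volume) 2 volume := by
        gcongr
        refine eLpNorm'_mono_enorm_ae two_pos.le ?_
        filter_upwards [hU.prod_right_ae, Measure.ae_ne volume 0] with ξ hUξ hξ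
        exact hC₂ _ (hUm.comp measurable_prodMk_left) hUξ _ ξ hξ
    _ = C₁ * (C₂ * eLpNorm' (fun ξ => eLpNorm' (fun η => v (ξ, η)) 2 volume) 2 volume) := by
        rw [eLpNorm'_const_mul_of_measurable _ _ (measurable_eLpNorm'_prodMk hv 2) two_pos]
    _ = _ := by
        rw [Measure.volume_eq_prod, eLpNorm'_prod hv.enorm two_pos, ENNReal.coe_mul, mul_assoc]

theorem eLpNorm'_two_fourierInv_le {g : V → ℂ} (hg : Integrable g) :
    eLpNorm' (𝓕⁻ g) 2 volume ≤ eLpNorm' g 2 volume := by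
  simpa only [eLpNorm', ENNReal.rpow_two] using
    ENNReal.rpow_le_rpow (lintegral_enorm_fourierInv_sq_le hg) (by positivity)

theorem eLpNorm'_two_schrodinger_le {g : V → ℂ} (hg : Integrable g) (t : ℝ) :
    eLpNorm' (schrodinger t g) 2 volume ≤ eLpNorm' g 2 volume := by
  refine (eLpNorm'_two_fourierInv_le
    (integrable_cexp_neg_mul_norm_sq_mul (z := Complex.I * t) (by simp) hg)).trans_eq
    (eLpNorm'_congr_norm_ae (ae_of_all _ fun η => ?_))
  rw [norm_mul, norm_cexp_neg_I_mul_mul_norm_sq, one_mul]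

theorem eLpNorm'_two_kpWave_le (hφ : Measurable φ) (hUm : Measurable U) (hU : Integrable U)
    (t : ℝ) : eLpNorm' (kpWave φ U t) 2 volume ≤ eLpNorm' U 2 volume := by
  set w : V × ℝ → ℝ≥0∞ := fun z => ‖schrodinger (t / z.2) (fun η => U (z.2, η)) z.1‖ₑ
  have hw : Measurable w :=
    (stronglyMeasurable_schrodinger_div hUm measurable_const measurable_snd measurable_fst).enorm
  calc eLpNorm' (kpWave φ U t) 2 volume
      = eLpNorm' (fun y => eLpNorm' (fun x => kpWave φ U t (x, y)) 2 volume) 2 volume :=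
        eLpNorm'_prod_symm (measurable_enorm_kpWave hφ hUm t) two_pos
    _ ≤ eLpNorm' (fun y => eLpNorm' (fun ξ => w (y, ξ)) 2 volume) 2 volume := by
        refine eLpNorm'_mono_of_le _ (fun y => ?_) two_pos.le
        refine (eLpNorm'_two_fourierInv_le
          (integrable_cexp_mul_schrodinger_div hφ hUm hU t y)).trans_eq ?_
        simp only [eLpNorm', enorm_cexp_ofReal_mul_I_mul, enorm_eq_self, w]
    _ = eLpNorm' (fun ξ => eLpNorm' (fun y => w (y, ξ)) 2 volume) 2 volume := by
        rw [← eLpNorm'_prod hw.enorm two_pos, eLpNorm'_prod_symm hw.enorm two_pos]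
    _ ≤ eLpNorm' (fun ξ => eLpNorm' (fun η => U (ξ, η)) 2 volume) 2 volume := by
        refine eLpNorm'_mono_enorm_ae two_pos.le (hU.prod_right_ae.mono fun ξ hUξ => ?_)
        exact eLpNorm'_two_schrodinger_le hUξ (t / ξ)
    _ = eLpNorm' U 2 volume := (eLpNorm'_prod hUm.enorm two_pos).symm

end KadomtsevPetviashvili

section KPEvolution

theorem exists_schwartzMap_coe_eq_ft (u : SchwartzMap (ℝ × E2) ℂ) :
    ∃ G : SchwartzMap (ℝ × E2) ℂ, ⇑G = ft fun w => u w := by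
  let toProd := WithLp.prodContinuousLinearEquiv 2 ℝ ℝ E2
  let scale : (ℝ × E2) ≃L[ℝ] (ℝ × E2) :=
    ContinuousLinearEquiv.smulLeft (Units.mk0 ((2 * π)⁻¹ : ℝ) (by positivity))
  let F := SchwartzMap.compCLMOfContinuousLinearEquiv ℂ toProd u
  refine ⟨SchwartzMap.compCLMOfContinuousLinearEquiv ℂ (scale.trans toProd.symm) (𝓕 F),
    funext fun ζ => ?_⟩
  change 𝓕 (F : WithLp 2 (ℝ × E2) → ℂ) (WithLp.toLp 2 ((2 * π)⁻¹ • ζ)) = _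
  rw [Real.fourier_eq', ft, ← (WithLp.volume_preserving_ofLp ℝ E2).integral_comp
    toProd.toHomeomorph.measurableEmbedding]
  congr 1 with z
  have hphase : -2 * π * inner ℝ z (WithLp.toLp 2 ((2 * π)⁻¹ • ζ)) =
      -(z.ofLp.1 * ζ.1 + inner ℝ z.ofLp.2 ζ.2) := by
    simp only [WithLp.prod_inner_apply, Prod.smul_fst, Prod.smul_snd, inner_smul_right]
    simp only [RCLike.inner_apply, conj_trivial]
    field_simp
  rw [hphase, smul_eq_mul]
  change _ * u z.ofLp = _
  congr 2
  push_cast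
  ring

theorem measurable_ft (u : SchwartzMap (ℝ × E2) ℂ) : Measurable (ft fun w => u w) := by
  obtain ⟨G, hG⟩ := exists_schwartzMap_coe_eq_ft u
  exact hG ▸ G.continuous.measurable

theorem integrable_ft (u : SchwartzMap (ℝ × E2) ℂ) : Integrable (ft fun w => u w) := by
  obtain ⟨G, hG⟩ := exists_schwartzMap_coe_eq_ft u
  have : (volume : Measure (ℝ × E2)).IsAddHaarMeasure :=
    inferInstanceAs ((volume : Measure ℝ).prod (volume : Measure E2)).IsAddHaarMeasure
  exact hG ▸ G.integrable

theorem kpEvol_eq_kpWave (u : SchwartzMap (ℝ × E2) ℂ) (t : ℝ) (z : ℝ × E2) :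
    kpEvol u t z = kpWave (· ^ 3) (ft fun w => u w) t ((2 * π)⁻¹ • z) := by
  have hphase : Measurable fun ζ : ℝ × E2 => t * omega ζ + z.1 * ζ.1 + inner ℝ z.2 ζ.2 := by
    unfold omega
    fun_prop
  have hint : Integrable (fun ζ : ℝ × E2 => Complex.exp (Complex.I *
      ((t * omega ζ + z.1 * ζ.1 + inner ℝ z.2 ζ.2 : ℝ) : ℂ)) * ft (fun w => u w) ζ)
      (volume.prod volume) := by
    refine (integrable_ft u).bdd_mul (c := 1) ?_ (ae_of_all _ fun ζ => ?_)
    · exact Measurable.aestronglyMeasurable (by fun_prop)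
    · rw [mul_comm, Complex.norm_exp_ofReal_mul_I]
  rw [kpEvol, Measure.volume_eq_prod, integral_prod _ hint]
  simp only [kpWave, schrodinger, Real.fourierInv_eq', smul_eq_mul, ← integral_const_mul]
  congr! 4 with ξ
  simp only [Prod.smul_fst, Prod.smul_snd, inner_smul_right,
    mul_inv_cancel_left₀ Real.two_pi_pos.ne']
  simp only [← mul_assoc, ← Complex.exp_add]
  congr 2
  simp only [omega, RCLike.inner_apply, conj_trivial, real_inner_comm]
  push_cast
  ring

theorem exists_eLpNorm'_kpEvol_eq {q : ℝ} (hq : 0 < q) :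
    ∃ K : ℝ≥0, ∀ (u : SchwartzMap (ℝ × E2) ℂ) (t : ℝ), eLpNorm' (kpEvol u t) q volume =
      K * eLpNorm' (kpWave (· ^ 3) (ft fun w => u w) t) q volume := by
  have hpi : (2 * π)⁻¹ ≠ 0 := by positivity
  lift ‖(2 * π)⁻¹‖ₑ ^ (-(Module.finrank ℝ (ℝ × E2) : ℝ) / q) to ℝ≥0 using
    ENNReal.rpow_ne_top_of_ne_zero (enorm_ne_zero.mpr hpi) enorm_ne_top with K hK
  refine ⟨K, fun u t => ?_⟩
  have hscale := eLpNorm'_comp_smul_addHaar ((volume : Measure ℝ).prod (volume : Measure E2))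
    (kpWave (· ^ 3) (ft fun w => u w) t) hq hpi
  simp only [← kpEvol_eq_kpWave, ← hK] at hscale
  exact hscale

theorem exists_eLpNorm'_eLpNorm'_kpEvol_le {p q : ℝ} (hp : 2 < p) (hq : 2 < q)
    (hpq : 1 / p + 1 / q = 1 / 2) :
    ∃ C : ℝ≥0, ∀ u : SchwartzMap (ℝ × E2) ℂ,
      eLpNorm' (fun t => eLpNorm' (kpEvol u t) q volume) p volume ≤
        C * eLpNorm' (fun ζ => ‖ζ.1‖ₑ ^ (2 / p) * ‖ft (fun w => u w) ζ‖ₑ) 2 volume := by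
  have hadm : 2 / p + Module.finrank ℝ E2 / q = Module.finrank ℝ E2 / 2 := by
    rw [finrank_euclideanSpace_fin]
    linear_combination 2 * hpq
  have hexp : 1 / 2 - 1 / q + 1 / p = 2 / p := by linear_combination -hpq
  obtain ⟨C, hC⟩ := exists_eLpNorm'_eLpNorm'_kpWave_le (φ := (· ^ 3)) (by fun_prop) hp hq hadm
  obtain ⟨K, hK⟩ := exists_eLpNorm'_kpEvol_eq (two_pos.trans hq)
  refine ⟨K * C, fun u => ?_⟩
  calc
    _ ≤ K • eLpNorm' (fun t => eLpNorm' (kpWave (· ^ 3) (ft fun w => u w) t) q volume) p volume :=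
      eLpNorm'_le_nnreal_smul_eLpNorm'_of_ae_le_mul' (ae_of_all _ fun t => (hK u t).le)
        (two_pos.trans hp)
    _ ≤ _ := by
      rw [ENNReal.coe_mul, mul_assoc, ENNReal.smul_def, smul_eq_mul, ← hexp]
      gcongr
      exact hC _ (measurable_ft u) (integrable_ft u)

theorem exists_eLpNorm'_two_kpEvol_le :
    ∃ C : ℝ≥0, ∀ (u : SchwartzMap (ℝ × E2) ℂ) (t : ℝ),
      eLpNorm' (kpEvol u t) 2 volume ≤ C * eLpNorm' (ft fun w => u w) 2 volume := by
  obtain ⟨K, hK⟩ := exists_eLpNorm'_kpEvol_eq two_pos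
  refine ⟨K, fun u t => (hK u t).le.trans ?_⟩
  gcongr
  exact eLpNorm'_two_kpWave_le (by fun_prop) (measurable_ft u) (integrable_ft u) t

end KPEvolution

section Reduction

theorem mixedNorm_eq_eLpNorm' {p q : ℝ≥0∞} (hp : p ≠ ∞) (hq0 : q ≠ 0) (hq : q ≠ ∞)
    (u : ℝ → ℝ × E2 → ℂ) :
    mixedNorm p q u = eLpNorm' (fun t => eLpNorm' (u t) q.toReal volume) p.toReal volume := by
  simp only [mixedNorm, lpENN, if_neg hp, eLpNorm_eq_eLpNorm' hq0 hq]
  rfl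

theorem mixedNorm_top_le {q : ℝ≥0∞} (hq0 : q ≠ 0) (hq : q ≠ ∞) {u : ℝ → ℝ × E2 → ℂ}
    {K : ℝ≥0∞} (h : ∀ t, eLpNorm' (u t) q.toReal volume ≤ K) : mixedNorm ∞ q u ≤ K := by
  simp only [mixedNorm, lpENN, if_true, eLpNorm_eq_eLpNorm' hq0 hq]
  exact essSup_le_of_ae_le _ (ae_of_all _ h)

theorem eLpNorm_two_abs_rpow_mul (g : ℝ × E2 → ℂ) {s : ℝ} (hs : 0 ≤ s) :
    eLpNorm (fun ζ => ((|ζ.1| ^ s : ℝ) : ℂ) * g ζ) 2 volume =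
      eLpNorm' (fun ζ => ‖ζ.1‖ₑ ^ s * ‖g ζ‖ₑ) 2 volume := by
  have hweight (x : ℝ) : ‖((|x| ^ s : ℝ) : ℂ)‖ₑ = ‖x‖ₑ ^ s := by
    rw [← ofReal_norm, Complex.norm_of_nonneg (by positivity), Real.enorm_eq_ofReal_abs,
      ENNReal.ofReal_rpow_of_nonneg (abs_nonneg x) hs]
  rw [eLpNorm_eq_eLpNorm' two_ne_zero ENNReal.ofNat_ne_top, ENNReal.toReal_ofNat]
  simp only [eLpNorm', enorm_mul, hweight, enorm_eq_self]

theorem ne_zero_of_one_div_add_one_div_eq {p q : ℝ≥0∞} (hpq : 1 / p + 1 / q = 1 / 2) :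
    p ≠ 0 := by
  rintro rfl
  simp [eq_comm] at hpq

theorem one_div_toReal_add_one_div_toReal {p q : ℝ≥0∞} (hpq : 1 / p + 1 / q = 1 / 2) :
    1 / p.toReal + 1 / q.toReal = 1 / 2 := by
  have hp : p⁻¹ ≠ ∞ := ENNReal.inv_ne_top.mpr (ne_zero_of_one_div_add_one_div_eq hpq)
  have hq : q⁻¹ ≠ ∞ :=
    ENNReal.inv_ne_top.mpr (ne_zero_of_one_div_add_one_div_eq (by rwa [add_comm] at hpq))
  simpa [ENNReal.toReal_add hp hq] using congrArg ENNReal.toReal hpq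

theorem two_lt_of_one_div_add_one_div_eq {p q : ℝ} (hp : 0 < p) (hq : 0 < q)
    (hpq : 1 / p + 1 / q = 1 / 2) : 2 < p := by
  have hq' : 0 < 1 / q := one_div_pos.mpr hq
  exact lt_of_one_div_lt_one_div hp (by linarith)

end Reduction

theorem strichartz_kp3d' (p q : ℝ≥0∞) (hq2 : 2 ≤ q) (hq : q ≠ ∞)
    (hpq : 1 / p + 1 / q = 1 / 2) :
    ∃ C : ℝ, 0 < C ∧ ∀ u₀ : SchwartzMap (ℝ × E2) ℂ,
      mixedNorm p q (kpEvol u₀) ≤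
        ENNReal.ofReal C *
          eLpNorm (fun ζ : ℝ × E2 =>
            ((|ζ.1| ^ (2 / p.toReal) : ℝ) : ℂ) * ft (fun w => u₀ w) ζ) 2 volume := by
  have hq0 : q ≠ 0 := (two_pos.trans_le hq2).ne'
  obtain ⟨C, hC⟩ : ∃ C : ℝ≥0, ∀ u₀ : SchwartzMap (ℝ × E2) ℂ, mixedNorm p q (kpEvol u₀) ≤
      C * eLpNorm' (fun ζ => ‖ζ.1‖ₑ ^ (2 / p.toReal) * ‖ft (fun w => u₀ w) ζ‖ₑ) 2 volume := by
    rcases eq_or_ne p ∞ with rfl | hp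
    · obtain rfl : q = 2 := by simpa using hpq
      obtain ⟨C, hC⟩ := exists_eLpNorm'_two_kpEvol_le
      exact ⟨C, fun u₀ => mixedNorm_top_le hq0 hq fun t => by simpa [eLpNorm'] using hC u₀ t⟩
    · have hpq' := one_div_toReal_add_one_div_toReal hpq
      have hp0 := ENNReal.toReal_pos (ne_zero_of_one_div_add_one_div_eq hpq) hp
      have hq0' := ENNReal.toReal_pos hq0 hq
      simp only [mixedNorm_eq_eLpNorm' hp hq0 hq]
      exact exists_eLpNorm'_eLpNorm'_kpEvol_le (two_lt_of_one_div_add_one_div_eq hp0 hq0' hpq')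
        (two_lt_of_one_div_add_one_div_eq hq0' hp0 (by rwa [add_comm])) hpq'
  refine ⟨C + 1, by positivity, fun u₀ => (hC u₀).trans ?_⟩
  rw [eLpNorm_two_abs_rpow_mul _ (by positivity)]
  gcongr
  rw [ENNReal.le_ofReal_iff_toReal_le ENNReal.coe_ne_top (by positivity)]
  simp
end
end

section
/- There exists a constant C > 0 such that for every real t ≠ 0 and every a ∈ ℝ, the improper oscillatory integral L(a,t) = lim_{R→∞} ∫_{−R}^{R} sgn(ξ) |ξ|^{1/2} exp( i( a ξ + t ξ³ ) ) dξ exists in ℂ and satisfies |L(a,t)| ≤ C |t|^{−1/2}. -/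
/-!
STATEMENT 4: van der Corput estimate for the Airy-type oscillatory integral:
L(a,t) = lim_{R→∞} ∫_{−R}^{R} sgn(ξ)|ξ|^{1/2} e^{i(aξ + tξ³)} dξ exists and
|L(a,t)| ≤ C |t|^{−1/2} for t ≠ 0, with C universal.
-/

noncomputable section

open MeasureTheory Filter
open scoped Topology

/-!
The integrand is `g ξ - conj (g (-ξ))`, where `g ξ = √ξ * exp (i (a ξ + t ξ³))` vanishes for
`ξ ≤ 0`, so it suffices to treat the half line. Scaling by `(3t)^{1/3}` makes the phase
`b ξ + ξ³ / 3`, with derivative `ξ² + b`, and produces the factor `(3t)^{-1/2}`. Integrating by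
parts against `u ξ = √ξ / (ξ² + b)` bounds the integral over an interval without stationary point on
which `u` is monotone by `2 max |u|`. This is enough if `b ≥ 12`. If `-1 ≤ b ≤ 12`, one estimates
the integral over `[0, 2]` trivially. If `b = -c⁴ ≤ -1`, the stationary point is `c²`, where the
amplitude has size `c`, and one estimates trivially on the window of radius `1 / c` around it,
outside of which `|u| ≤ 1`.
-/

open Set
open scoped ComplexConjugate

section IntegrationByParts

variable {E : Type*} [NormedAddCommGroup E] [NormedSpace ℝ E] [CompleteSpace E]
  {x y M : ℝ} {u u' : ℝ → ℝ} {v v' : ℝ → E}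

lemma norm_integral_smul_deriv_le (hxy : x ≤ y)
    (hu : ContinuousOn u (Icc x y)) (hv : ContinuousOn v (Icc x y))
    (huu' : ∀ ξ ∈ Ioo x y, HasDerivAt u (u' ξ) ξ) (hvv' : ∀ ξ ∈ Ioo x y, HasDerivAt v (v' ξ) ξ)
    (hu' : IntervalIntegrable u' volume x y) (hv' : IntervalIntegrable v' volume x y)
    (hM : ∀ ξ ∈ Icc x y, ‖v ξ‖ ≤ M) :
    ‖∫ ξ in x..y, u ξ • v' ξ‖ ≤ M * (|u x| + |u y| + ∫ ξ in x..y, |u' ξ|) := by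
  have norm_smul_le_mul (r : ℝ) {ξ : ℝ} (hξ : ξ ∈ Icc x y) : ‖r • v ξ‖ ≤ M * |r| := by
    rw [norm_smul, Real.norm_eq_abs, mul_comm]
    exact mul_le_mul_of_nonneg_right (hM ξ hξ) (abs_nonneg r)
  have norm_integral_le : ‖∫ ξ in x..y, u' ξ • v ξ‖ ≤ M * ∫ ξ in x..y, |u' ξ| := by
    rw [← intervalIntegral.integral_const_mul]
    exact intervalIntegral.norm_integral_le_of_norm_le hxy
      (.of_forall fun ξ hξ => norm_smul_le_mul _ (Ioc_subset_Icc_self hξ)) (hu'.abs.const_mul M)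
  rw [intervalIntegral.integral_smul_deriv_eq_deriv_smul_of_hasDerivAt
    (by rwa [uIcc_of_le hxy]) (by rwa [uIcc_of_le hxy])
    (by rwa [min_eq_left hxy, max_eq_right hxy]) (by rwa [min_eq_left hxy, max_eq_right hxy])
    hu' hv']
  calc ‖u y • v y - u x • v x - ∫ ξ in x..y, u' ξ • v ξ‖
      ≤ ‖u y • v y‖ + ‖u x • v x‖ + ‖∫ ξ in x..y, u' ξ • v ξ‖ :=
        (norm_sub_le _ _).trans (add_le_add_left (norm_sub_le _ _) _)
    _ ≤ M * |u y| + M * |u x| + M * ∫ ξ in x..y, |u' ξ| := by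
        gcongr
        · exact norm_smul_le_mul _ (right_mem_Icc.2 hxy)
        · exact norm_smul_le_mul _ (left_mem_Icc.2 hxy)
    _ = M * (|u x| + |u y| + ∫ ξ in x..y, |u' ξ|) := by ring

lemma norm_integral_smul_deriv_le_of_deriv_nonneg (hxy : x ≤ y)
    (hu : ContinuousOn u (Icc x y)) (hv : ContinuousOn v (Icc x y))
    (huu' : ∀ ξ ∈ Ioo x y, HasDerivAt u (u' ξ) ξ) (hvv' : ∀ ξ ∈ Ioo x y, HasDerivAt v (v' ξ) ξ)
    (hu' : ∀ ξ ∈ Ioo x y, 0 ≤ u' ξ) (hv' : IntervalIntegrable v' volume x y)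
    (hM : ∀ ξ ∈ Icc x y, ‖v ξ‖ ≤ M) :
    ‖∫ ξ in x..y, u ξ • v' ξ‖ ≤ M * (|u x| + |u y| + (u y - u x)) := by
  have integrable_deriv : IntervalIntegrable u' volume x y :=
    (intervalIntegrable_iff_integrableOn_Ioc_of_le hxy).2
      (intervalIntegral.integrableOn_deriv_of_nonneg hu huu' hu')
  have integral_abs_deriv : ∫ ξ in x..y, |u' ξ| = u y - u x := by
    rw [← intervalIntegral.integral_eq_sub_of_hasDerivAt_of_le hxy hu huu' integrable_deriv]
    exact intervalIntegral.integral_congr_Ioo_of_le hxy fun ξ hξ => abs_of_nonneg (hu' ξ hξ)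
  rw [← integral_abs_deriv]
  exact norm_integral_smul_deriv_le hxy hu hv huu' hvv' integrable_deriv hv' hM

end IntegrationByParts

section FirstDerivativeTest

variable {x y : ℝ} {A φ φ' u' : ℝ → ℝ}

lemma norm_integral_mul_exp_le_of_deriv_div_nonneg (hxy : x ≤ y)
    (hA : ContinuousOn A (Icc x y)) (hφ : ContinuousOn φ (Icc x y))
    (hφ' : ContinuousOn φ' (Icc x y)) (hφφ' : ∀ ξ ∈ Ioo x y, HasDerivAt φ (φ' ξ) ξ)
    (hφ'_ne : ∀ ξ ∈ Icc x y, φ' ξ ≠ 0)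
    (hu : ∀ ξ ∈ Ioo x y, HasDerivAt (fun ζ => A ζ / φ' ζ) (u' ξ) ξ)
    (hu' : ∀ ξ ∈ Ioo x y, 0 ≤ u' ξ) :
    ‖∫ ξ in x..y, (A ξ : ℂ) * Complex.exp (Complex.I * φ ξ)‖ ≤
      |A x / φ' x| + |A y / φ' y| + (A y / φ' y - A x / φ' x) := by
  let v : ℝ → ℂ := fun ξ => -Complex.I * Complex.exp (Complex.I * φ ξ)
  let v' : ℝ → ℂ := fun ξ => φ' ξ * Complex.exp (Complex.I * φ ξ)
  have hvv' : ∀ ξ ∈ Ioo x y, HasDerivAt v (v' ξ) ξ := fun ξ hξ => by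
    refine ((((hφφ' ξ hξ).ofReal_comp.const_mul Complex.I).cexp).const_mul
      (-Complex.I)).congr_deriv ?_
    linear_combination (-(φ' ξ : ℂ) * Complex.exp (Complex.I * φ ξ)) * Complex.I_mul_I
  have hv : ContinuousOn v (Icc x y) := by fun_prop
  have hv' : ContinuousOn v' (Icc x y) := by fun_prop
  have norm_v : ∀ ξ ∈ Icc x y, ‖v ξ‖ ≤ 1 := fun ξ _ => by
    simp [v, mul_comm Complex.I, Complex.norm_exp_ofReal_mul_I]
  have amplitude_eq : ∀ ξ ∈ uIcc x y,
      (A ξ : ℂ) * Complex.exp (Complex.I * φ ξ) = (A ξ / φ' ξ) • v' ξ := fun ξ hξ => by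
    have : (φ' ξ : ℂ) ≠ 0 := Complex.ofReal_ne_zero.2 (hφ'_ne ξ (uIcc_of_le hxy ▸ hξ))
    simp only [v', Complex.real_smul, Complex.ofReal_div]
    field_simp
  rw [intervalIntegral.integral_congr amplitude_eq, ← one_mul (_ + _)]
  exact norm_integral_smul_deriv_le_of_deriv_nonneg (u := fun ξ => A ξ / φ' ξ) hxy
    (hA.div hφ' hφ'_ne) hv hu hvv' hu' (hv'.intervalIntegrable_of_Icc hxy) norm_v

lemma norm_integral_mul_exp_le_of_deriv_div_nonpos (hxy : x ≤ y)
    (hA : ContinuousOn A (Icc x y)) (hφ : ContinuousOn φ (Icc x y))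
    (hφ' : ContinuousOn φ' (Icc x y)) (hφφ' : ∀ ξ ∈ Ioo x y, HasDerivAt φ (φ' ξ) ξ)
    (hφ'_ne : ∀ ξ ∈ Icc x y, φ' ξ ≠ 0)
    (hu : ∀ ξ ∈ Ioo x y, HasDerivAt (fun ζ => A ζ / φ' ζ) (u' ξ) ξ)
    (hu' : ∀ ξ ∈ Ioo x y, u' ξ ≤ 0) :
    ‖∫ ξ in x..y, (A ξ : ℂ) * Complex.exp (Complex.I * φ ξ)‖ ≤
      |A x / φ' x| + |A y / φ' y| + (A x / φ' x - A y / φ' y) := by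
  have bound_neg := norm_integral_mul_exp_le_of_deriv_div_nonneg (A := -A) (u' := -u') hxy
    hA.neg hφ hφ' hφφ' hφ'_ne
    (fun ξ hξ => by simpa only [Pi.neg_apply, neg_div] using (hu ξ hξ).fun_neg)
    (fun ξ hξ => neg_nonneg.2 (hu' ξ hξ))
  simp only [Pi.neg_apply, Complex.ofReal_neg, neg_mul, intervalIntegral.integral_neg, norm_neg,
    neg_div, abs_neg] at bound_neg
  linarith

end FirstDerivativeTest

lemma exists_tendsto_intervalIntegral_of_norm_tail_le {E : Type*} [NormedAddCommGroup E]
    [NormedSpace ℝ E] [CompleteSpace E] {f : ℝ → E} {x₀ : ℝ} {ε : ℝ → ℝ}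
    (hf : ∀ x, IntervalIntegrable f volume x₀ x) (hε : Tendsto ε atTop (𝓝 0))
    (h : ∀ᶠ x in atTop, ∀ y, x ≤ y → ‖∫ ξ in x..y, f ξ‖ ≤ ε x) :
    ∃ L : E, Tendsto (fun R => ∫ ξ in x₀..R, f ξ) atTop (𝓝 L) := by
  refine cauchySeq_tendsto_of_complete (Metric.cauchySeq_iff'.2 fun δ hδ => ?_)
  obtain ⟨N, tail_le, ε_lt⟩ := (h.and (hε.eventually_lt_const hδ)).exists
  refine ⟨N, fun R hR => ?_⟩
  rw [dist_eq_norm, intervalIntegral.integral_interval_sub_left (hf R) (hf N)]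
  exact (tail_le R hR).trans_lt ε_lt

/-- The integrand `√ξ * exp (i (a ξ + t ξ³))` of the half-line oscillatory integral. It vanishes for
`ξ ≤ 0`, as `√ξ = 0` there. -/
def airyIntegrand (a t ξ : ℝ) : ℂ :=
  (√ξ : ℂ) * Complex.exp (Complex.I * (a * ξ + t * ξ ^ 3 : ℝ))

section AiryIntegrand

variable (a t : ℝ)

lemma continuous_airyIntegrand : Continuous (airyIntegrand a t) := by
  unfold airyIntegrand
  fun_prop

lemma intervalIntegrable_airyIntegrand (x y : ℝ) :
    IntervalIntegrable (airyIntegrand a t) volume x y :=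
  (continuous_airyIntegrand a t).intervalIntegrable x y

lemma airyIntegrand_of_nonpos {ξ : ℝ} (hξ : ξ ≤ 0) : airyIntegrand a t ξ = 0 := by
  simp [airyIntegrand, Real.sqrt_eq_zero_of_nonpos hξ]

lemma norm_airyIntegrand (ξ : ℝ) : ‖airyIntegrand a t ξ‖ = √ξ := by
  rw [airyIntegrand, norm_mul, mul_comm Complex.I, Complex.norm_exp_ofReal_mul_I, mul_one,
    Complex.norm_of_nonneg (Real.sqrt_nonneg ξ)]

lemma conj_airyIntegrand (ξ : ℝ) : conj (airyIntegrand a t ξ) = airyIntegrand (-a) (-t) ξ := by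
  simp only [airyIntegrand, map_mul, Complex.conj_ofReal, ← Complex.exp_conj, Complex.conj_I]
  congr 2
  push_cast
  ring

lemma airyIntegrand_mul {s : ℝ} (hs : 0 ≤ s) (ξ : ℝ) :
    airyIntegrand a t (s * ξ) = √s * airyIntegrand (a * s) (t * s ^ 3) ξ := by
  simp only [airyIntegrand, Real.sqrt_mul hs]
  push_cast
  ring_nf

lemma norm_integral_airyIntegrand_le {x y : ℝ} (hxy : x ≤ y) :
    ‖∫ ξ in x..y, airyIntegrand a t ξ‖ ≤ √y * (y - x) := by
  rw [← abs_of_nonneg (sub_nonneg.2 hxy)]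
  refine intervalIntegral.norm_integral_le_of_norm_le_const fun ξ hξ => ?_
  rw [norm_airyIntegrand]
  exact Real.sqrt_le_sqrt (uIoc_of_le hxy ▸ hξ).2

lemma norm_integral_airyIntegrand_le_add (x y z : ℝ) :
    ‖∫ ξ in x..z, airyIntegrand a t ξ‖ ≤
      ‖∫ ξ in x..y, airyIntegrand a t ξ‖ + ‖∫ ξ in y..z, airyIntegrand a t ξ‖ := by
  rw [← intervalIntegral.integral_add_adjacent_intervals
    (intervalIntegrable_airyIntegrand a t x y) (intervalIntegrable_airyIntegrand a t y z)]
  exact norm_add_le _ _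

lemma integral_conj_airyIntegrand (x y : ℝ) :
    ∫ ξ in x..y, conj (airyIntegrand a t ξ) = conj (∫ ξ in x..y, airyIntegrand a t ξ) := by
  simp only [intervalIntegral, integral_conj, map_sub]

end AiryIntegrand

/-- The amplitude `√ξ` divided by the derivative `ξ² + b` of the phase `b ξ + ξ³ / 3`: the function
whose monotonicity governs the first derivative test for `airyIntegrand b (1 / 3)`. -/
def airyRatio (b ξ : ℝ) : ℝ := √ξ / (ξ ^ 2 + b)

section AiryRatio

variable {b x y ξ : ℝ}

lemma airyRatio_zero (b : ℝ) : airyRatio b 0 = 0 := by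
  simp [airyRatio]

lemma airyRatio_nonneg (h : 0 ≤ ξ ^ 2 + b) : 0 ≤ airyRatio b ξ :=
  div_nonneg (Real.sqrt_nonneg ξ) h

lemma airyRatio_nonpos (h : ξ ^ 2 + b ≤ 0) : airyRatio b ξ ≤ 0 :=
  div_nonpos_of_nonneg_of_nonpos (Real.sqrt_nonneg ξ) h

lemma hasDerivAt_airyRatio (hξ : 0 < ξ) (hne : ξ ^ 2 + b ≠ 0) :
    HasDerivAt (airyRatio b) ((b - 3 * ξ ^ 2) / (2 * √ξ * (ξ ^ 2 + b) ^ 2)) ξ := by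
  refine ((Real.hasDerivAt_sqrt hξ.ne').div ((hasDerivAt_pow 2 ξ).add_const b) hne).congr_deriv ?_
  have : 0 < √ξ := Real.sqrt_pos.2 hξ
  field_simp
  rw [Real.sq_sqrt hξ.le]
  push_cast
  ring

lemma tendsto_airyRatio_atTop (b : ℝ) : Tendsto (airyRatio b) atTop (𝓝 0) := by
  have denom_ge : ∀ᶠ ξ in atTop, 1 ≤ ξ ∧ ξ ^ 2 / 2 ≤ ξ ^ 2 + b := by
    filter_upwards [eventually_ge_atTop 1, eventually_ge_atTop (2 * |b|)] with ξ one_le b_le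
    exact ⟨one_le, by nlinarith [neg_abs_le b]⟩
  refine squeeze_zero' (g := fun ξ => 2 / ξ) ?_ ?_ (tendsto_const_nhds.div_atTop tendsto_id)
  · filter_upwards [denom_ge] with ξ ⟨_, sq_le⟩
    exact airyRatio_nonneg (le_trans (by positivity) sq_le)
  · filter_upwards [denom_ge] with ξ ⟨one_le, sq_le⟩
    have sqrt_le : √ξ ≤ ξ := Real.sqrt_le_self_iff.2 (.inr one_le)
    rw [airyRatio, div_le_div_iff₀ (lt_of_lt_of_le (by positivity) sq_le) (by linarith)]
    nlinarith

lemma hasDerivAt_airyPhase (b ξ : ℝ) :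
    HasDerivAt (fun ζ => b * ζ + 1 / 3 * ζ ^ 3) (ξ ^ 2 + b) ξ := by
  refine (((hasDerivAt_id ξ).const_mul b).add
    ((hasDerivAt_pow 3 ξ).const_mul (1 / 3))).congr_deriv ?_
  push_cast
  ring

lemma norm_integral_airyIntegrand_le_of_le_three_mul_sq (hx : 0 ≤ x) (hxy : x ≤ y)
    (hb : b ≤ 3 * x ^ 2) (hne : ∀ ξ ∈ Icc x y, ξ ^ 2 + b ≠ 0) :
    ‖∫ ξ in x..y, airyIntegrand b (1 / 3) ξ‖ ≤
      |airyRatio b x| + |airyRatio b y| + (airyRatio b x - airyRatio b y) := by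
  have ratio_deriv_nonpos : ∀ ξ ∈ Ioo x y,
      (b - 3 * ξ ^ 2) / (2 * √ξ * (ξ ^ 2 + b) ^ 2) ≤ 0 := fun ξ hξ =>
    div_nonpos_of_nonpos_of_nonneg (by linarith [pow_le_pow_left₀ hx hξ.1.le 2]) (by positivity)
  exact norm_integral_mul_exp_le_of_deriv_div_nonpos hxy (by fun_prop) (by fun_prop) (by fun_prop)
    (fun ξ _ => hasDerivAt_airyPhase b ξ) hne
    (fun ξ hξ => hasDerivAt_airyRatio (hx.trans_lt hξ.1) (hne ξ (Ioo_subset_Icc_self hξ)))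
    ratio_deriv_nonpos

lemma norm_integral_airyIntegrand_tail_le (hx : 0 ≤ x) (hxy : x ≤ y) (hb : b ≤ 3 * x ^ 2)
    (hpos : 0 < x ^ 2 + b) :
    ‖∫ ξ in x..y, airyIntegrand b (1 / 3) ξ‖ ≤ 2 * airyRatio b x := by
  have deriv_phase_pos : ∀ ξ, x ≤ ξ → 0 < ξ ^ 2 + b := fun ξ hξ => by
    linarith [pow_le_pow_left₀ hx hξ 2]
  have bound := norm_integral_airyIntegrand_le_of_le_three_mul_sq hx hxy hb
    fun ξ hξ => (deriv_phase_pos ξ hξ.1).ne'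
  rw [abs_of_nonneg (airyRatio_nonneg hpos.le),
    abs_of_nonneg (airyRatio_nonneg (deriv_phase_pos y hxy).le)] at bound
  linarith

lemma norm_integral_airyIntegrand_zero_le_of_pos (hb : 0 < b) (hx : 0 ≤ x) (hxb : 3 * x ^ 2 ≤ b) :
    ‖∫ ξ in 0..x, airyIntegrand b (1 / 3) ξ‖ ≤ 2 * airyRatio b x := by
  have ratio_deriv_nonneg : ∀ ξ ∈ Ioo 0 x,
      0 ≤ (b - 3 * ξ ^ 2) / (2 * √ξ * (ξ ^ 2 + b) ^ 2) := fun ξ hξ =>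
    div_nonneg (by linarith [pow_le_pow_left₀ hξ.1.le hξ.2.le 2]) (by positivity)
  have bound : ‖∫ ξ in 0..x, airyIntegrand b (1 / 3) ξ‖ ≤
      |airyRatio b 0| + |airyRatio b x| + (airyRatio b x - airyRatio b 0) :=
    norm_integral_mul_exp_le_of_deriv_div_nonneg hx (by fun_prop) (by fun_prop) (by fun_prop)
      (fun ξ _ => hasDerivAt_airyPhase b ξ) (fun ξ _ => by positivity)
      (fun ξ hξ => hasDerivAt_airyRatio hξ.1 (by positivity)) ratio_deriv_nonneg
  rw [airyRatio_zero, abs_zero, abs_of_nonneg (airyRatio_nonneg (by positivity))] at bound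
  linarith

lemma norm_integral_airyIntegrand_zero_le_of_neg (hx : 0 ≤ x) (hneg : x ^ 2 + b < 0) :
    ‖∫ ξ in 0..x, airyIntegrand b (1 / 3) ξ‖ ≤ -(2 * airyRatio b x) := by
  have bound := norm_integral_airyIntegrand_le_of_le_three_mul_sq (b := b) le_rfl hx
    (by nlinarith [sq_nonneg x])
    fun ξ hξ => ne_of_lt (by linarith [pow_le_pow_left₀ hξ.1 hξ.2 2])
  rw [airyRatio_zero, abs_zero, abs_of_nonpos (airyRatio_nonpos hneg.le)] at bound
  linarith

end AiryRatio

section UniformBound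

variable {b R : ℝ}

lemma norm_integral_airyIntegrand_le_of_twelve_le (hb : 12 ≤ b) (hR : √(b / 3) ≤ R) :
    ‖∫ ξ in 0..R, airyIntegrand b (1 / 3) ξ‖ ≤ 4 := by
  set x := √(b / 3)
  have hbx : b = 3 * x ^ 2 := by
    rw [Real.sq_sqrt (by positivity)]
    ring
  have two_le_x : 2 ≤ x := Real.le_sqrt_of_sq_le (by linarith)
  have ratio_le : airyRatio b x ≤ 1 := by
    have sqrt_le : √x ≤ x := Real.sqrt_le_self_iff.2 (.inr (by linarith))
    rw [airyRatio, div_le_one (by positivity)]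
    nlinarith
  have split := norm_integral_airyIntegrand_le_add b (1 / 3) 0 x R
  have initial := norm_integral_airyIntegrand_zero_le_of_pos (by linarith) (by linarith) hbx.ge
  have tail := norm_integral_airyIntegrand_tail_le (by linarith) hR hbx.le (by positivity)
  linarith

lemma norm_integral_airyIntegrand_le_of_mem_Icc (hb : b ∈ Icc (-1) 12) (hR : 2 ≤ R) :
    ‖∫ ξ in 0..R, airyIntegrand b (1 / 3) ξ‖ ≤ 6 := by
  have sqrt_two_le : √2 ≤ 2 := Real.sqrt_le_self_iff.2 (.inr one_le_two)
  have ratio_le : airyRatio b 2 ≤ 1 := by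
    rw [airyRatio, div_le_one (by linarith [hb.1])]
    linarith [hb.1]
  have split := norm_integral_airyIntegrand_le_add b (1 / 3) 0 2 R
  have initial := norm_integral_airyIntegrand_le b (1 / 3) (zero_le_two (α := ℝ))
  have tail := norm_integral_airyIntegrand_tail_le (b := b) zero_le_two hR
    (by linarith [hb.2]) (by linarith [hb.1])
  linarith

variable {c : ℝ}

lemma sq_sub_inv_sq_add_neg_pow_four (hc : c ≠ 0) :
    (c ^ 2 - c⁻¹) ^ 2 + -c ^ 4 = c⁻¹ ^ 2 - 2 * c := by
  field_simp
  ring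

lemma sq_add_inv_sq_add_neg_pow_four (hc : c ≠ 0) :
    (c ^ 2 + c⁻¹) ^ 2 + -c ^ 4 = c⁻¹ ^ 2 + 2 * c := by
  field_simp
  ring

lemma inv_sq_le_self (hc : 1 ≤ c) : c⁻¹ ^ 2 ≤ c :=
  (pow_le_one₀ (by positivity) (inv_le_one_of_one_le₀ hc)).trans hc

lemma sqrt_sq_add_inv_le (hc : 1 ≤ c) : √(c ^ 2 + c⁻¹) ≤ 2 * c := by
  rw [Real.sqrt_le_left (by positivity)]
  nlinarith [inv_le_one_of_one_le₀ hc]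

lemma neg_airyRatio_sq_sub_inv_le_one (hc : 1 ≤ c) : -airyRatio (-c ^ 4) (c ^ 2 - c⁻¹) ≤ 1 := by
  have c_pos : 0 < c := by positivity
  have sqrt_le : √(c ^ 2 - c⁻¹) ≤ c := by
    rw [Real.sqrt_le_left c_pos.le, sub_le_self_iff]
    positivity
  have inv_sq_le := inv_sq_le_self hc
  rw [airyRatio, sq_sub_inv_sq_add_neg_pow_four c_pos.ne', ← div_neg, div_le_one (by linarith)]
  linarith

lemma airyRatio_sq_add_inv_le_one (hc : 1 ≤ c) : airyRatio (-c ^ 4) (c ^ 2 + c⁻¹) ≤ 1 := by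
  have c_pos : 0 < c := by positivity
  rw [airyRatio, sq_add_inv_sq_add_neg_pow_four c_pos.ne', div_le_one (by positivity)]
  linarith [sqrt_sq_add_inv_le hc, sq_nonneg c⁻¹]

lemma norm_integral_airyIntegrand_stationary_window_le (hc : 1 ≤ c) :
    ‖∫ ξ in (c ^ 2 - c⁻¹)..(c ^ 2 + c⁻¹), airyIntegrand (-c ^ 4) (1 / 3) ξ‖ ≤ 4 := by
  have inv_pos : 0 < c⁻¹ := by positivity
  calc ‖∫ ξ in (c ^ 2 - c⁻¹)..(c ^ 2 + c⁻¹), airyIntegrand (-c ^ 4) (1 / 3) ξ‖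
      ≤ √(c ^ 2 + c⁻¹) * (c ^ 2 + c⁻¹ - (c ^ 2 - c⁻¹)) :=
        norm_integral_airyIntegrand_le _ _ (by linarith)
    _ ≤ 2 * c * (c ^ 2 + c⁻¹ - (c ^ 2 - c⁻¹)) :=
        mul_le_mul_of_nonneg_right (sqrt_sq_add_inv_le hc) (by linarith)
    _ = 4 := by
        field_simp
        ring

lemma norm_integral_airyIntegrand_neg_pow_four_le (hc : 1 ≤ c) (hR : c ^ 2 + c⁻¹ ≤ R) :
    ‖∫ ξ in 0..R, airyIntegrand (-c ^ 4) (1 / 3) ξ‖ ≤ 8 := by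
  have c_pos : 0 < c := by positivity
  have left_nonneg : 0 ≤ c ^ 2 - c⁻¹ :=
    sub_nonneg.2 ((inv_le_one_of_one_le₀ hc).trans (one_le_pow₀ hc))
  have left_neg : (c ^ 2 - c⁻¹) ^ 2 + -c ^ 4 < 0 := by
    linarith [sq_sub_inv_sq_add_neg_pow_four c_pos.ne', inv_sq_le_self hc]
  have right_pos : 0 < (c ^ 2 + c⁻¹) ^ 2 + -c ^ 4 := by
    rw [sq_add_inv_sq_add_neg_pow_four c_pos.ne']
    positivity
  have initial := norm_integral_airyIntegrand_zero_le_of_neg left_nonneg left_neg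
  have window := norm_integral_airyIntegrand_stationary_window_le hc
  have tail := norm_integral_airyIntegrand_tail_le (by positivity) hR
    (by linarith [sq_nonneg (c ^ 2 + c⁻¹), pow_pos c_pos 4]) right_pos
  have split_left := norm_integral_airyIntegrand_le_add (-c ^ 4) (1 / 3) 0 (c ^ 2 - c⁻¹) R
  have split_right := norm_integral_airyIntegrand_le_add (-c ^ 4) (1 / 3)
    (c ^ 2 - c⁻¹) (c ^ 2 + c⁻¹) R
  linarith [neg_airyRatio_sq_sub_inv_le_one hc, airyRatio_sq_add_inv_le_one hc]

lemma eventually_norm_integral_airyIntegrand_le (b : ℝ) :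
    ∀ᶠ R in atTop, ‖∫ ξ in 0..R, airyIntegrand b (1 / 3) ξ‖ ≤ 8 := by
  rcases le_total b (-1) with b_le | neg_one_le
  · obtain ⟨c, one_le_c, rfl⟩ : ∃ c : ℝ, 1 ≤ c ∧ b = -c ^ 4 := by
      have rpow_pow : ((-b) ^ (1 / 4 : ℝ)) ^ 4 = -b := by
        rw [← Real.rpow_mul_natCast (by linarith)]
        norm_num
      exact ⟨(-b) ^ (1 / 4 : ℝ), Real.one_le_rpow (by linarith) (by norm_num), by linarith⟩
    filter_upwards [eventually_ge_atTop (c ^ 2 + c⁻¹)] with R hR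
    exact norm_integral_airyIntegrand_neg_pow_four_le one_le_c hR
  · rcases le_total b 12 with b_le | le_b
    · filter_upwards [eventually_ge_atTop 2] with R hR
      linarith [norm_integral_airyIntegrand_le_of_mem_Icc ⟨neg_one_le, b_le⟩ hR]
    · filter_upwards [eventually_ge_atTop √(b / 3)] with R hR
      linarith [norm_integral_airyIntegrand_le_of_twelve_le le_b hR]

end UniformBound

section HalfLine

lemma exists_tendsto_integral_airyIntegrand_one_third (b : ℝ) :
    ∃ L : ℂ, Tendsto (fun R => ∫ ξ in 0..R, airyIntegrand b (1 / 3) ξ) atTop (𝓝 L) ∧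
      ‖L‖ ≤ 8 := by
  have ratio_tendsto : Tendsto (fun x => 2 * airyRatio b x) atTop (𝓝 0) := by
    simpa only [mul_zero] using (tendsto_airyRatio_atTop b).const_mul 2
  have tail_le : ∀ᶠ x in atTop, ∀ y, x ≤ y →
      ‖∫ ξ in x..y, airyIntegrand b (1 / 3) ξ‖ ≤ 2 * airyRatio b x := by
    filter_upwards [eventually_ge_atTop (|b| + 1)] with x hx y hxy
    have abs_lt_sq : |b| < x ^ 2 := by nlinarith [abs_nonneg b]
    exact norm_integral_airyIntegrand_tail_le (by linarith [abs_nonneg b]) hxy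
      (by linarith [le_abs_self b, abs_nonneg b]) (by linarith [neg_abs_le b])
  obtain ⟨L, hL⟩ := exists_tendsto_intervalIntegral_of_norm_tail_le
    (intervalIntegrable_airyIntegrand b (1 / 3) 0) ratio_tendsto tail_le
  exact ⟨L, hL, le_of_tendsto hL.norm (eventually_norm_integral_airyIntegrand_le b)⟩

lemma integral_airyIntegrand_zero_mul (a t R : ℝ) {s : ℝ} (hs : 0 < s) :
    ∫ ξ in 0..s * R, airyIntegrand a t ξ =
      (s * √s : ℝ) * ∫ ξ in 0..R, airyIntegrand (a * s) (t * s ^ 3) ξ := by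
  have change_var := intervalIntegral.smul_integral_comp_mul_left (a := 0) (b := R)
    (airyIntegrand a t) s
  simp only [airyIntegrand_mul a t hs.le, mul_zero, intervalIntegral.integral_const_mul,
    Complex.real_smul] at change_var
  rw [← change_var]
  push_cast
  ring

lemma exists_tendsto_integral_airyIntegrand_of_pos (a : ℝ) {t : ℝ} (ht : 0 < t) :
    ∃ L : ℂ, Tendsto (fun R => ∫ ξ in 0..R, airyIntegrand a t ξ) atTop (𝓝 L) ∧
      ‖L‖ ≤ 8 * t ^ (-(1 : ℝ) / 2) := by
  let s : ℝ := (3 * t) ^ (1 / 3 : ℝ)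
  have s_pos : 0 < s := by positivity
  have s_cube : s ^ 3 = 3 * t := by
    rw [← Real.rpow_mul_natCast (by positivity)]
    norm_num
  have jacobian_pos : 0 < s * √s := by positivity
  have sqrt_le_jacobian : √t ≤ s * √s := by
    rw [Real.sqrt_le_left jacobian_pos.le, mul_pow, Real.sq_sqrt s_pos.le]
    linarith
  obtain ⟨L, hL, norm_le⟩ := exists_tendsto_integral_airyIntegrand_one_third (a / s)
  refine ⟨((s * √s : ℝ) : ℂ)⁻¹ * L, ?_, ?_⟩
  · refine ((hL.comp (tendsto_id.const_mul_atTop s_pos)).const_mul _).congr fun R => ?_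
    have phase_coeff : 1 / 3 * s ^ 3 = t := by linarith
    rw [Function.comp_apply, id, integral_airyIntegrand_zero_mul _ _ _ s_pos,
      div_mul_cancel₀ _ s_pos.ne', phase_coeff,
      inv_mul_cancel_left₀ (Complex.ofReal_ne_zero.2 jacobian_pos.ne')]
  · rw [norm_mul, norm_inv, Complex.norm_of_nonneg jacobian_pos.le, mul_comm, neg_div,
      Real.rpow_neg ht.le, ← Real.sqrt_eq_rpow]
    gcongr

lemma exists_tendsto_integral_airyIntegrand (a : ℝ) {t : ℝ} (ht : t ≠ 0) :
    ∃ L : ℂ, Tendsto (fun R => ∫ ξ in 0..R, airyIntegrand a t ξ) atTop (𝓝 L) ∧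
      ‖L‖ ≤ 8 * |t| ^ (-(1 : ℝ) / 2) := by
  rcases ht.lt_or_gt with t_neg | t_pos
  · obtain ⟨L, hL, norm_le⟩ :=
      exists_tendsto_integral_airyIntegrand_of_pos (-a) (neg_pos.2 t_neg)
    refine ⟨conj L, ((Complex.continuous_conj.tendsto L).comp hL).congr fun R => ?_, ?_⟩
    · simp only [Function.comp_apply, ← integral_conj_airyIntegrand, conj_airyIntegrand, neg_neg]
    · rwa [Complex.norm_conj, abs_of_neg t_neg]
  · rw [abs_of_pos t_pos]
    exact exists_tendsto_integral_airyIntegrand_of_pos a t_pos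

end HalfLine

section Folding

lemma sign_mul_abs_rpow_half (ξ : ℝ) : Real.sign ξ * |ξ| ^ ((1 : ℝ) / 2) = √ξ - √(-ξ) := by
  rw [← Real.sqrt_eq_rpow]
  rcases lt_trichotomy ξ 0 with neg | rfl | pos
  · rw [Real.sign_of_neg neg, abs_of_neg neg, Real.sqrt_eq_zero_of_nonpos neg.le]
    ring
  · simp
  · rw [Real.sign_of_pos pos, abs_of_pos pos, Real.sqrt_eq_zero_of_nonpos (neg_nonpos.2 pos.le)]
    ring

lemma sign_mul_abs_rpow_half_mul_exp (a t ξ : ℝ) :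
    ((Real.sign ξ * |ξ| ^ ((1 : ℝ) / 2) : ℝ) : ℂ) *
        Complex.exp (Complex.I * ((a * ξ + t * ξ ^ 3 : ℝ) : ℂ)) =
      airyIntegrand a t ξ - conj (airyIntegrand a t (-ξ)) := by
  have phase_odd : -a * -ξ + -t * (-ξ) ^ 3 = a * ξ + t * ξ ^ 3 := by ring
  rw [sign_mul_abs_rpow_half, conj_airyIntegrand, airyIntegrand, airyIntegrand, phase_odd,
    Complex.ofReal_sub, sub_mul]

lemma integral_airyIntegrand_symm (a t : ℝ) {R : ℝ} (hR : 0 ≤ R) :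
    ∫ ξ in -R..R, airyIntegrand a t ξ = ∫ ξ in 0..R, airyIntegrand a t ξ := by
  have integral_neg_part : ∫ ξ in -R..0, airyIntegrand a t ξ = 0 := by
    refine intervalIntegral.integral_zero_ae (.of_forall fun ξ hξ => ?_)
    exact airyIntegrand_of_nonpos a t (uIoc_of_le (neg_nonpos.2 hR) ▸ hξ).2
  rw [← intervalIntegral.integral_add_adjacent_intervals
    (intervalIntegrable_airyIntegrand a t (-R) 0) (intervalIntegrable_airyIntegrand a t 0 R),
    integral_neg_part, zero_add]

lemma setIntegral_Ioo_eq_integral_airyIntegrand_sub_conj (a t : ℝ) {R : ℝ} (hR : 0 ≤ R) :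
    ∫ ξ in Ioo (-R) R, ((Real.sign ξ * |ξ| ^ ((1 : ℝ) / 2) : ℝ) : ℂ) *
        Complex.exp (Complex.I * ((a * ξ + t * ξ ^ 3 : ℝ) : ℂ)) =
      (∫ ξ in 0..R, airyIntegrand a t ξ) - conj (∫ ξ in 0..R, airyIntegrand a t ξ) := by
  have integrable_conj : IntervalIntegrable (fun ξ => conj (airyIntegrand a t (-ξ)))
      volume (-R) R :=
    (Complex.continuous_conj.comp
      ((continuous_airyIntegrand a t).comp continuous_neg)).intervalIntegrable _ _
  have integral_reflected : ∫ ξ in -R..R, conj (airyIntegrand a t (-ξ)) =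
      conj (∫ ξ in -R..R, airyIntegrand a t ξ) := by
    rw [intervalIntegral.integral_comp_neg (fun ξ => conj (airyIntegrand a t ξ)), neg_neg,
      integral_conj_airyIntegrand]
  simp only [sign_mul_abs_rpow_half_mul_exp]
  rw [← integral_Ioc_eq_integral_Ioo, ← intervalIntegral.integral_of_le (neg_le_self hR),
    intervalIntegral.integral_sub (intervalIntegrable_airyIntegrand a t _ _) integrable_conj,
    integral_reflected, integral_airyIntegrand_symm a t hR]

end Folding

theorem airy_vanDerCorput :
    ∃ C : ℝ, 0 < C ∧ ∀ t : ℝ, t ≠ 0 → ∀ a : ℝ,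
      ∃ L : ℂ,
        Tendsto
          (fun R : ℝ => ∫ ξ in Set.Ioo (-R) R,
            ((Real.sign ξ * |ξ| ^ ((1 : ℝ) / 2) : ℝ) : ℂ) *
              Complex.exp (Complex.I * ((a * ξ + t * ξ ^ 3 : ℝ) : ℂ)))
          atTop (𝓝 L)
        ∧ ‖L‖ ≤ C * |t| ^ (-(1 : ℝ) / 2) := by
  refine ⟨16, by norm_num, fun t ht a => ?_⟩
  obtain ⟨J, hJ, norm_J_le⟩ := exists_tendsto_integral_airyIntegrand a ht
  refine ⟨J - conj J, ?_, ?_⟩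
  · refine (hJ.sub ((Complex.continuous_conj.tendsto J).comp hJ)).congr' ?_
    filter_upwards [eventually_ge_atTop 0] with R hR
    exact (setIntegral_Ioo_eq_integral_airyIntegrand_sub_conj a t hR).symm
  · calc ‖J - conj J‖ ≤ ‖J‖ + ‖conj J‖ := norm_sub_le _ _
      _ = 2 * ‖J‖ := by rw [Complex.norm_conj, two_mul]
      _ ≤ 16 * |t| ^ (-(1 : ℝ) / 2) := by linarith
end
end
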